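/- arXiv:2601.08715 — 3 statements merged into one kernel-verified Lean document; each statement's English description precedes it below -/
import Mathlib

section
/- Let n ≥ 4, let s = [n n-1 … 1] ∈ S_n, r = (1 2 … n), δ = (1 2), and let dist be the word metric on S_n with respect to {δ, r, r^{-1}}. Then dist(s r^{n-2}, 1) ≥ n(n-1)/2. In particular the diameter of the Cayley graph of S_n with generating set {(1 2), (1 2 … n), (1 n … 2)} is at least n(n-1)/2. -/
/-- The transposition `δ = (1 2)` in `S_n` (0-indexed: swaps `0` and `1`). -/
def delta (n : ℕ) (hn : 2 ≤ n) : Equiv.Perm (Fin n) :=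
  Equiv.swap ⟨0, by omega⟩ ⟨1, by omega⟩

/-- The symmetric generating set `{(1 2), (1 2 … n), (1 n … 2)}` of `S_n`. -/
def gens (n : ℕ) (hn : 2 ≤ n) : Set (Equiv.Perm (Fin n)) :=
  {delta n hn, finRotate n, (finRotate n)⁻¹}

/-- `IsMinWordLen n hn g d` says that `d` is the minimal length of a word in the
generators `{(1 2), (1 2 … n), (1 n … 2)}` whose product is `g`; i.e. the distance
in the Cayley graph from `1` to `g` is exactly `d`. -/
def IsMinWordLen (n : ℕ) (hn : 2 ≤ n) (g : Equiv.Perm (Fin n)) (d : ℕ) : Prop :=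
  (∃ l : List (Equiv.Perm (Fin n)),
      (∀ x ∈ l, x ∈ gens n hn) ∧ l.prod = g ∧ l.length = d) ∧
  (∀ l : List (Equiv.Perm (Fin n)),
      (∀ x ∈ l, x ∈ gens n hn) → l.prod = g → d ≤ l.length)


namespace LRX

/-- Letters: `r` moves the head right, `l` moves it left, `d` swaps. -/
inductive Lt where
  | r : Lt
  | l : Lt
  | d : Lt

/-- A state: lifted positions of the tokens relative to the head, and the head position. -/
abbrev St (n : ℕ) := (Fin n → ℤ) × ℤ

def stp (n : ℕ) : Lt → St n → St n
  | Lt.r, S => (fun j => S.1 j - 1, S.2 + 1)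
  | Lt.l, S => (fun j => S.1 j + 1, S.2 - 1)
  | Lt.d, S => (fun j => if (n : ℤ) ∣ S.1 j then S.1 j + 1
      else if (n : ℤ) ∣ S.1 j - 1 then S.1 j - 1 else S.1 j, S.2)

def run (n : ℕ) : List Lt → St n
  | [] => (fun j => (j : ℤ) + 1, 0)
  | x :: W => stp n x (run n W)

def InjMod {n : ℕ} (S : St n) : Prop := ∀ i j, (n : ℤ) ∣ S.1 i - S.1 j → i = j

def qf {n : ℕ} (S : St n) (j : Fin n) : ℤ := S.1 j + S.2 - (S.1 j - 1) / n

def ff {n : ℕ} (S : St n) (p : Fin n × Fin n) : ℤ := (S.1 p.2 - S.1 p.1) / n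

lemma div_succ_dvd {n x : ℤ} (hn : 0 < n) (h : n ∣ x + 1) : (x + 1) / n = x / n + 1 := by
  obtain ⟨k, hk⟩ := h
  have h1 : x = n * k - 1 := by linarith
  have h2 : x / n = k - 1 := by
    rw [Int.ediv_eq_iff_of_pos hn]
    constructor <;> nlinarith
  rw [hk, h2, Int.mul_ediv_cancel_left _ hn.ne']; ring

lemma div_succ_ndvd {n x : ℤ} (hn : 0 < n) (h : ¬ n ∣ x + 1) : (x + 1) / n = x / n := by
  rw [Int.ediv_eq_iff_of_pos hn]
  have h1 := Int.emod_add_mul_ediv x n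
  have h2 := Int.emod_nonneg x hn.ne'
  have h3 := Int.emod_lt_of_pos x hn
  have h4 : x % n ≠ n - 1 := by
    intro h5
    exact h ⟨x / n + 1, by rw [h5] at h1; linarith [mul_add n (x/n) 1]⟩
  have h5 : x % n < n - 1 := lt_of_le_of_ne (by omega) h4
  constructor
  · nlinarith
  · nlinarith

lemma dvd_cast {n a b : ℤ} (h : n ∣ a) (e : a = b) : n ∣ b := e ▸ h

lemma dvd_small {n x : ℤ} (h : n ∣ x) (h1 : -n < x) (h2 : x < n) : x = 0 := by
  apply Int.eq_zero_of_abs_lt_dvd h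
  rw [abs_lt]; exact ⟨h1, h2⟩

def toP (n : ℕ) (hn : 2 ≤ n) : Lt → Equiv.Perm (Fin n)
  | Lt.l => finRotate n
  | Lt.r => (finRotate n)⁻¹
  | Lt.d => delta n hn

lemma rot_cong {n : ℕ} (i : Fin n) : (n : ℤ) ∣ ((finRotate n i : ℕ) : ℤ) - (i + 1) := by
  obtain _ | n := n
  · exact i.elim0
  · rw [coe_finRotate]
    split_ifs with h
    · subst h
      exact ⟨-1, by simp⟩
    · simp

lemma rotinv_cong {n : ℕ} (i : Fin n) :
    (n : ℤ) ∣ ((((finRotate n)⁻¹ : Equiv.Perm (Fin n)) i : ℕ) : ℤ) - (i - 1) := by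
  have h := rot_cong ((finRotate n)⁻¹ i)
  have h0 : finRotate n ((finRotate n)⁻¹ i) = i := (finRotate n).apply_symm_apply i
  rw [h0] at h
  exact dvd_cast (dvd_neg.2 h) (by ring)

lemma fin_eq {n : ℕ} {i j : Fin n} (h : (n : ℤ) ∣ (i : ℤ) - j) : i = j := by
  have := dvd_small h (by omega) (by omega)
  omega

lemma delta_val {n : ℕ} (hn : 2 ≤ n) (i : Fin n) :
    ((delta n hn i : ℕ) : ℤ) = if (i : ℕ) = 0 then (1 : ℤ) else if (i : ℕ) = 1 then (0 : ℤ) else (i : ℕ) := by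
  unfold delta
  rw [Equiv.swap_apply_def]
  simp only [Fin.ext_iff]
  split_ifs <;> simp_all

lemma run_cong {n : ℕ} (hn : 2 ≤ n) (W : List Lt) (j : Fin n) :
    (n : ℤ) ∣ (run n W).1 j - (((W.map (toP n hn)).prod (finRotate n j) : Fin n) : ℕ) := by
  induction W with
  | nil =>
    have := dvd_neg.2 (rot_cong j)
    simpa [run] using this
  | cons x W ih =>
    simp only [List.map_cons, List.prod_cons, Equiv.Perm.mul_apply]
    set p := (W.map (toP n hn)).prod (finRotate n j)
    cases x with
    | l =>
      have := dvd_sub ih (rot_cong p)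
      simp only [run, stp, toP]
      exact dvd_cast (this) (by ring)
    | r =>
      have := dvd_sub ih (rotinv_cong p)
      simp only [run, stp, toP]
      exact dvd_cast (this) (by ring)
    | d =>
      simp only [run, stp, toP]
      rw [delta_val]
      set y := (run n W).1 j
      have e0 : (n : ℤ) ∣ y ↔ (p : ℕ) = 0 := by
        rw [dvd_iff_dvd_of_dvd_sub ih]
        constructor
        · intro h
          have := dvd_small h (by omega) (by omega)
          omega
        · intro h; simp [h]
      have e1 : (n : ℤ) ∣ y - 1 ↔ (p : ℕ) = 1 := by
        have : (n : ℤ) ∣ (y - 1) - ((p : ℤ) - 1) := dvd_cast ih (by ring)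
        rw [dvd_iff_dvd_of_dvd_sub this]
        constructor
        · intro h
          have := dvd_small h (by omega) (by omega)
          omega
        · intro h; simp [h]
      simp only [e0, e1]
      split_ifs with h0 h1
      · rw [h0] at ih; simpa using ih
      · rw [h1] at ih; simpa using ih
      · exact ih

lemma injMod_run {n : ℕ} (hn : 2 ≤ n) (W : List Lt) : InjMod (run n W) := by
  intro i j h
  have hi := run_cong hn W i
  have hj := run_cong hn W j
  have : (n : ℤ) ∣ ((((W.map (toP n hn)).prod (finRotate n i) : Fin n) : ℕ) : ℤ)
      - (((W.map (toP n hn)).prod (finRotate n j) : Fin n) : ℕ) := by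
    exact dvd_cast (dvd_add (dvd_sub h hi) hj) (by ring)
  have := fin_eq this
  simpa using this

/-- One letter changes the total of all `qf` and `ff` by at most one. -/
lemma step_le {n : ℕ} (hn : 2 ≤ n) (x : Lt) (S : St n) (hS : InjMod S) :
    ∑ j, |qf (stp n x S) j - qf S j|
      + ∑ p ∈ Finset.univ.filter (fun p : Fin n × Fin n => p.1 < p.2),
        |ff (stp n x S) p - ff S p| ≤ 1 := by
  have hn0 : (0 : ℤ) < n := by omega
  have card1 : ∀ c : ℤ, ∑ j, (if (n : ℤ) ∣ S.1 j - c then (1 : ℤ) else 0) ≤ 1 := by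
    intro c
    rw [Finset.sum_boole]
    norm_cast
    rw [Finset.card_le_one]
    intro a ha b hb
    simp only [Finset.mem_filter, Finset.mem_univ, true_and] at ha hb
    apply hS
    exact dvd_cast (dvd_sub ha hb) (by ring)
  cases x with
  | r =>
    have h2 : ∀ p, ff (stp n Lt.r S) p - ff S p = 0 := by intro p; simp [ff, stp]
    simp only [h2, abs_zero, Finset.sum_const_zero, add_zero]
    refine le_trans (Finset.sum_le_sum fun j _ => ?_) (card1 1)
    have e : qf (stp n Lt.r S) j - qf S j = (S.1 j - 1) / n - (S.1 j - 1 - 1) / n := by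
      simp only [qf, stp]; ring
    rw [e]
    split_ifs with h
    · have := div_succ_dvd (x := S.1 j - 1 - 1) hn0 (by simpa using h)
      rw [sub_add_cancel] at this
      rw [this]; simp
    · have := div_succ_ndvd (x := S.1 j - 1 - 1) hn0 (by simpa using h)
      rw [sub_add_cancel] at this
      rw [this]; simp
  | l =>
    have h2 : ∀ p, ff (stp n Lt.l S) p - ff S p = 0 := by intro p; simp [ff, stp]
    simp only [h2, abs_zero, Finset.sum_const_zero, add_zero]
    refine le_trans (Finset.sum_le_sum fun j _ => ?_) (card1 0)
    have e : qf (stp n Lt.l S) j - qf S j = (S.1 j - 1) / n - (S.1 j - 1 + 1) / n := by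
      simp only [qf, stp]; ring_nf
    rw [e]
    split_ifs with h
    · have := div_succ_dvd (x := S.1 j - 1) hn0 (by simpa using h)
      rw [this]; simp
    · have := div_succ_ndvd (x := S.1 j - 1) hn0 (by simpa using h)
      rw [this]; simp
  | d =>
    have n1 : ¬ (n : ℤ) ∣ 1 := fun h => by
      have := Int.le_of_dvd one_pos h
      omega
    have h1 : ∀ j, qf (stp n Lt.d S) j - qf S j = 0 := by
      intro j
      simp only [qf, stp]
      split_ifs with a b
      · have := div_succ_dvd (x := S.1 j - 1) hn0 (by simpa using a)
        rw [sub_add_cancel] at this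
        rw [add_sub_cancel_right, this]; ring
      · have := div_succ_dvd (x := S.1 j - 1 - 1) hn0 (by simpa using b)
        rw [sub_add_cancel] at this
        rw [this]; ring
      · ring
    simp only [h1, abs_zero, Finset.sum_const_zero, zero_add]
    let A : Fin n × Fin n → Prop := fun p =>
      ((n : ℤ) ∣ S.1 p.1 ∧ (n : ℤ) ∣ S.1 p.2 - 1) ∨ ((n : ℤ) ∣ S.1 p.1 - 1 ∧ (n : ℤ) ∣ S.1 p.2)
    classical
    have hle : ∀ p ∈ Finset.univ.filter (fun p : Fin n × Fin n => p.1 < p.2),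
        |ff (stp n Lt.d S) p - ff S p| ≤ if A p then (1 : ℤ) else 0 := by
      rintro ⟨i, j⟩ hp
      simp only [Finset.mem_filter, Finset.mem_univ, true_and] at hp
      have hnd : ¬ (n : ℤ) ∣ S.1 j - S.1 i := fun h => by
        have := hS _ _ h
        omega
      simp only [ff, stp, A]
      generalize S.1 i = y at *
      generalize S.1 j = z at *
      have e2 : (z - y) / (n : ℤ) = (z - y - 1) / n := by
        have := div_succ_ndvd (n := n) (x := z - y - 1) hn0 (by simpa using hnd)
        rwa [sub_add_cancel] at this
      have w : (n : ℤ) ∣ z - y + 1 → ((n : ℤ) ∣ y - 1 ↔ (n : ℤ) ∣ z) := by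
        intro h
        constructor
        · intro h'
          exact dvd_cast (dvd_add h h') (by ring)
        · intro h'
          exact dvd_cast (dvd_sub h' h) (by ring)
      by_cases y0 : (n : ℤ) ∣ y
      · have y1 : ¬ (n : ℤ) ∣ y - 1 := fun h => n1 (dvd_cast (dvd_sub y0 h) (by ring))
        have z0 : ¬ (n : ℤ) ∣ z := fun h => hnd (dvd_sub h y0)
        by_cases z1 : (n : ℤ) ∣ z - 1
        · have := div_succ_dvd (n := n) (x := z - y - 2) hn0 (dvd_cast (dvd_sub z1 y0) (by ring))
          have e3 : z - y - 2 + 1 = z - y - 1 := by ring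
          have e4 : z - 1 - (y + 1) = z - y - 2 := by ring
          rw [e3] at this
          simp [y0, y1, z0, z1, e4, e2, this]
        · have e4 : z - (y + 1) = z - y - 1 := by ring
          simp [y0, y1, z0, z1, e4, e2]
      · by_cases y1 : (n : ℤ) ∣ y - 1
        · have z1 : ¬ (n : ℤ) ∣ z - 1 := fun h => hnd (dvd_cast (dvd_sub h y1) (by ring))
          by_cases z0 : (n : ℤ) ∣ z
          · have d1 : (n : ℤ) ∣ z - y + 1 := dvd_cast (dvd_sub z0 y1) (by ring)
            have t1 := div_succ_dvd (n := n) (x := z - y) hn0 d1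
            have t2 := div_succ_ndvd (n := n) (x := z - y + 1) hn0
              (fun h => n1 (dvd_cast (dvd_sub h d1) (by ring)))
            have e4 : z + 1 - (y - 1) = z - y + 1 + 1 := by ring
            simp [y0, y1, z0, e4, t2, t1]
          · have e4 : z - (y - 1) = z - y + 1 := by ring
            have t := div_succ_ndvd (n := n) (x := z - y) hn0 (fun h => z0 ((w h).1 y1))
            simp [y0, y1, z0, z1, e4, t]
        · by_cases z0 : (n : ℤ) ∣ z
          · have e4 : z + 1 - y = z - y + 1 := by ring
            have t := div_succ_ndvd (n := n) (x := z - y) hn0 (fun h => y1 ((w h).2 z0))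
            simp [y0, y1, z0, e4, t]
          · by_cases z1 : (n : ℤ) ∣ z - 1
            · have e4 : z - 1 - y = z - y - 1 := by ring
              simp [y0, y1, z0, z1, e4, e2]
            · simp [y0, y1, z0, z1]
    refine le_trans (Finset.sum_le_sum hle) ?_
    rw [Finset.sum_boole]
    norm_cast
    rw [Finset.card_le_one]
    rintro ⟨a, b⟩ ha ⟨c, d⟩ hc
    simp only [Finset.mem_filter, Finset.mem_univ, true_and, A] at ha hc
    obtain ⟨hab, ha⟩ := ha
    obtain ⟨hcd, hc⟩ := hc
    have z0 : ∀ i j, (n : ℤ) ∣ S.1 i → (n : ℤ) ∣ S.1 j → i = j := fun i j h h' =>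
      hS _ _ (dvd_sub h h')
    have z1 : ∀ i j, (n : ℤ) ∣ S.1 i - 1 → (n : ℤ) ∣ S.1 j - 1 → i = j := fun i j h h' => by
      apply hS
      exact dvd_cast (dvd_sub h h') (by ring)
    rcases ha with ⟨p, q⟩ | ⟨p, q⟩ <;> rcases hc with ⟨s, t⟩ | ⟨s, t⟩
    · rw [z0 _ _ p s, z1 _ _ q t]
    · have := z0 _ _ p t
      have := z1 _ _ q s
      subst_vars
      exact absurd hab (not_lt.2 hcd.le)
    · have := z1 _ _ p t
      have := z0 _ _ q s
      subst_vars
      exact absurd hab (not_lt.2 hcd.le)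
    · rw [z1 _ _ p s, z0 _ _ q t]


/-- Number of crossings of token `j` by the head. -/
def Nc (n : ℕ) : List Lt → Fin n → ℤ
  | [], _ => 0
  | x :: W, j => Nc n W j + |qf (stp n x (run n W)) j - qf (run n W) j|

/-- Number of crossings of a pair of tokens. -/
def Kc (n : ℕ) : List Lt → Fin n × Fin n → ℤ
  | [], _ => 0
  | x :: W, p => Kc n W p + |ff (stp n x (run n W)) p - ff (run n W) p|

lemma total_le {n : ℕ} (hn : 2 ≤ n) (W : List Lt) :
    ∑ j, Nc n W j + ∑ p ∈ Finset.univ.filter (fun p : Fin n × Fin n => p.1 < p.2), Kc n W p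
      ≤ W.length := by
  induction W with
  | nil => simp [Nc, Kc]
  | cons x W ih =>
    have := step_le hn x _ (injMod_run hn W)
    simp only [Nc, Kc, Finset.sum_add_distrib, List.length_cons]
    push_cast
    linarith

lemma Nc_append {n : ℕ} (u v : List Lt) (j : Fin n) :
    Nc n v j + |qf (run n (u ++ v)) j - qf (run n v) j| ≤ Nc n (u ++ v) j := by
  induction u with
  | nil => simp
  | cons x u ih =>
    simp only [List.cons_append, Nc, run]
    have := abs_sub_le (qf (stp n x (run n (u ++ v))) j) (qf (run n (u ++ v)) j) (qf (run n v) j)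
    linarith

lemma Kc_le {n : ℕ} (v : List Lt) (p : Fin n × Fin n) :
    |ff (run n v) p - ff (run n []) p| ≤ Kc n v p := by
  induction v with
  | nil => simp [Kc]
  | cons x u ih =>
    simp only [Kc, run]
    have := abs_sub_le (ff (stp n x (run n u)) p) (ff (run n u) p) (ff (run n []) p)
    simp only [run] at this ih
    linarith

lemma qf_nil {n : ℕ} (j : Fin n) : qf (run n []) j = j + 1 := by
  simp only [qf, run]
  have : ((j : ℤ) + 1 - 1) / n = 0 := by
    rw [add_sub_cancel_right]
    exact Int.ediv_eq_zero_of_lt (by omega) (by omega)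
  rw [this]; ring

lemma ff_nil {n : ℕ} (p : Fin n × Fin n) (hp : p.1 < p.2) : ff (run n []) p = 0 := by
  simp only [ff, run]
  exact Int.ediv_eq_zero_of_lt (by omega) (by omega)

/-- Being on a line cut at position `M`. -/
def Line {n : ℕ} (M : ℤ) (S : St n) : Prop :=
  ∀ j : Fin n, ((j : ℤ) < M → M - n + 1 ≤ S.1 j + S.2 ∧ S.1 j + S.2 ≤ M) ∧
    (M ≤ (j : ℤ) → M + 1 ≤ S.1 j + S.2 ∧ S.1 j + S.2 ≤ M + n)

lemma line_or {n : ℕ} (M : ℤ) (hM : 0 < M) (hMn : M < n) (W : List Lt) :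
    (Line M (run n W) ∧ M - n < (run n W).2 ∧ (run n W).2 < M) ∨
    ∃ u v, W = u ++ v ∧ Line M (run n v) ∧ ((run n v).2 = M ∨ (run n v).2 = M - n) := by
  induction W with
  | nil =>
    left
    refine ⟨fun j => ?_, by simp [run]; omega, by simp [run]; omega⟩
    simp only [run]
    omega
  | cons x W ih =>
    rcases ih with ⟨hl, h1, h2⟩ | ⟨u, v, rfl, h⟩
    · have hl' : Line M (run n (x :: W)) := by
        intro j
        have hj := hl j
        cases x with
        | r => simp only [run, stp]; omega
        | l => simp only [run, stp]; omega
        | d =>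
          simp only [run, stp]
          generalize (run n W).1 j = y at *
          generalize (run n W).2 = P at *
          have key : ∀ e : ℤ, (n : ℤ) ∣ y - e → -n < y - e → y - e < n → y = e := by
            intro e h h1 h2
            have := dvd_small h h1 h2
            omega
          have ev : ∀ e : ℤ, (n : ℤ) ∣ y - e → (n : ℤ) ∣ y - (e + n) := fun e h =>
            dvd_cast (dvd_sub h (dvd_refl _)) (by ring)
          split_ifs with a b
          · have k1 := key 0 (by simpa using a)
            have k2 := key (0 + n) (ev 0 (by simpa using a))
            omega
          · have k1 := key 1 b
            have k2 := key (1 + n) (ev 1 b)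
            omega
          · exact hj
      have hP : (run n (x :: W)).2 = (run n W).2 ∨ (run n (x :: W)).2 = (run n W).2 + 1
          ∨ (run n (x :: W)).2 = (run n W).2 - 1 := by
        cases x <;> simp [run, stp]
      by_cases hc : (run n (x :: W)).2 = M ∨ (run n (x :: W)).2 = M - n
      · right
        exact ⟨[], x :: W, rfl, hl', hc⟩
      · left
        exact ⟨hl', by omega, by omega⟩
    · right
      exact ⟨x :: u, v, rfl, h⟩

lemma sum_nat_ge (B : Finset ℕ) : (B.card : ℤ) * (B.card - 1) ≤ 2 * ∑ x ∈ B, (x : ℤ) := by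
  induction B using Finset.induction_on_max with
  | empty => simp
  | insert a s h ih =>
    have ha : a ∉ s := fun h' => lt_irrefl _ (h a h')
    rw [Finset.sum_insert ha, Finset.card_insert_of_notMem ha]
    have : s.card ≤ a := by
      have : s ⊆ Finset.range a := fun x hx => Finset.mem_range.2 (h x hx)
      simpa using Finset.card_le_card this
    push_cast
    have : (s.card : ℤ) ≤ a := by exact_mod_cast this
    nlinarith

lemma sum_nat_ge' {ι : Type*} (A : Finset ι) (f : ι → ℤ) (h0 : ∀ i ∈ A, 0 ≤ f i)
    (hinj : ∀ i ∈ A, ∀ j ∈ A, f i = f j → i = j) :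
    (A.card : ℤ) * (A.card - 1) ≤ 2 * ∑ i ∈ A, f i := by
  classical
  have hi : Set.InjOn (fun i => (f i).toNat) A := by
    intro i hi j hj h
    apply hinj i hi j hj
    have := h0 i hi
    have := h0 j hj
    simp only at h
    omega
  have := sum_nat_ge (A.image fun i => (f i).toNat)
  rw [Finset.card_image_of_injOn hi, Finset.sum_image hi] at this
  refine this.trans_eq ?_
  congr 1
  exact Finset.sum_congr rfl fun i hi => Int.toNat_of_nonneg (h0 i hi)

/-- Distinct integers `2 f i + ε` of equal parity have large absolute sum. -/
lemma sum_abs_ge {ι : Type*} (A : Finset ι) (f : ι → ℤ) (c : ℤ)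
    (hinj : ∀ i ∈ A, ∀ j ∈ A, f i = f j → i = j) :
    (A.card : ℤ) ^ 2 - (if Even c then 1 else 0) ≤ 2 * ∑ i ∈ A, |2 * f i + c| := by
  classical
  rw [← Finset.sum_filter_add_sum_filter_not A (fun i => 0 ≤ 2 * f i + c)]
  rw [← Finset.card_filter_add_card_filter_not (s := A) (fun i => 0 ≤ 2 * f i + c)]
  set A1 := A.filter (fun i => 0 ≤ 2 * f i + c)
  set A2 := A.filter (fun i => ¬ 0 ≤ 2 * f i + c)
  have m1 : ∀ i ∈ A1, i ∈ A ∧ 0 ≤ 2 * f i + c := fun i hi => by simpa [A1] using hi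
  have m2 : ∀ i ∈ A2, i ∈ A ∧ ¬ 0 ≤ 2 * f i + c := fun i hi => by simpa [A2] using hi
  rcases Int.even_or_odd' c with ⟨k, hk | hk⟩
  · have ev : Even c := ⟨k, by omega⟩
    rw [if_pos ev]
    have b1 := sum_nat_ge' A1 (fun i => f i + k) (fun i hi => by have := m1 i hi; omega)
      (fun i hi j hj h => hinj i (m1 i hi).1 j (m1 j hj).1 (by omega))
    have b2 := sum_nat_ge' A2 (fun i => - (f i + k) - 1) (fun i hi => by have := m2 i hi; omega)
      (fun i hi j hj h => hinj i (m2 i hi).1 j (m2 j hj).1 (by omega))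
    have e1 : ∑ i ∈ A1, |2 * f i + c| = 2 * ∑ i ∈ A1, (f i + k) := by
      rw [Finset.mul_sum]
      refine Finset.sum_congr rfl fun i hi => ?_
      rw [abs_of_nonneg (m1 i hi).2]; omega
    have e2 : ∑ i ∈ A2, |2 * f i + c| = 2 * ∑ i ∈ A2, (- (f i + k) - 1) + 2 * A2.card := by
      rw [Finset.mul_sum, mul_comm 2 (A2.card : ℤ), ← nsmul_eq_mul, ← Finset.sum_const,
        ← Finset.sum_add_distrib]
      refine Finset.sum_congr rfl fun i hi => ?_
      rw [abs_of_neg (by have := m2 i hi; omega)]; omega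
    rw [e1, e2]
    push_cast
    nlinarith [sq_nonneg ((A1.card : ℤ) - A2.card - 1)]
  · have ev : ¬ Even c := by rw [Int.even_iff]; omega
    rw [if_neg ev]
    have b1 := sum_nat_ge' A1 (fun i => f i + k) (fun i hi => by have := m1 i hi; omega)
      (fun i hi j hj h => hinj i (m1 i hi).1 j (m1 j hj).1 (by omega))
    have b2 := sum_nat_ge' A2 (fun i => - (f i + k) - 1) (fun i hi => by have := m2 i hi; omega)
      (fun i hi j hj h => hinj i (m2 i hi).1 j (m2 j hj).1 (by omega))
    have e1 : ∑ i ∈ A1, |2 * f i + c| = 2 * ∑ i ∈ A1, (f i + k) + A1.card := by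
      rw [Finset.mul_sum, ← mul_one (A1.card : ℤ), ← nsmul_eq_mul, ← Finset.sum_const,
        ← Finset.sum_add_distrib]
      refine Finset.sum_congr rfl fun i hi => ?_
      rw [abs_of_nonneg (m1 i hi).2]; omega
    have e2 : ∑ i ∈ A2, |2 * f i + c| = 2 * ∑ i ∈ A2, (- (f i + k) - 1) + A2.card := by
      rw [Finset.mul_sum, ← mul_one (A2.card : ℤ), ← nsmul_eq_mul, ← Finset.sum_const,
        ← Finset.sum_add_distrib]
      refine Finset.sum_congr rfl fun i hi => ?_
      rw [abs_of_neg (by have := m2 i hi; omega)]; omega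
    rw [e1, e2]
    push_cast
    nlinarith [sq_nonneg ((A1.card : ℤ) - A2.card)]

/-- Pair lemma: pairs inside `A` and inside its complement. -/
lemma pair_sum_ge {n : ℕ} (A : Finset (Fin n)) (K : Fin n × Fin n → ℤ)
    (h0 : ∀ p, p.1 < p.2 → 0 ≤ K p)
    (h1 : ∀ p, p.1 < p.2 → (p.1 ∈ A ↔ p.2 ∈ A) → 1 ≤ K p) :
    (A.card : ℤ) * (A.card - 1) + (n - A.card) * (n - A.card - 1)
      ≤ 2 * ∑ p ∈ Finset.univ.filter (fun p : Fin n × Fin n => p.1 < p.2), K p := by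
  classical
  have hc : ∀ B : Finset (Fin n), (B.card : ℤ) * (B.card - 1)
      = 2 * (((B ×ˢ B).filter (fun p : Fin n × Fin n => p.1 < p.2)).card : ℤ) := by
    intro B
    induction B using Finset.induction_on_max with
    | empty => simp
    | insert a s h ih =>
      have ha : a ∉ s := fun h' => lt_irrefl _ (h a h')
      have : ((insert a s ×ˢ insert a s).filter (fun p : Fin n × Fin n => p.1 < p.2))
          = ((s ×ˢ s).filter (fun p : Fin n × Fin n => p.1 < p.2)) ∪ s.image (fun x => (x, a)) := by
        ext ⟨x, y⟩
        simp only [Finset.mem_filter, Finset.mem_product, Finset.mem_insert, Finset.mem_union,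
          Finset.mem_image, Prod.mk.injEq]
        constructor
        · rintro ⟨⟨rfl | hx, rfl | hy⟩, hlt⟩
          · exact absurd hlt (lt_irrefl _)
          · exact absurd hlt (not_lt.2 (h y hy).le)
          · exact Or.inr ⟨x, hx, rfl, rfl⟩
          · exact Or.inl ⟨⟨hx, hy⟩, hlt⟩
        · rintro (⟨⟨hx, hy⟩, hlt⟩ | ⟨z, hz, rfl, rfl⟩)
          · exact ⟨⟨Or.inr hx, Or.inr hy⟩, hlt⟩
          · exact ⟨⟨Or.inr hz, Or.inl rfl⟩, h _ hz⟩
      rw [this, Finset.card_union_of_disjoint, Finset.card_insert_of_notMem ha,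
        Finset.card_image_of_injective]
      · push_cast
        linarith
      · intro x y hxy
        simpa using hxy
      · rw [Finset.disjoint_left]
        rintro ⟨x, y⟩ h1 h2
        simp only [Finset.mem_filter, Finset.mem_product, Finset.mem_image, Prod.mk.injEq] at h1 h2
        obtain ⟨z, _, _, rfl⟩ := h2
        exact ha h1.1.2
  have hA := hc A
  have hB := hc Aᶜ
  rw [Finset.card_compl, Fintype.card_fin, Nat.cast_sub (by simpa using Finset.card_le_univ A)] at hB
  rw [hA, hB, ← mul_add]
  have : (((A ×ˢ A).filter (fun p : Fin n × Fin n => p.1 < p.2)).card : ℤ)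
      + (((Aᶜ ×ˢ Aᶜ).filter (fun p : Fin n × Fin n => p.1 < p.2)).card : ℤ)
      = ∑ p ∈ Finset.univ.filter (fun p : Fin n × Fin n => p.1 < p.2),
        (if (p.1 ∈ A ↔ p.2 ∈ A) then (1 : ℤ) else 0) := by
    rw [Finset.sum_boole, ← Nat.cast_add, ← Finset.card_union_of_disjoint]
    · congr 2
      ext ⟨x, y⟩
      simp only [Finset.mem_filter, Finset.mem_product, Finset.mem_union, Finset.mem_compl,
        Finset.mem_univ, true_and]
      tauto
    · rw [Finset.disjoint_left]
      rintro ⟨x, y⟩ h1 h2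
      simp only [Finset.mem_filter, Finset.mem_product, Finset.mem_compl] at h1 h2
      tauto
  rw [this]
  have : ∑ p ∈ Finset.univ.filter (fun p : Fin n × Fin n => p.1 < p.2),
        (if (p.1 ∈ A ↔ p.2 ∈ A) then (1 : ℤ) else 0) ≤
      ∑ p ∈ Finset.univ.filter (fun p : Fin n × Fin n => p.1 < p.2), K p := by
    refine Finset.sum_le_sum fun p hp => ?_
    simp only [Finset.mem_filter, Finset.mem_univ, true_and] at hp
    split_ifs with h
    · exact h1 p hp h
    · exact h0 p hp
  linarith

/-- The target permutation. -/
def gp (n : ℕ) : Equiv.Perm (Fin n) := Fin.revPerm * (finRotate n) ^ (n - 2)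

lemma rot_pow_cong {n : ℕ} (k : ℕ) (i : Fin n) :
    (n : ℤ) ∣ ((((finRotate n) ^ k) i : Fin n) : ℕ) - ((i : ℤ) + k) := by
  induction k with
  | zero => simp
  | succ k ih =>
    rw [pow_succ', Equiv.Perm.mul_apply]
    have := rot_cong (((finRotate n) ^ k) i)
    refine dvd_cast (dvd_add this ih) ?_
    push_cast
    ring

lemma gp_cong {n : ℕ} (hn : 2 ≤ n) (i : Fin n) :
    (n : ℤ) ∣ ((gp n i : Fin n) : ℕ) - (1 - (i : ℤ)) := by
  have h := rot_pow_cong (n - 2) i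
  have e : ((gp n i : Fin n) : ℕ) = n - ((((finRotate n) ^ (n-2)) i : Fin n) + 1) := by
    simp [gp, Fin.val_rev]
  rw [e]
  have h2 := (((finRotate n) ^ (n-2)) i).isLt
  exact dvd_cast (dvd_neg.2 h) (by omega)

lemma gp_sq {n : ℕ} (hn : 2 ≤ n) : gp n * gp n = 1 := by
  ext1 i
  apply fin_eq
  rw [Equiv.Perm.mul_apply, Equiv.Perm.one_apply]
  refine dvd_cast (dvd_sub (gp_cong hn (gp n i)) (gp_cong hn i)) (by ring)

lemma gp_inv {n : ℕ} (hn : 2 ≤ n) : (gp n)⁻¹ = gp n := inv_eq_of_mul_eq_one_left (gp_sq hn)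

/-- Swap of the two rotations. -/
def sg : Lt → Lt
  | Lt.l => Lt.r
  | Lt.r => Lt.l
  | Lt.d => Lt.d

lemma gp_rot {n : ℕ} (hn : 2 ≤ n) : gp n * finRotate n * gp n = (finRotate n)⁻¹ := by
  ext1 i
  apply fin_eq
  rw [Equiv.Perm.mul_apply, Equiv.Perm.mul_apply]
  have h1 := gp_cong hn i
  have h2 := rot_cong (gp n i)
  have h3 := gp_cong hn (finRotate n (gp n i))
  have h4 := rotinv_cong i
  exact dvd_cast (dvd_sub (dvd_sub (dvd_sub h3 h2) h1) h4) (by ring)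

lemma gp_delta {n : ℕ} (hn : 2 ≤ n) : gp n * delta n hn * gp n = delta n hn := by
  have h0 : gp n ⟨0, by omega⟩ = ⟨1, by omega⟩ := fin_eq (by simpa using gp_cong hn ⟨0, by omega⟩)
  have h1 : gp n ⟨1, by omega⟩ = ⟨0, by omega⟩ := fin_eq (by simpa using gp_cong hn ⟨1, by omega⟩)
  have := Equiv.mul_swap_eq_swap_mul (gp n) (⟨0, by omega⟩ : Fin n) ⟨1, by omega⟩
  unfold delta
  rw [this, h0, h1, mul_assoc, gp_sq hn, mul_one, Equiv.swap_comm]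

lemma toP_sg {n : ℕ} (hn : 2 ≤ n) (x : Lt) : toP n hn (sg x) = gp n * toP n hn x * gp n := by
  cases x with
  | l => exact (gp_rot hn).symm
  | d => exact (gp_delta hn).symm
  | r =>
    have h := congrArg (·⁻¹) (gp_rot hn)
    simp only [mul_inv_rev, inv_inv, gp_inv hn] at h
    simp only [toP, sg]
    rw [mul_assoc]
    exact h.symm

lemma prod_sg {n : ℕ} (hn : 2 ≤ n) (W : List Lt) :
    ((W.map sg).map (toP n hn)).prod = gp n * (W.map (toP n hn)).prod * gp n := by
  induction W with
  | nil => simp [gp_sq hn]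
  | cons x W ih =>
    simp only [List.map_cons, List.prod_cons, toP_sg, ih]
    have := gp_sq hn
    calc _ = gp n * toP n hn x * (gp n * gp n) * (W.map (toP n hn)).prod * gp n := by group
      _ = _ := by rw [this]; group

def IsG (n : ℕ) (hn : 2 ≤ n) (W : List Lt) : Prop := (W.map (toP n hn)).prod = gp n

lemma isG_sg {n : ℕ} {hn : 2 ≤ n} {W : List Lt} (h : IsG n hn W) : IsG n hn (W.map sg) := by
  unfold IsG at *
  rw [prod_sg, h, gp_sq hn, one_mul]

lemma isG_rot {n : ℕ} {hn : 2 ≤ n} {u : List Lt} {x : Lt} (h : IsG n hn (u ++ [x])) :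
    IsG n hn (sg x :: u) := by
  unfold IsG at *
  simp only [List.map_append, List.prod_append, List.map_cons, List.map_nil, List.prod_cons,
    List.prod_nil, mul_one] at *
  have h2 : (u.map (toP n hn)).prod = gp n * (toP n hn x)⁻¹ := by rw [← h]; group
  rw [h2, toP_sg]
  calc _ = gp n * toP n hn x * (gp n * gp n) * (toP n hn x)⁻¹ := by group
      _ = _ := by rw [gp_sq hn]; group

/-- Net rotation. -/
def wt : Lt → ℤ
  | Lt.r => 1
  | Lt.l => -1
  | Lt.d => 0

lemma run_snd {n : ℕ} (W : List Lt) : (run n W).2 = (W.map wt).sum := by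
  induction W with
  | nil => simp [run]
  | cons x W ih =>
    cases x <;> simp [run, stp, wt, ih] <;> ring

lemma wt_sg (W : List Lt) : ((W.map sg).map wt).sum = - (W.map wt).sum := by
  induction W with
  | nil => simp
  | cons x W ih =>
    cases x <;> simp [sg, wt] at * <;> rw [ih] <;> ring

lemma twist_aux {n : ℕ} {hn : 2 ≤ n} (u : List Lt) : ∀ v : List Lt,
    IsG n hn (v.map sg ++ u) → (v.map wt).sum ≤ (u.map wt).sum →
    0 ≤ (u.map wt).sum + (v.map wt).sum →
    ∃ W : List Lt, W.length = u.length + v.length ∧ IsG n hn W ∧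
      ((W.map wt).sum = 0 ∨ ((W.map wt).sum = 1 ∧ ∃ t, W = t ++ [Lt.r])) := by
  induction u using List.reverseRecOn with
  | nil =>
    intro v hG h1 h2
    refine ⟨_, ?_, hG, Or.inl ?_⟩
    · simp
    · rw [List.map_append, List.sum_append, wt_sg]
      simp at *
      omega
  | append_singleton u x ih =>
    intro v hG h1 h2
    have e : (((v.map sg) ++ (u ++ [x])).map wt).sum
        = (u.map wt).sum + wt x - (v.map wt).sum := by
      rw [List.map_append, List.sum_append, wt_sg]
      simp
      ring
    have e2 : ((u ++ [x]).map wt).sum = (u.map wt).sum + wt x := by simp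
    rw [e2] at h1 h2
    by_cases c1 : (u.map wt).sum + wt x - (v.map wt).sum = 0
    · exact ⟨_, by simp; omega, hG, Or.inl (e.trans c1)⟩
    by_cases c2 : (u.map wt).sum + wt x - (v.map wt).sum = 1 ∧ x = Lt.r
    · obtain ⟨c2, rfl⟩ := c2
      refine ⟨_, by simp; omega, hG, Or.inr ⟨e.trans c2, v.map sg ++ u, by simp⟩⟩
    obtain ⟨W, hl, hW⟩ := ih (x :: v) (by
        rw [← List.append_assoc] at hG
        exact isG_rot hG)
      (by
        simp only [List.map_cons, List.sum_cons]
        cases x <;> simp [wt] at * <;> omega)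
      (by
        simp only [List.map_cons, List.sum_cons]
        linarith)
    exact ⟨W, by rw [hl]; simp; omega, hW⟩

lemma twist {n : ℕ} {hn : 2 ≤ n} (W : List Lt) (hG : IsG n hn W) :
    ∃ W' : List Lt, W'.length = W.length ∧ IsG n hn W' ∧
      ((run n W').2 = 0 ∨ ((run n W').2 = 1 ∧ ∃ t, W' = t ++ [Lt.r])) := by
  simp only [run_snd]
  by_cases h : 0 ≤ (W.map wt).sum
  · simpa using twist_aux W [] (by simpa using hG) (by simpa using h) (by simpa using h)
  · have := twist_aux (W.map sg) [] (by simpa using isG_sg hG)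
      (by rw [wt_sg]; simp; omega) (by rw [wt_sg]; simp; omega)
    simpa using this

lemma toP_list {n : ℕ} (hn : 2 ≤ n) (l : List (Equiv.Perm (Fin n)))
    (h : ∀ x ∈ l, x ∈ gens n hn) : ∃ W : List Lt, W.map (toP n hn) = l := by
  induction l with
  | nil => exact ⟨[], rfl⟩
  | cons a l ih =>
    obtain ⟨W, rfl⟩ := ih fun x hx => h x (List.mem_cons_of_mem _ hx)
    have := h a List.mem_cons_self
    simp only [gens, Set.mem_insert_iff, Set.mem_singleton_iff] at this
    rcases this with rfl | rfl | rfl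
    · exact ⟨Lt.d :: W, rfl⟩
    · exact ⟨Lt.l :: W, rfl⟩
    · exact ⟨Lt.r :: W, rfl⟩

lemma ediv_of {n y k b : ℤ} (h : y = n * k + b) (h0 : 0 ≤ b) (h1 : b < n) : y / n = k := by
  rw [Int.ediv_eq_iff_of_pos (by omega)]
  constructor <;> nlinarith

lemma end_Y {n : ℕ} (hn : 2 ≤ n) (W : List Lt) (hG : IsG n hn W) (j : Fin n) :
    ∃ V : ℤ, (run n W).1 j = n - j + n * V := by
  have h1 := run_cong hn W j
  rw [hG] at h1
  have h2 := gp_cong hn (finRotate n j)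
  have h3 := rot_cong j
  obtain ⟨k, hk⟩ := dvd_sub (dvd_add h1 h2) h3
  refine ⟨k - 1, ?_⟩
  linarith

lemma qf_end {n : ℕ} (S : St n) (j : Fin n) (V : ℤ) (h : S.1 j = n - j + n * V) :
    qf S j = n - j + (n - 1) * V + S.2 := by
  have : (S.1 j - 1) / n = V := by
    refine ediv_of (b := n - j - 1) ?_ (by omega) (by omega)
    rw [h]; ring
  unfold qf
  rw [this, h]; ring

lemma Nc_ge {n : ℕ} (W : List Lt) (j : Fin n) : |qf (run n W) j - (j + 1)| ≤ Nc n W j := by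
  have := Nc_append W [] j
  simpa [qf_nil, Nc] using this

lemma Nc_ge_two {n : ℕ} (u v : List Lt) (j : Fin n) :
    |2 * (qf (run n v) j - (j + 1)) - (qf (run n (u ++ v)) j - (j + 1))| ≤ Nc n (u ++ v) j := by
  have h1 := Nc_append u v j
  have h2 := Nc_ge v j
  have h3 := abs_sub (qf (run n v) j - (j + 1)) (qf (run n (u ++ v)) j - qf (run n v) j)
  have e : 2 * (qf (run n v) j - (j + 1)) - (qf (run n (u ++ v)) j - (j + 1))
    = (qf (run n v) j - (j + 1)) - (qf (run n (u ++ v)) j - qf (run n v) j) := by ring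
  rw [e]
  linarith

lemma Kc_ge {n : ℕ} (W : List Lt) (V : Fin n → ℤ)
    (hV : ∀ j, (run n W).1 j = n - j + n * V j) (p : Fin n × Fin n) (hp : p.1 < p.2) :
    |V p.2 - V p.1 - 1| ≤ Kc n W p := by
  have h := Kc_le W p
  rw [ff_nil p hp, sub_zero] at h
  have : ff (run n W) p = V p.2 - V p.1 - 1 := by
    unfold ff
    refine ediv_of (b := n - p.2 + p.1) ?_ (by omega) (by omega)
    rw [hV, hV]; ring
  rwa [this] at h

lemma pairs {n : ℕ} (hn : 2 ≤ n) (W : List Lt) (V : Fin n → ℤ)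
    (hV : ∀ j, (run n W).1 j = n - j + n * V j) (E : ℤ)
    (hE : E = (Finset.univ.filter (fun j => Even (V j))).card) :
    E * (E - 1) + (n - E) * (n - E - 1) + 2 * ∑ j, Nc n W j ≤ 2 * W.length := by
  have h1 := total_le hn W
  have h2 := pair_sum_ge (Finset.univ.filter (fun j => Even (V j))) (Kc n W)
    (fun p hp => (abs_nonneg _).trans (Kc_ge W V hV p hp)) (fun p hp h => by
      refine le_trans ?_ (Kc_ge W V hV p hp)
      apply Int.one_le_abs
      simp only [Finset.mem_filter, Finset.mem_univ, true_and, Int.even_iff] at h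
      omega)
  rw [← hE] at h2
  linarith

lemma arith1 (e o u1 u2 ε1 ε2 : ℤ) (he : 0 ≤ e) (ho : 0 ≤ o) (h1 : 0 ≤ u1) (h2 : 0 ≤ u2)
    (a1 : ε1 = 0 ∨ ε1 = 1) (a2 : ε2 = 0 ∨ ε2 = 1)
    (hn : 4 ≤ e + o + u1 + u2)
    (hp : ε1 + ε2 = 2 → (e + o + u1 + u2) % 2 = 1) :
    ε1 + ε2 - 1 ≤ (e - o) ^ 2 + 2 * u1 * e + 2 * u2 * o + 2 * (u1 + u2) * (u1 + u2 - 1)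
      - 2 * u1 * u2 := by
  have k1 : 0 ≤ u1 * (u1 - 1) := by
    rcases eq_or_lt_of_le h1 with h | h
    · simp [← h]
    · exact mul_nonneg h1 (by omega)
  have k2 : 0 ≤ u2 * (u2 - 1) := by
    rcases eq_or_lt_of_le h2 with h | h
    · simp [← h]
    · exact mul_nonneg h2 (by omega)
  have k3 := mul_nonneg h1 h2
  have k4 := mul_nonneg h1 he
  have k5 := mul_nonneg h2 ho
  have k6 := sq_nonneg (e - o)
  by_cases hε : ε1 + ε2 = 2
  · have hp := hp hε
    have sqpos : e ≠ o → 1 ≤ (e - o) ^ 2 := fun h => by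
      have : 0 < (e - o) ^ 2 := by
        have : e - o ≠ 0 := sub_ne_zero.2 h
        positivity
      omega
    rw [hε]
    by_cases c : 2 ≤ u1 + u2
    · have : 1 ≤ u1 * (u1 - 1) + u2 * (u2 - 1) + u1 * u2 := by
        by_cases c1 : u1 = 0
        · subst c1; nlinarith
        by_cases c2 : u2 = 0
        · subst c2; nlinarith
        have : 0 < u1 * u2 := mul_pos (by omega) (by omega)
        omega
      nlinarith
    · have : (u1 = 0 ∧ u2 = 0) ∨ (u1 = 1 ∧ u2 = 0) ∨ (u1 = 0 ∧ u2 = 1) := by omega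
      rcases this with ⟨rfl, rfl⟩ | ⟨rfl, rfl⟩ | ⟨rfl, rfl⟩
      · have := sqpos (by omega)
        linarith
      · by_cases c : e = o
        · subst c; nlinarith
        · have := sqpos c
          linarith
      · by_cases c : e = o
        · subst c; nlinarith
        · have := sqpos c
          linarith
  · have : ε1 + ε2 ≤ 1 := by omega
    nlinarith

lemma count {n : ℕ} (hn : 4 ≤ n) (N V f t : Fin n → ℤ) (c1 c2 : ℤ) (E : ℤ)
    (hE : E = (Finset.univ.filter (fun j => Even (V j))).card)
    (hf : ∀ i j, f i = f j → i = j) (ht : ∀ i j, t i = t j → i = j)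
    (h0 : ∀ j, N j ≤ n - 2 → Even (V j) → |2 * f j + c1| ≤ N j)
    (h1 : ∀ j, N j ≤ n - 2 → ¬ Even (V j) → |2 * t j + c2| ≤ N j)
    (hc : n % 2 = 0 → ¬ (Even c1 ∧ Even c2)) :
    (n : ℤ) * (n - 1) ≤ E * (E - 1) + (n - E) * (n - E - 1) + 2 * ∑ j, N j + 1 := by
  classical
  set A := Finset.univ.filter (fun j => Even (V j)) with hA
  set B := Finset.univ.filter (fun j => ¬ Even (V j)) with hB
  have m1 : ∑ j, N j = ∑ j ∈ A, N j + ∑ j ∈ B, N j :=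
    (Finset.sum_filter_add_sum_filter_not _ _ _).symm
  have m2 : A.card + B.card = n := by
    rw [hA, hB, Finset.card_filter_add_card_filter_not]; simp
  have gen : ∀ (T : Finset (Fin n)) (g : Fin n → ℤ) (c : ℤ), (∀ i j, g i = g j → i = j) →
      (∀ j ∈ T, N j ≤ n - 2 → |2 * g j + c| ≤ N j) → ∃ e u : ℤ, 0 ≤ e ∧ 0 ≤ u ∧ e + u = T.card ∧
      e ^ 2 - (if Even c then 1 else 0) + 2 * u * (n - 1) ≤ 2 * ∑ j ∈ T, N j := by
    intro T g c hg hT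
    refine ⟨(T.filter (fun j => N j ≤ n - 2)).card, (T.filter (fun j => ¬ N j ≤ n - 2)).card,
      by positivity, by positivity, ?_, ?_⟩
    · rw [← Finset.card_filter_add_card_filter_not (s := T) (fun j => N j ≤ n - 2)]
      push_cast; rfl
    · rw [← Finset.sum_filter_add_sum_filter_not T (fun j => N j ≤ n - 2)]
      have b1 := sum_abs_ge (T.filter (fun j => N j ≤ n - 2)) g c (fun i _ j _ h => hg i j h)
      have b2 : ∑ j ∈ T.filter (fun j => N j ≤ n - 2), |2 * g j + c|
          ≤ ∑ j ∈ T.filter (fun j => N j ≤ n - 2), N j :=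
        Finset.sum_le_sum fun j hj => by
          rw [Finset.mem_filter] at hj
          exact hT j hj.1 hj.2
      have b3 : ((T.filter (fun j => ¬ N j ≤ n - 2)).card : ℤ) * (n - 1)
          ≤ ∑ j ∈ T.filter (fun j => ¬ N j ≤ n - 2), N j := by
        rw [← nsmul_eq_mul]
        refine Finset.card_nsmul_le_sum _ _ _ fun j hj => ?_
        rw [Finset.mem_filter] at hj
        omega
      linarith
  obtain ⟨e, u1, he, hu1, s1, b1⟩ := gen A f c1 hf fun j hj hN => by
    rw [hA, Finset.mem_filter] at hj
    exact h0 j hN hj.2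
  obtain ⟨o, u2, ho, hu2, s2, b2⟩ := gen B t c2 ht fun j hj hN => by
    rw [hB, Finset.mem_filter] at hj
    exact h1 j hN hj.2
  have hnn : (n : ℤ) = e + o + u1 + u2 := by omega
  have key := arith1 e o u1 u2 (if Even c1 then 1 else 0) (if Even c2 then 1 else 0) he ho hu1 hu2
    (by split_ifs <;> simp) (by split_ifs <;> simp) (by omega) (by
      intro h
      by_contra hcon
      have := hc (by omega)
      split_ifs at h with x y
      · exact this ⟨x, y⟩
      all_goals omega)
  have hE' : E = e + u1 := by omega
  rw [m1, hE']
  rw [hnn] at *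
  nlinarith

lemma nat_lem (n P j V : ℤ) (hn : 4 ≤ n) (hP : P = 0 ∨ P = 1) (hj : 0 ≤ j) (hjn : j < n)
    (h : |n - 1 - 2 * j + (n - 1) * V + P| ≤ n - 2) :
    V = 0 ∨ (V = -1 ∧ j < (n + 1) / 2) ∨ (V = 1 ∧ (n + 1) / 2 ≤ j) ∨ (V = -2 ∧ P = 1 ∧ j = 0) := by
  rw [abs_le] at h
  have h1 : V < 2 := by
    by_contra hc
    have := mul_le_mul_of_nonneg_left (by omega : 2 ≤ V) (by omega : 0 ≤ n - 1)
    omega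
  have h2 : -3 < V := by
    by_contra hc
    have := mul_le_mul_of_nonneg_left (by omega : V ≤ -3) (by omega : 0 ≤ n - 1)
    omega
  have : V = -2 ∨ V = -1 ∨ V = 0 ∨ V = 1 := by omega
  rcases this with rfl | rfl | rfl | rfl <;> omega

lemma Nc_zero {n : ℕ} (hn : 4 ≤ n) (t : List Lt) (j : Fin n) (hj : (j : ℕ) = 0) :
    1 + |qf (run n (t ++ [Lt.r])) j - 2| ≤ Nc n (t ++ [Lt.r]) j := by
  have h := Nc_append t [Lt.r] j
  have e : qf (run n [Lt.r]) j = 2 := by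
    simp only [qf, run, stp, hj]
    have : (((0 : ℕ) : ℤ) + 1 - 1 - 1) / (n : ℤ) = -1 :=
      ediv_of (b := n - 1) (by push_cast; ring) (by omega) (by omega)
    rw [this]; norm_num
  have e2 : Nc n [Lt.r] j = 1 := by
    have : stp n Lt.r (run n []) = run n [Lt.r] := rfl
    simp only [Nc, this, e, qf_nil, hj]
    norm_num
  rw [e, e2] at h
  exact h

lemma visit {n : ℕ} (hn : 4 ≤ n) (u v : List Lt) (V : Fin n → ℤ)
    (hV : ∀ j, (run n (u ++ v)).1 j = n - j + n * V j)
    (hP : (run n (u ++ v)).2 = 0 ∨ ((run n (u ++ v)).2 = 1 ∧ ∃ t, u ++ v = t ++ [Lt.r]))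
    (M : ℤ) (hM : M = (n + 1) / 2) (hl : Line M (run n v))
    (hPM : (run n v).2 = M ∨ (run n v).2 = M - n) :
    (n : ℤ) * (n - 1) ≤ 2 * (u ++ v).length + 1 := by
  have hp := pairs (by omega) (u ++ v) V hV _ rfl
  have hq : ∀ j, qf (run n (u ++ v)) j - (j + 1)
      = n - 1 - 2 * j + (n - 1) * V j + (run n (u ++ v)).2 := fun j => by
    rw [qf_end _ j (V j) (hV j)]; ring
  have hP' : (run n (u ++ v)).2 = 0 ∨ (run n (u ++ v)).2 = 1 := by tauto
  have nat : ∀ j, Nc n (u ++ v) j ≤ n - 2 →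
      V j = 0 ∨ (V j = -1 ∧ (j : ℤ) < M) ∨ (V j = 1 ∧ M ≤ j) := by
    intro j hj
    have h1 := (Nc_ge (u ++ v) j).trans hj
    rw [hq] at h1
    rw [hM]
    rcases nat_lem n _ j (V j) (by omega) hP' (by omega) (by omega) h1 with h | h | h | ⟨a, b, c⟩
    · exact Or.inl h
    · exact Or.inr (Or.inl h)
    · exact Or.inr (Or.inr h)
    · exfalso
      rcases hP with h | ⟨_, t, ht⟩
      · omega
      · have h2 := Nc_zero hn t j (by omega)
        rw [← ht] at h2
        have h3 := hq j
        rw [a, b, c] at h3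
        have h4 := neg_abs_le (qf (run n (u ++ v)) j - 2)
        omega
  have hs : ∃ K : ℤ, (K = 1 ∨ K = -1) ∧ ∀ j,
      ((V j = -1 ∧ (j : ℤ) < M) ∨ (V j = 1 ∧ M ≤ j)) →
      2 * (((run n v).1 j - 1) / n) - V j = K := by
    have L1 : ∀ j : Fin n, ∀ k : ℤ, n * k + 1 ≤ (run n v).1 j → (run n v).1 j ≤ n * k + n →
        ((run n v).1 j - 1) / n = k := fun j k a b =>
      ediv_of (b := (run n v).1 j - 1 - n * k) (by ring) (by linarith) (by linarith)
    rcases hPM with h | h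
    · refine ⟨-1, Or.inr rfl, ?_⟩
      rintro j (⟨a, b⟩ | ⟨a, b⟩)
      · have := (hl j).1 b
        rw [L1 j (-1) (by omega) (by omega), a]; norm_num
      · have := (hl j).2 b
        rw [L1 j 0 (by omega) (by omega), a]; norm_num
    · refine ⟨1, Or.inl rfl, ?_⟩
      rintro j (⟨a, b⟩ | ⟨a, b⟩)
      · have := (hl j).1 b
        rw [L1 j 0 (by omega) (by omega), a]; norm_num
      · have := (hl j).2 b
        rw [L1 j 1 (by omega) (by omega), a]; norm_num
  obtain ⟨K, hK, hs⟩ := hs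
  have := count hn (Nc n (u ++ v)) V (fun j => - (j : ℤ))
    (fun j => (run n v).1 j - n * (((run n v).1 j - 1) / n))
    (n - 1 + (run n (u ++ v)).2)
    ((n - 1) * K + 2 * (run n v).2 - (run n (u ++ v)).2 - n - 1) _ rfl
    (fun i j h => Fin.ext (by omega))
    (fun i j h => injMod_run (by omega) v i j
      ⟨((run n v).1 i - 1) / n - ((run n v).1 j - 1) / n, by linarith⟩)
    (fun j hj hev => by
      have h0 : V j = 0 := by
        rw [Int.even_iff] at hev
        have := nat j hj
        omega
      refine le_trans (le_of_eq ?_) (Nc_ge (u ++ v) j)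
      rw [hq, h0]
      congr 1; ring)
    (fun j hj hev => by
      have h0 : V j ≠ 0 := by
        rintro h
        rw [h] at hev
        simp at hev
      have h1 := hs j ((nat j hj).resolve_left h0)
      refine le_trans (le_of_eq ?_) (Nc_ge_two u v j)
      rw [hq, ← h1]
      congr 1
      simp only [qf]; ring)
    (fun hpar => by
      simp only [Int.even_iff]
      rcases hK with rfl | rfl <;> omega)
  linarith

lemma arith2 (n p r s1 s2 ε : ℤ) (hn : 4 ≤ n) (hp : 0 ≤ p) (hr : 0 ≤ r) (hpr : p + r = n - 1)
    (hε : (ε = 0) ∨ (ε = 1 ∧ n % 2 = 1))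
    (h1 : p ^ 2 - ε ≤ 2 * s1) (h2 : r ^ 2 - ε ≤ 2 * s2) : 2 * n - 3 ≤ 2 * (s1 + s2) := by
  have hr' : r = n - 1 - p := by omega
  rcases hε with rfl | ⟨rfl, h⟩
  · subst hr'
    by_cases c : n = 4
    · subst c
      have : p ≤ 3 := by omega
      interval_cases p <;> omega
    · nlinarith [sq_nonneg (2 * p - (n - 1))]
  · subst hr'
    by_cases c : n = 5
    · subst c
      have : p ≤ 4 := by omega
      interval_cases p <;> omega
    · have : 7 ≤ n := by omega
      nlinarith [sq_nonneg (2 * p - (n - 1))]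

lemma no_visit {n : ℕ} (hn : 4 ≤ n) (W : List Lt) (V : Fin n → ℤ)
    (hV : ∀ j, (run n W).1 j = n - j + n * V j)
    (hP : (run n W).2 = 0 ∨ (run n W).2 = 1)
    (M : ℤ) (hM : M = (n + 1) / 2) (hl : Line M (run n W)) :
    (n : ℤ) * (n - 1) ≤ 2 * W.length + 1 := by
  classical
  have hp := pairs (by omega) W V hV _ rfl
  have hq : ∀ j : Fin n, |2 * (- (j : ℤ)) + (n - 1 + (n - 1) * V j + (run n W).2)| ≤ Nc n W j := fun j => by
    refine le_trans (le_of_eq ?_) (Nc_ge W j)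
    rw [qf_end _ j (V j) (hV j)]
    congr 1; ring
  have hN : ∀ j, 0 ≤ Nc n W j := fun j => (abs_nonneg _).trans (hq j)
  have hVj : ∀ j, V j = -1 ∨ V j = 1 ∨ (V j = 0 ∧
      (((run n W).2 = 0 ∧ n % 2 = 1 ∧ (j : ℤ) = M - 1) ∨
       ((run n W).2 = 1 ∧ n % 2 = 0 ∧ (j : ℤ) = M))) := by
    intro j
    have h := hl j
    rw [hV j] at h
    have a1 : V j < 2 := by
      by_contra hc
      have : (n : ℤ) * 2 ≤ n * V j := by nlinarith
      omega
    have a2 : -2 < V j := by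
      by_contra hc
      have : (n : ℤ) * V j ≤ n * (-2) := by nlinarith
      omega
    have : V j = -1 ∨ V j = 0 ∨ V j = 1 := by omega
    rcases this with a | a | a
    · exact Or.inl a
    · rw [a] at h
      simp only [mul_zero, add_zero] at h
      refine Or.inr (Or.inr ⟨a, ?_⟩)
      omega
    · exact Or.inr (Or.inl a)
  set A := Finset.univ.filter (fun j => Even (V j)) with hA
  have hA0 : ∀ j ∈ A, V j = 0 := fun j hj => by
    rw [hA, Finset.mem_filter, Int.even_iff] at hj
    have := hVj j
    omega
  have hc1 : A.card ≤ 1 := by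
    rw [Finset.card_le_one]
    intro i hi j hj
    have := hVj i
    have := hVj j
    have := hA0 i hi
    have := hA0 j hj
    apply Fin.ext
    omega
  have : A.card = 0 ∨ A.card = 1 := by omega
  rcases this with h | h
  · rw [h] at hp
    have : 0 ≤ ∑ j, Nc n W j := Finset.sum_nonneg fun j _ => hN j
    push_cast at hp
    linarith
  · rw [h] at hp
    set B := Finset.univ.filter (fun j => V j = -1) with hB
    set C := Finset.univ.filter (fun j => V j = 1) with hC
    have dBC : Disjoint B C := by
      rw [Finset.disjoint_left]
      intro j hj hj'
      rw [hB, Finset.mem_filter] at hj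
      rw [hC, Finset.mem_filter] at hj'
      omega
    have dA : Disjoint A (B ∪ C) := by
      rw [Finset.disjoint_left]
      intro j hj hj'
      have := hA0 j hj
      rw [Finset.mem_union, hB, hC, Finset.mem_filter, Finset.mem_filter] at hj'
      omega
    have hU : Finset.univ = A ∪ (B ∪ C) := by
      symm
      rw [Finset.eq_univ_iff_forall]
      intro j
      simp only [hA, hB, hC, Finset.mem_union, Finset.mem_filter, Finset.mem_univ, true_and]
      rcases hVj j with h | h | h
      · exact Or.inr (Or.inl h)
      · exact Or.inr (Or.inr h)
      · left; rw [h.1]; simp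
    have hcard : B.card + C.card = n - 1 := by
      have : (Finset.univ : Finset (Fin n)).card = n := by simp
      rw [hU, Finset.card_union_of_disjoint dA, Finset.card_union_of_disjoint dBC] at this
      omega
    have hsum : ∑ j ∈ B, Nc n W j + ∑ j ∈ C, Nc n W j ≤ ∑ j, Nc n W j := by
      rw [hU, Finset.sum_union dA, Finset.sum_union dBC]
      have : 0 ≤ ∑ j ∈ A, Nc n W j := Finset.sum_nonneg fun j _ => hN j
      linarith
    have lev : ∀ (T : Finset (Fin n)) (k : ℤ), (∀ j ∈ T, V j = k) →
        (T.card : ℤ) ^ 2 - (if Even ((n : ℤ) - 1 + (n - 1) * k + (run n W).2) then 1 else 0)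
          ≤ 2 * ∑ j ∈ T, Nc n W j := by
      intro T k hk
      have := sum_abs_ge T (fun j => - (j : ℤ)) ((n : ℤ) - 1 + (n - 1) * k + (run n W).2)
        (fun i _ j _ h => Fin.ext (by omega))
      refine this.trans ?_
      have : ∑ j ∈ T, |2 * (- (j : ℤ)) + ((n : ℤ) - 1 + (n - 1) * k + (run n W).2)|
          ≤ ∑ j ∈ T, Nc n W j := Finset.sum_le_sum fun j hj => by
        have := hq j
        rwa [hk j hj] at this
      linarith
    have b1 := lev B (-1) fun j hj => by
      rw [hB, Finset.mem_filter] at hj; exact hj.2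
    have b2 := lev C 1 fun j hj => by
      rw [hC, Finset.mem_filter] at hj; exact hj.2
    obtain ⟨j0, hj0⟩ := Finset.card_pos.1 (by omega : 0 < A.card)
    have hj1 := hVj j0
    have hj2 := hA0 j0 hj0
    have b3 : 2 * (n : ℤ) - 3 ≤ 2 * (∑ j ∈ B, Nc n W j + ∑ j ∈ C, Nc n W j) := by
      refine arith2 n B.card C.card _ _ (1 - (run n W).2) (by omega) (by omega) (by omega)
        (by omega) (by omega) (le_trans ?_ b1) (le_trans ?_ b2)
      · split_ifs with hh
        · rw [Int.even_iff] at hh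
          omega
        · omega
      · split_ifs with hh
        · rw [Int.even_iff] at hh
          omega
        · omega
    push_cast at hp
    nlinarith

lemma main_bound {n : ℕ} (hn : 4 ≤ n) (hn2 : 2 ≤ n) (W : List Lt) (hG : IsG n hn2 W) :
    n * (n - 1) / 2 ≤ W.length := by
  obtain ⟨W', hlen, hG', hP⟩ := twist W hG
  rw [← hlen]
  choose V hV using end_Y hn2 W' hG'
  have key : (n : ℤ) * (n - 1) ≤ 2 * W'.length + 1 := by
    rcases line_or (n := n) (((n : ℤ) + 1) / 2) (by omega) (by omega) W' with ⟨h, _, _⟩ | ⟨u, v, rfl, h1, h2⟩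
    · exact no_visit hn W' V hV (by tauto) _ rfl h
    · exact visit hn u v V hV hP _ rfl h1 h2
  have key2 : n * (n - 1) ≤ 2 * W'.length + 1 := by
    zify
    rw [Nat.cast_sub (by omega)]
    exact_mod_cast key
  have := Nat.even_mul_pred_self n
  rw [Nat.even_iff] at this
  omega

end LRX

/-- For `n ≥ 4`, with `s = [n n-1 … 1]` and `r = (1 2 … n)`, the word
metric with respect to `{(1 2), r, r⁻¹}` satisfies `dist(s r^(n-2), 1) ≥ n(n-1)/2`;
in particular the diameter of the corresponding Cayley graph of `S_n` is at least
`n(n-1)/2`. -/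
theorem stmt10 (n : ℕ) (hn : 4 ≤ n) :
    (∀ l : List (Equiv.Perm (Fin n)), (∀ x ∈ l, x ∈ gens n (by omega)) →
      l.prod = ((Fin.revPerm : Equiv.Perm (Fin n)) * (finRotate n) ^ (n - 2))⁻¹ →
      n * (n - 1) / 2 ≤ l.length) ∧
    (∃ π σ : Equiv.Perm (Fin n),
      ∀ l : List (Equiv.Perm (Fin n)), (∀ x ∈ l, x ∈ gens n (by omega)) →
        l.prod = π⁻¹ * σ → n * (n - 1) / 2 ≤ l.length) := by
  have hn2 : 2 ≤ n := by omega
  have key : ∀ l : List (Equiv.Perm (Fin n)), (∀ x ∈ l, x ∈ gens n hn2) →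
      l.prod = (LRX.gp n)⁻¹ → n * (n - 1) / 2 ≤ l.length := by
    intro l hl hprod
    obtain ⟨W, rfl⟩ := LRX.toP_list hn2 l hl
    rw [LRX.gp_inv hn2] at hprod
    rw [List.length_map]
    exact LRX.main_bound hn hn2 W hprod
  exact ⟨key, LRX.gp n, 1, fun l hl h => key l hl (by rw [h, mul_one])⟩
end

section
/- Let n ≥ 4, s = [n n-1 … 1], r = (1 2 … n), δ = (1 2) in S_n, and dist the word metric with respect to {δ, r, r^{-1}}. Then dist(s r^{n-1}, 1) = ⌈n/2⌉(⌈n/2⌉-1) - 1 + ⌊n/2⌋(⌊n/2⌋-1) - 1 + ⌊n/2⌋ + 1. -/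
/-! Letters, and their action on `ℤ` (the lift of the action on `ℤ/n`). -/
inductive Lt where
  | d : Lt
  | p : Lt
  | m : Lt

namespace Lt

def inv : Lt → Lt
  | d => d
  | p => m
  | m => p

def act (n : ℕ) : Lt → ℤ → ℤ
  | d, x => if x % (n : ℤ) = 0 then x + 1 else if x % (n : ℤ) = 1 then x - 1 else x
  | p, x => x + 1
  | m, x => x - 1

def W (n : ℕ) : List Lt → ℤ → ℤ
  | [], x => x
  | a :: l, x => act n a (W n l x)

def kc : List Lt → ℕ
  | [] => 0
  | d :: l => kc l + 1
  | p :: l => kc l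
  | m :: l => kc l

def Rc : List Lt → ℕ
  | [] => 0
  | d :: l => Rc l
  | p :: l => Rc l + 1
  | m :: l => Rc l + 1

def Nc : List Lt → ℤ
  | [] => 0
  | d :: l => Nc l
  | p :: l => Nc l + 1
  | m :: l => Nc l - 1

theorem kc_add_Rc (l : List Lt) : kc l + Rc l = l.length := by
  induction l with
  | nil => rfl
  | cons a l ih => cases a <;> simp [kc, Rc] <;> omega

theorem W_append (n : ℕ) (u v : List Lt) (x : ℤ) : W n (u ++ v) x = W n u (W n v x) := by
  induction u with
  | nil => rfl
  | cons a l ih => simp [W, ih]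

theorem Nc_append (u v : List Lt) : Nc (u ++ v) = Nc u + Nc v := by
  induction u with
  | nil => simp [Nc]
  | cons a l ih => cases a <;> simp [Nc, ih] <;> ring

theorem kc_append (u v : List Lt) : kc (u ++ v) = kc u + kc v := by
  induction u with
  | nil => simp [kc]
  | cons a l ih => cases a <;> simp [kc, ih] <;> omega

theorem act_add (n : ℕ) (a : Lt) (x q : ℤ) : act n a (x + n * q) = act n a x + n * q := by
  cases a
  · simp only [act, Int.add_mul_emod_self_left]
    split_ifs <;> ring
  · simp only [act]; ring
  · simp only [act]; ring

theorem W_add (n : ℕ) (l : List Lt) (x q : ℤ) : W n l (x + n * q) = W n l x + n * q := by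
  induction l with
  | nil => rfl
  | cons a l ih => simp only [W, ih, act_add]

theorem emod_of {n : ℕ} {x q t : ℤ} (h : x = t + n * q) (h0 : 0 ≤ t) (h1 : t < n) :
    x % (n : ℤ) = t := by
  rw [h, Int.add_mul_emod_self_left, Int.emod_eq_of_lt h0 h1]

theorem decomp {n : ℕ} (hn : 4 ≤ n) (x : ℤ) : ∃ q t : ℤ, x = t + n * q ∧ 0 ≤ t ∧ t < n :=
  ⟨x / n, x % n, (Int.emod_add_mul_ediv x n).symm, Int.emod_nonneg _ (by omega),
    Int.emod_lt_of_pos _ (by omega)⟩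

theorem act_d0 {n : ℕ} (hn : 4 ≤ n) (q : ℤ) : act n d (n * q) = n * q + 1 := by
  have : (n * q : ℤ) % n = 0 := by simp
  simp [act]

theorem act_d1 {n : ℕ} (hn : 4 ≤ n) (q : ℤ) : act n d (1 + n * q) = n * q := by
  have : (1 + n * q : ℤ) % n = 1 := emod_of rfl (by omega) (by omega)
  simp [act, this]

theorem act_d2 {n : ℕ} (hn : 4 ≤ n) {t q : ℤ} (h0 : 2 ≤ t) (h1 : t < n) :
    act n d (t + n * q) = t + n * q := by
  have : (t + n * q : ℤ) % n = t := emod_of rfl (by omega) (by omega)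
  simp only [act, this]
  rw [if_neg (by omega), if_neg (by omega)]

/-- case split for the action of `d` -/
theorem act_d_cases {n : ℕ} (hn : 4 ≤ n) (x : ℤ) :
    (∃ q : ℤ, x = n * q ∧ act n d x = n * q + 1) ∨
    (∃ q : ℤ, x = 1 + n * q ∧ act n d x = n * q) ∨
    (∃ q t : ℤ, x = t + n * q ∧ 2 ≤ t ∧ t < n ∧ act n d x = x) := by
  obtain ⟨q, t, rfl, h0, h1⟩ := decomp hn x
  rcases (by omega : t = 0 ∨ t = 1 ∨ 2 ≤ t) with h | h | h
  · left; subst h; exact ⟨q, by ring, by rw [zero_add, act_d0 hn]⟩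
  · right; left; subst h; exact ⟨q, rfl, act_d1 hn q⟩
  · right; right; exact ⟨q, t, rfl, h, h1, act_d2 hn h h1⟩

theorem act_inv_act {n : ℕ} (hn : 4 ≤ n) (a : Lt) (x : ℤ) : act n a.inv (act n a x) = x := by
  cases a
  · rcases act_d_cases hn x with ⟨q, h, h'⟩ | ⟨q, h, h'⟩ | ⟨q, t, h, h0, h1, h'⟩
    · rw [h', h, inv, add_comm, act_d1 hn]
    · rw [h', h, inv, act_d0 hn, add_comm]
    · rw [h', inv, h']
  · simp [act, inv]
  · simp [act, inv]

theorem inv_inv (a : Lt) : a.inv.inv = a := by cases a <;> rfl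

theorem act_act_inv {n : ℕ} (hn : 4 ≤ n) (a : Lt) (x : ℤ) : act n a (act n a.inv x) = x := by
  have := act_inv_act hn a.inv x
  rwa [inv_inv] at this

theorem act_inj {n : ℕ} (hn : 4 ≤ n) (a : Lt) {x y : ℤ} (h : act n a x = act n a y) : x = y := by
  rw [← act_inv_act hn a x, h, act_inv_act hn]

theorem W_inj {n : ℕ} (hn : 4 ≤ n) (l : List Lt) {x y : ℤ} (h : W n l x = W n l y) : x = y := by
  induction l with
  | nil => exact h
  | cons a l ih => exact ih (act_inj hn a h)

theorem W_surj {n : ℕ} (hn : 4 ≤ n) (l : List Lt) (y : ℤ) : ∃ x, W n l x = y := by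
  induction l generalizing y with
  | nil => exact ⟨y, rfl⟩
  | cons a l ih =>
    obtain ⟨x, hx⟩ := ih (act n a.inv y)
    exact ⟨x, by simp only [W, hx, act_act_inv hn]⟩

/-- conjugation by `x ↦ 1 - x` inverts letters -/
theorem act_conj {n : ℕ} (hn : 4 ≤ n) (a : Lt) (x : ℤ) : act n a.inv (1 - x) = 1 - act n a x := by
  cases a
  · rcases act_d_cases hn x with ⟨q, h, h'⟩ | ⟨q, h, h'⟩ | ⟨q, t, h, h0, h1, h'⟩
    · rw [h', h, inv, show (1 - n * q : ℤ) = 1 + n * (-q) by ring, act_d1 hn]; ring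
    · rw [h', h, inv, show (1 - (1 + n * q) : ℤ) = n * (-q) by ring, act_d0 hn]; ring
    · rw [h', inv, h, show (1 - (t + n * q) : ℤ) = (1 + n - t) + n * (-q - 1) by ring,
        act_d2 hn (by omega) (by omega)]
  · simp only [act, inv]; ring
  · simp only [act, inv]; ring

theorem W_conj {n : ℕ} (hn : 4 ≤ n) (l : List Lt) (x : ℤ) :
    W n (l.map inv) (1 - x) = 1 - W n l x := by
  induction l with
  | nil => rfl
  | cons a l ih => simp only [List.map, W, ih, act_conj hn]

/-- uniqueness mod n -/
theorem W_uniq {n : ℕ} (hn : 4 ≤ n) (l : List Lt) {x y : ℤ} (h : (n : ℤ) ∣ W n l x - W n l y) :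
    (n : ℤ) ∣ x - y := by
  obtain ⟨q, hq⟩ := h
  have : W n l x = W n l (y + n * q) := by rw [W_add]; linarith
  have := W_inj hn l this
  exact ⟨q, by linarith⟩

theorem eq_of_dvd_lt {n : ℕ} {x y : ℤ} (h : (n : ℤ) ∣ x - y) (h1 : x - y < n) (h2 : y - x < n) :
    x = y := by
  obtain ⟨q, hq⟩ := h
  have h3 : q < 1 := by
    by_contra hh
    nlinarith
  have h4 : -1 < q := by
    by_contra hh
    nlinarith
  have : q = 0 := by omega
  subst this
  linarith

/-- order flips only at adjacent positions `0,1` -/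
theorem act_flip {n : ℕ} (hn : 4 ≤ n) (a : Lt) {x y : ℤ} (h : x < y)
    (h' : act n a y < act n a x) : a = d ∧ y = x + 1 ∧ (n : ℤ) ∣ x := by
  cases a
  · refine ⟨rfl, ?_⟩
    rcases act_d_cases hn x with ⟨q, hx, hx'⟩ | ⟨q, hx, hx'⟩ | ⟨q, t, hx, h0, h1, hx'⟩ <;>
    rcases act_d_cases hn y with ⟨r, hy, hy'⟩ | ⟨r, hy, hy'⟩ | ⟨r, s, hy, k0, k1, hy'⟩ <;>
    rw [hx', hy'] at h' <;>
    first
    | omega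
    | (exact ⟨by omega, q, hx⟩)
  · simp only [act] at h'; omega
  · simp only [act] at h'; omega

theorem cross {n : ℕ} (hn : 4 ≤ n) (w : List Lt) {i j : ℤ} (h : i < j)
    (h' : W n w j < W n w i) :
    ∃ u v, w = u ++ d :: v ∧ W n v j = W n v i + 1 ∧ (n : ℤ) ∣ W n v i := by
  induction w with
  | nil => simp only [W] at h'; omega
  | cons a l ih =>
    by_cases hl : W n l j < W n l i
    · obtain ⟨u, v, rfl, h1⟩ := ih hl
      exact ⟨a :: u, v, rfl, h1⟩
    · have hne : W n l i ≠ W n l j := fun hh => by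
        have := W_inj hn l hh; omega
      obtain ⟨rfl, h2, h3⟩ := act_flip hn a (x := W n l i) (y := W n l j) (by omega) h'
      exact ⟨[], l, rfl, h2, h3⟩

theorem exchange {n : ℕ} (hn : 4 ≤ n) (v : List Lt) (h : W n v 1 = W n v 0 + 1)
    (h' : (n : ℤ) ∣ W n v 0) (x : ℤ) : act n d (W n v x) = W n v (act n d x) := by
  obtain ⟨k, hk⟩ := h'
  rcases act_d_cases hn x with ⟨q, hx, hx'⟩ | ⟨q, hx, hx'⟩ | ⟨q, t, hx, h0, h1, hx'⟩
  · rw [hx', hx, show (n * q + 1 : ℤ) = 1 + n * q by ring, W_add, h,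
      show (n * q : ℤ) = 0 + n * q by ring, W_add, hk, show (n * k + n * q : ℤ) = n * (k + q) by ring,
      act_d0 hn]; ring
  · rw [hx', hx, W_add, h, hk, show (n * k + 1 + n * q : ℤ) = 1 + n * (k + q) by ring, act_d1 hn,
      show (n * q : ℤ) = 0 + n * q by ring, W_add, hk]; ring
  · rw [hx']
    rcases act_d_cases hn (W n v x) with ⟨r, hy, hy'⟩ | ⟨r, hy, hy'⟩ | ⟨r, s, hy, k0, k1, hy'⟩
    · exfalso
      obtain ⟨z, hz⟩ := W_uniq hn v (x := x) (y := 0) ⟨r - k, by rw [hy, hk]; ring⟩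
      have := eq_of_dvd_lt (n := n) (x := t) (y := 0) ⟨z - q, by linarith⟩ (by omega) (by omega)
      omega
    · exfalso
      obtain ⟨z, hz⟩ := W_uniq hn v (x := x) (y := 1) ⟨r - k, by rw [hy, h, hk]; ring⟩
      have := eq_of_dvd_lt (n := n) (x := t) (y := 1) ⟨z - q, by linarith⟩ (by omega) (by omega)
      omega
    · exact hy'


def Ref (n : ℕ) (w : List Lt) : Prop := ∀ i : ℤ, (n : ℤ) ∣ W n w i + i - 1

def D (n : ℕ) (w : List Lt) (i : ℤ) : ℤ := W n w i - i - Nc w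

def Q (n : ℕ) (w : List Lt) : ℤ := ∑ i ∈ Finset.range n, (D n w i) ^ 2

def Good (n : ℕ) (w : List Lt) : Prop :=
  Ref n w ∧ ∀ w', Ref n w' → w.length ≤ w'.length ∧ (w'.length = w.length → Q n w ≤ Q n w')

theorem Q_nonneg (n : ℕ) (w : List Lt) : 0 ≤ Q n w :=
  Finset.sum_nonneg fun _ _ => sq_nonneg _

theorem exists_good (n : ℕ) (w : List Lt) (h : Ref n w) : ∃ w', Good n w' := by
  classical
  have h1 : ∃ L, ∃ w, Ref n w ∧ w.length = L := ⟨_, w, h, rfl⟩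
  have h2 : ∃ q : ℕ, ∃ w, Ref n w ∧ w.length = Nat.find h1 ∧ (Q n w).toNat = q := by
    obtain ⟨w, a, b⟩ := Nat.find_spec h1
    exact ⟨_, w, a, b, rfl⟩
  obtain ⟨w', a, b, c⟩ := Nat.find_spec h2
  refine ⟨w', a, fun v hv => ⟨?_, fun hl => ?_⟩⟩
  · rw [b]; exact Nat.find_min' h1 ⟨v, hv, rfl⟩
  · have := Nat.find_min' h2 ⟨v, hv, hl.trans b, rfl⟩
    rw [← c] at this
    have h3 := Q_nonneg n v
    have h4 := Q_nonneg n w'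
    omega

theorem shift {n : ℕ} (hn : 4 ≤ n) {u v : List Lt} (h : Ref n (u ++ v)) (i : ℤ) :
    W n (v.map inv ++ u) (W n v i) + W n v i = W n (u ++ v) i + i := by
  obtain ⟨c, hc⟩ := h i
  rw [W_append, ← W_append n u v, show W n (u ++ v) i = 1 - (i + n * (-c)) by linarith, W_conj hn,
    W_add]
  ring

theorem shift_ref {n : ℕ} (hn : 4 ≤ n) {u v : List Lt} (h : Ref n (u ++ v)) :
    Ref n (v.map inv ++ u) := by
  intro y
  obtain ⟨i, rfl⟩ := W_surj hn v y
  rw [shift hn h]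
  exact h i

theorem act_d_zero {n : ℕ} (hn : 4 ≤ n) : act n d 0 = 1 := by
  simpa using act_d0 hn 0

theorem act_d_one {n : ℕ} (hn : 4 ≤ n) : act n d 1 = 0 := by
  simpa using act_d1 hn 0

theorem act_d_ge {n : ℕ} (hn : 4 ≤ n) {t : ℤ} (h0 : 2 ≤ t) (h1 : t < n) : act n d t = t := by
  simpa using act_d2 hn (q := 0) h0 h1

/-- the key property (E) -/
theorem good_E {n : ℕ} (hn : 4 ≤ n) {u : List Lt} (h : Good n (u ++ [d])) :
    W n (u ++ [d]) 0 = W n (u ++ [d]) 1 + 1 := by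
  have e0 : W n (u ++ [d]) 0 = W n u 1 := by rw [W_append]; simp [W, act_d_zero hn]
  have e1 : W n (u ++ [d]) 1 = W n u 0 := by rw [W_append]; simp [W, act_d_one hn]
  by_contra hne
  rcases lt_or_ge (W n u 1) (W n u 0) with hlt | hge
  · obtain ⟨u1, v, rfl, h2, h3⟩ := cross hn u (by omega : (0 : ℤ) < 1) hlt
    have key : Ref n (u1 ++ v) := by
      intro x
      have hx := h.1 x
      have : W n (u1 ++ d :: v ++ [d]) x = W n (u1 ++ v) x := by
        simp only [W_append, W]
        rw [exchange hn v h2 h3, show act n d (act n d x) = x from act_inv_act hn d x]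
      rwa [this] at hx
    have := (h.2 _ key).1
    simp at this
  · have hne2 : W n u 0 ≠ W n u 1 := fun hh => by
      have := W_inj hn u hh; omega
    have hs := shift hn h.1
    have hr := shift_ref hn h.1
    simp only [List.map, W, List.cons_append, List.nil_append] at hs hr
    rw [show inv d = d from rfl] at hs hr
    have hq := (h.2 _ hr).2 (by simp)
    have h0 := hs 0
    have h1 := hs 1
    rw [act_d_zero hn] at h0
    rw [act_d_one hn] at h1
    have hN : Nc (d :: u) = Nc (u ++ [d]) := by rw [Nc_append]; simp [Nc]
    obtain ⟨k, rfl⟩ : ∃ k, n = k + 2 := ⟨n - 2, by omega⟩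
    unfold Q at hq
    rw [Finset.sum_range_succ', Finset.sum_range_succ', Finset.sum_range_succ' (n := k + 1),
      Finset.sum_range_succ' (n := k)] at hq
    have hsum : ∑ x ∈ Finset.range k, (D (k + 2) (u ++ [d]) ((x + 1 + 1 : ℕ) : ℤ)) ^ 2 =
        ∑ x ∈ Finset.range k, (D (k + 2) (d :: u) ((x + 1 + 1 : ℕ) : ℤ)) ^ 2 := by
      refine Finset.sum_congr rfl fun x hx => ?_
      rw [Finset.mem_range] at hx
      have h2 := hs ((x + 1 + 1 : ℕ) : ℤ)
      rw [act_d_ge hn (t := ((x + 1 + 1 : ℕ) : ℤ)) (by push_cast; omega) (by push_cast; omega)] at h2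
      unfold D
      rw [hN, show W (k + 2) (d :: u) ((x + 1 + 1 : ℕ) : ℤ) = W (k + 2) (u ++ [d]) ((x + 1 + 1 : ℕ) : ℤ) from by
        simp only [W]; linarith]
    rw [hsum] at hq
    unfold D at hq
    rw [hN] at hq
    simp only [W] at hq
    push_cast at hq
    rw [e0, e1] at hq hne
    rw [e0] at h0
    rw [e1] at h1
    have hA : act (k + 2) d (W (k + 2) u 0) = W (k + 2) u 0 + 1 := by linarith
    have hB : act (k + 2) d (W (k + 2) u 1) = W (k + 2) u 1 - 1 := by linarith
    rw [hA, hB] at hq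
    have hlt : W (k + 2) u 0 + 2 ≤ W (k + 2) u 1 := by omega
    nlinarith

theorem D_per (n : ℕ) (w : List Lt) (i : ℤ) : D n w (i + n) = D n w i := by
  unfold D
  have := W_add n w i 1
  rw [mul_one] at this
  rw [this]; ring

theorem Q_shift (n : ℕ) (w : List Lt) :
    ∑ i ∈ Finset.range n, (D n w ((i : ℤ) + 1)) ^ 2 = Q n w := by
  have h1 := Finset.sum_range_succ (fun i : ℕ => (D n w (i : ℤ)) ^ 2) n
  have h2 := Finset.sum_range_succ' (fun i : ℕ => (D n w (i : ℤ)) ^ 2) n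
  have h3 := D_per n w 0
  rw [zero_add] at h3
  simp only [h3] at h1
  push_cast at h2
  unfold Q
  linarith

theorem good_of {n : ℕ} {w w' : List Lt} (h : Good n w) (hr : Ref n w')
    (hl : w'.length = w.length) (hq : Q n w' = Q n w) : Good n w' := by
  refine ⟨hr, fun v hv => ?_⟩
  rw [hl, hq]
  exact h.2 v hv

theorem good_step {n : ℕ} (hn : 4 ≤ n) {u : List Lt} {x : Lt} (h : Good n (u ++ [x])) :
    Good n (x.inv :: u) := by
  have hs := shift hn h.1
  have hr := shift_ref hn h.1
  refine good_of h hr (by simp) ?_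
  cases x
  · have hE := good_E hn h
    simp only [List.map, W, List.cons_append, List.nil_append] at hs
    unfold Q
    refine Finset.sum_congr rfl fun x hx => ?_
    rw [Finset.mem_range] at hx
    have hN : Nc (inv d :: u) = Nc (u ++ [d]) := by rw [Nc_append]; simp [Nc, inv]
    have h0 := hs 0
    have h1 := hs 1
    rw [act_d_zero hn] at h0
    rw [act_d_one hn] at h1
    have : W n (inv d :: u) x = W n (u ++ [d]) x := by
      simp only [W]
      rcases (by omega : x = 0 ∨ x = 1 ∨ 2 ≤ x) with hh | hh | hh
      · subst hh; push_cast; linarith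
      · subst hh; push_cast; linarith
      · have h2 := hs x
        rw [act_d_ge hn (t := (x : ℤ)) (by omega) (by omega)] at h2
        linarith
    unfold D
    rw [this, hN]
  · simp only [List.map, List.cons_append, List.nil_append] at hs
    have hN : Nc (inv p :: u) = Nc (u ++ [p]) - 2 := by rw [Nc_append]; simp [Nc, inv]; ring
    rw [← Q_shift]
    unfold Q
    refine Finset.sum_congr rfl fun x hx => ?_
    have h2 : W n (inv p :: u) (x + 1) + (x + 1) = _ := hs x
    unfold D
    rw [hN]
    congr 1
    linarith
  · simp only [List.map, List.cons_append, List.nil_append] at hs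
    have hN : Nc (inv m :: u) = Nc (u ++ [m]) + 2 := by rw [Nc_append]; simp [Nc, inv]; ring
    rw [← Q_shift n (u ++ [m])]
    unfold Q
    refine Finset.sum_congr rfl fun x hx => ?_
    have h2 : W n (inv m :: u) (x + 1 - 1) + (x + 1 - 1) = _ := hs (x + 1)
    rw [add_sub_cancel_right] at h2
    unfold D
    rw [hN]
    congr 1
    linarith

theorem good_shift {n : ℕ} (hn : 4 ≤ n) (v : List Lt) : ∀ u : List Lt, Good n (u ++ v) →
    Good n (v.map inv ++ u) := by
  induction v using List.reverseRecOn with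
  | nil => intro u h; simpa using h
  | append_singleton v x ih =>
    intro u h
    rw [← List.append_assoc] at h
    have h1 := good_step hn h
    have h2 := ih (x.inv :: u) (by simpa using h1)
    simpa using h2

theorem good_mono {n : ℕ} (hn : 4 ≤ n) {w : List Lt} (h : Good n w) {i j : ℤ} (hij : i < j) :
    W n w i + i ≤ W n w j + j := by
  rcases lt_or_ge (W n w j) (W n w i) with h1 | h1
  · obtain ⟨u, v, rfl, h2, k, h3⟩ := cross hn w hij h1
    have e : u ++ d :: v = (u ++ [d]) ++ v := by simp
    rw [e] at h ⊢
    have hg := good_shift hn v _ h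
    have hs := shift hn h.1
    rw [← List.append_assoc] at hg
    have hE := good_E hn hg
    have hi := hs i
    have hj := hs j
    rw [h2] at hj
    rw [h3, ← List.append_assoc] at hi hj
    have a1 := W_add n (v.map inv ++ u ++ [d]) 0 k
    have a2 := W_add n (v.map inv ++ u ++ [d]) 1 k
    rw [zero_add] at a1
    rw [add_comm (n * k : ℤ) 1] at hj
    rw [a1] at hi
    rw [a2] at hj
    linarith
  · omega


theorem nat_eq_of_dvd {n : ℕ} {i j : ℕ} (hi : i < n) (hj : j < n) (c : ℤ)
    (h : (n : ℤ) ∣ (c + i) - (c + j)) : i = j := by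
  have := eq_of_dvd_lt h (by omega) (by omega)
  omega

theorem inv_bound {n : ℕ} (hn : 4 ≤ n) (q : ℤ) (w : List Lt) :
    ((Finset.range n ×ˢ Finset.range n).filter
      (fun x : ℕ × ℕ => x.1 < x.2 ∧ W n w (q + x.2) < W n w (q + x.1))).card ≤ kc w := by
  induction w with
  | nil =>
    rw [Finset.card_eq_zero.mpr]
    · exact Nat.zero_le _
    · rw [Finset.filter_eq_empty_iff]
      rintro x - ⟨h1, h2⟩
      simp only [W] at h2
      omega
  | cons a l ih =>
    cases a
    · have h1 := Finset.card_le_card_sdiff_add_card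
        (t := (Finset.range n ×ˢ Finset.range n).filter
          (fun x : ℕ × ℕ => x.1 < x.2 ∧ W n l (q + x.2) < W n l (q + x.1)))
        (s := (Finset.range n ×ˢ Finset.range n).filter
          (fun x : ℕ × ℕ => x.1 < x.2 ∧ W n (d :: l) (q + x.2) < W n (d :: l) (q + x.1)))
      have h2 : (((Finset.range n ×ˢ Finset.range n).filter
          (fun x : ℕ × ℕ => x.1 < x.2 ∧ W n (d :: l) (q + x.2) < W n (d :: l) (q + x.1))) \
          ((Finset.range n ×ˢ Finset.range n).filter
          (fun x : ℕ × ℕ => x.1 < x.2 ∧ W n l (q + x.2) < W n l (q + x.1)))).card ≤ 1 := by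
        have aux : ∀ x : ℕ × ℕ, x ∈ (((Finset.range n ×ˢ Finset.range n).filter
          (fun x : ℕ × ℕ => x.1 < x.2 ∧ W n (d :: l) (q + x.2) < W n (d :: l) (q + x.1))) \
          ((Finset.range n ×ˢ Finset.range n).filter
          (fun x : ℕ × ℕ => x.1 < x.2 ∧ W n l (q + x.2) < W n l (q + x.1)))) →
          x.1 < n ∧ x.2 < n ∧ W n l (q + x.2) = W n l (q + x.1) + 1 ∧
            (n : ℤ) ∣ W n l (q + x.1) := by
          intro x hx
          simp only [Finset.mem_sdiff, Finset.mem_filter, Finset.mem_product, Finset.mem_range] at hx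
          obtain ⟨⟨⟨a1, a2⟩, a3, a4⟩, a5⟩ := hx
          have a6 : ¬ W n l (q + x.2) < W n l (q + x.1) := fun hh => a5 ⟨⟨a1, a2⟩, a3, hh⟩
          have a7 : W n l (q + x.1) ≠ W n l (q + x.2) := fun hh => by
            have := W_inj hn l hh
            omega
          obtain ⟨-, b1, b2⟩ := act_flip hn d (lt_of_le_of_ne (not_lt.mp a6) a7) a4
          exact ⟨a1, a2, b1, b2⟩
        rw [Finset.card_le_one]
        intro x hx y hy
        obtain ⟨a1, a2, a3, a4⟩ := aux x hx
        obtain ⟨b1, b2, b3, b4⟩ := aux y hy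
        have e1 := nat_eq_of_dvd a1 b1 q (W_uniq hn l (dvd_sub a4 b4))
        have e2 := nat_eq_of_dvd a2 b2 q (W_uniq hn l (by
          rw [a3, b3, add_sub_add_right_eq_sub]; exact dvd_sub a4 b4))
        exact Prod.ext e1 e2
      simp only [kc]
      omega
    · simp only [W, act, kc, add_lt_add_iff_right]
      exact ih
    · simp only [W, act, kc, sub_lt_sub_iff_right]
      exact ih

theorem ind_le_one {n : ℕ} (hn : 4 ≤ n) (l : List Lt) (c : ℤ) :
    ∑ j ∈ Finset.range n, (if (n : ℤ) ∣ W n l ((j : ℤ) + 1) - c then (1 : ℤ) else 0) ≤ 1 := by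
  rw [Finset.sum_boole]
  have : ((Finset.range n).filter (fun j : ℕ => (n : ℤ) ∣ W n l ((j : ℤ) + 1) - c)).card ≤ 1 := by
    rw [Finset.card_le_one]
    intro x hx y hy
    simp only [Finset.mem_filter, Finset.mem_range] at hx hy
    refine nat_eq_of_dvd hx.1 hy.1 1 (W_uniq hn l ?_)
    have := dvd_sub hx.2 hy.2
    rw [sub_sub_sub_cancel_right] at this
    rwa [add_comm (1 : ℤ), add_comm (1 : ℤ)]
  exact_mod_cast this

theorem div_of {n : ℕ} {x q t : ℤ} (h : x = t + n * q) (h0 : 0 ≤ t) (h1 : t < n) :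
    x / (n : ℤ) = q := by
  rw [h, Int.add_mul_ediv_left _ _ (by omega), Int.ediv_eq_zero_of_lt h0 h1, zero_add]

theorem div_step {n : ℕ} (hn : 4 ≤ n) (y : ℤ) :
    y / (n : ℤ) = (y - 1) / n + (if (n : ℤ) ∣ y then 1 else 0) := by
  obtain ⟨q, t, rfl, h0, h1⟩ := decomp hn y
  rcases (by omega : t = 0 ∨ 1 ≤ t) with h | h
  · subst h
    rw [div_of (q := q) (t := 0) rfl (by omega) (by omega),
      div_of (n := n) (q := q - 1) (t := n - 1) (by ring) (by omega) (by omega), if_pos ⟨q, by ring⟩]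
    ring
  · rw [div_of (q := q) (t := t) rfl (by omega) (by omega),
      div_of (n := n) (q := q) (t := t - 1) (by ring) (by omega) (by omega), if_neg]
    · ring
    · rintro ⟨z, hz⟩
      have := eq_of_dvd_lt (n := n) (x := t) (y := 0) ⟨z - q, by linarith⟩ (by omega) (by omega)
      omega

theorem pass_bound {n : ℕ} (hn : 4 ≤ n) (w : List Lt) :
    ∑ j ∈ Finset.range n,
      |(W n w ((j : ℤ) + 1) - 1) / (n : ℤ) - W n w ((j : ℤ) + 1) + ((j : ℤ) + 1) + Nc w| ≤ Rc w := by
  induction w with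
  | nil =>
    rw [Finset.sum_eq_zero]
    · simp [Rc]
    · intro j hj
      rw [Finset.mem_range] at hj
      simp only [W, Nc]
      rw [div_of (n := n) (q := 0) (t := j) (by ring) (by omega) (by omega)]
      simp
  | cons a l ih =>
    cases a
    · refine le_trans (le_of_eq (Finset.sum_congr rfl fun j hj => ?_)) ih
      simp only [W, Nc]
      congr 3
      generalize W n l ((j : ℤ) + 1) = y
      rcases act_d_cases hn y with ⟨q, h, h'⟩ | ⟨q, h, h'⟩ | ⟨q, t, h, h0, h1, h'⟩
      · rw [h', h, div_of (n := n) (q := q) (t := 0) (by ring) (by omega) (by omega),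
          div_of (n := n) (q := q - 1) (t := n - 1) (by ring) (by omega) (by omega)]
        ring
      · rw [h', h, div_of (n := n) (q := q - 1) (t := n - 1) (by ring) (by omega) (by omega),
          div_of (n := n) (q := q) (t := 0) (by ring) (by omega) (by omega)]
        ring
      · rw [h']
    · have h1 := ind_le_one hn l 0
      have h2 := add_le_add ih h1
      rw [← Finset.sum_add_distrib] at h2
      simp only [Rc, Nat.cast_add, Nat.cast_one]
      refine le_trans (Finset.sum_le_sum fun j hj => ?_) h2
      simp only [W, Nc, act, sub_zero]
      have h3 := div_step hn (W n l ((j : ℤ) + 1))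
      generalize W n l ((j : ℤ) + 1) = y at *
      rw [add_sub_cancel_right, h3]
      split_ifs
      · refine le_trans (le_of_eq ?_) (abs_add_le ((y - 1) / (n : ℤ) - y + ((j : ℤ) + 1) + Nc l) 1)
        congr 1; ring
      · rw [add_zero]
        refine le_of_eq ?_
        congr 1; ring
    · have h1 := ind_le_one hn l 1
      have h2 := add_le_add ih h1
      rw [← Finset.sum_add_distrib] at h2
      simp only [Rc, Nat.cast_add, Nat.cast_one]
      refine le_trans (Finset.sum_le_sum fun j hj => ?_) h2
      simp only [W, Nc, act]
      have h3 := div_step hn (W n l ((j : ℤ) + 1) - 1)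
      generalize W n l ((j : ℤ) + 1) = y at *
      rw [h3]
      split_ifs
      · refine le_trans (le_of_eq ?_)
          (abs_sub ((y - 1 - 1) / (n : ℤ) + 1 - y + ((j : ℤ) + 1) + Nc l) 1)
        congr 1; ring
      · rw [add_zero]
        refine le_of_eq ?_
        congr 1; ring


theorem inv_count {n : ℕ} (hn : 4 ≤ n) (q : ℤ) (w : List Lt) (a b : ℕ) (hab : a + b = n)
    (h1 : ∀ i j : ℕ, i < j → j < a → W n w (q + j) < W n w (q + i))
    (h2 : ∀ i j : ℕ, a ≤ i → i < j → j < n → W n w (q + j) < W n w (q + i)) :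
    a * (a - 1) + b * (b - 1) ≤ 2 * kc w := by
  have hb := inv_bound hn q w
  have hc : ((Finset.range n).sigma (fun j => if j < a then Finset.range j else Finset.Ico a j)).card
      ≤ ((Finset.range n ×ˢ Finset.range n).filter
      (fun x : ℕ × ℕ => x.1 < x.2 ∧ W n w (q + x.2) < W n w (q + x.1))).card := by
    refine Finset.card_le_card_of_injOn (fun x => (x.2, x.1)) ?_ ?_
    · rintro ⟨j, i⟩ hx
      simp only [Finset.coe_sigma, Set.mem_sigma_iff, Finset.mem_coe, Finset.mem_range] at hx
      obtain ⟨hj, hi⟩ := hx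
      simp only [Finset.mem_coe, Finset.mem_filter, Finset.mem_product, Finset.mem_range]
      split_ifs at hi with hja
      · rw [Finset.mem_range] at hi
        exact ⟨⟨by omega, hj⟩, hi, h1 i j hi hja⟩
      · rw [Finset.mem_Ico] at hi
        exact ⟨⟨by omega, hj⟩, hi.2, h2 i j hi.1 hi.2 hj⟩
    · rintro ⟨j, i⟩ - ⟨j', i'⟩ - h
      simp only [Prod.mk.injEq] at h
      obtain ⟨rfl, rfl⟩ := h
      rfl
  rw [Finset.card_sigma, ← hab, Finset.sum_range_add] at hc
  have e1 : ∑ x ∈ Finset.range a, (if x < a then Finset.range x else Finset.Ico a x).card =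
      ∑ x ∈ Finset.range a, x := by
    refine Finset.sum_congr rfl fun x hx => ?_
    rw [Finset.mem_range] at hx
    rw [if_pos hx, Finset.card_range]
  have e2 : ∑ x ∈ Finset.range b, (if a + x < a then Finset.range (a + x) else Finset.Ico a (a + x)).card =
      ∑ x ∈ Finset.range b, x := by
    refine Finset.sum_congr rfl fun x hx => ?_
    rw [if_neg (by omega), Nat.card_Ico]
    omega
  rw [e1, e2] at hc
  have g1 := Finset.sum_range_id_mul_two a
  have g2 := Finset.sum_range_id_mul_two b
  subst hab
  omega

theorem ap_bound (m : ℕ) : ∀ e : ℤ,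
    (m % 2 = 0 → (m : ℤ) ^ 2 ≤ 2 * ∑ i ∈ Finset.range m, |2 * (i : ℤ) + e|) ∧
    (m % 2 = 1 → (m : ℤ) ^ 2 - 1 ≤ 2 * ∑ i ∈ Finset.range m, |2 * (i : ℤ) + e|) ∧
    (m % 2 = 1 → e % 2 = 1 → (m : ℤ) ^ 2 + 1 ≤ 2 * ∑ i ∈ Finset.range m, |2 * (i : ℤ) + e|) := by
  induction m using Nat.strong_induction_on with
  | _ m ih =>
    intro e
    rcases (by omega : m = 0 ∨ m = 1 ∨ 2 ≤ m) with h | h | h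
    · subst h; simp
    · subst h
      refine ⟨by omega, fun _ => ?_, fun _ he => ?_⟩
      · simp
      · simp only [Finset.range_one, Finset.sum_singleton]
        have : 1 ≤ |2 * ((0 : ℕ) : ℤ) + e| := by
          apply Int.one_le_abs
          push_cast
          omega
        push_cast at *
        linarith
    · obtain ⟨k, rfl⟩ : ∃ k, m = k + 2 := ⟨m - 2, by omega⟩
      have h1 := ih k (by omega) (e + 2)
      have key : ∑ i ∈ Finset.range k, |2 * (i : ℤ) + (e + 2)| + 2 * (k + 1) ≤
          ∑ i ∈ Finset.range (k + 2), |2 * (i : ℤ) + e| := by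
        rw [Finset.sum_range_succ, Finset.sum_range_succ']
        have e1 : ∑ i ∈ Finset.range k, |2 * ((i + 1 : ℕ) : ℤ) + e| =
            ∑ i ∈ Finset.range k, |2 * (i : ℤ) + (e + 2)| := by
          refine Finset.sum_congr rfl fun x hx => ?_
          congr 1; push_cast; ring
        rw [e1]
        have h3 := neg_le_abs (2 * ((0 : ℕ) : ℤ) + e)
        have h4 := le_abs_self (2 * ((k + 1 : ℕ) : ℤ) + e)
        push_cast at *
        linarith
      push_cast
      refine ⟨fun hm => ?_, fun hm => ?_, fun hm he => ?_⟩
      · have := h1.1 (by omega)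
        linarith
      · have := h1.2.1 (by omega)
        linarith
      · have := h1.2.2 (by omega) (by omega)
        linarith

theorem caseA {n : ℕ} (hn : 4 ≤ n) {w : List Lt} (h : Good n w)
    (h01 : W n w 0 + 0 < W n w 1 + 1) : n * (n - 1) ≤ 2 * w.length := by
  have hc : ∀ i : ℤ, ∃ c : ℤ, W n w i = 1 - i + n * c := fun i => by
    obtain ⟨c, hc⟩ := h.1 i
    exact ⟨c, by linarith⟩
  choose c hc using hc
  have hnp : (0 : ℤ) < n := by omega
  have hper : ∀ i, c (i + n) = c i + 2 := fun i => by
    have h1 := W_add n w i 1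
    rw [mul_one, hc, hc] at h1
    have h2 : (n : ℤ) * (c (i + n)) = n * (c i + 2) := by linarith
    exact mul_left_cancel₀ hnp.ne' h2
  have hmono : ∀ i j, i < j → c i ≤ c j := fun i j hij => by
    have h1 := good_mono hn h hij
    rw [hc, hc] at h1
    by_contra hh
    nlinarith
  have hlt : c 0 < c 1 := by
    rw [hc, hc] at h01
    by_contra hh
    nlinarith
  have hr : ∀ j : ℕ, j < n → c (j + 1) = c 1 ∨ c (j + 1) = c 1 + 1 := fun j hj => by
    have h1 : c 1 ≤ c (j + 1) := by
      rcases Nat.eq_zero_or_pos j with hz | hz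
      · subst hz; simp
      · exact hmono _ _ (by omega)
    have h2 : c (j + 1) ≤ c n := by
      rcases (by omega : j + 1 = n ∨ j + 1 < n) with hz | hz
      · have : ((j : ℤ) + 1) = n := by omega
        rw [this]
      · exact hmono _ _ (by omega)
    have h3 := hper 0
    rw [zero_add] at h3
    omega
  -- threshold
  obtain ⟨a, han, ha1, ha2⟩ : ∃ a : ℕ, a ≤ n ∧ (∀ j : ℕ, j < a → c (j + 1) = c 1) ∧
      (∀ j : ℕ, a ≤ j → j < n → c (j + 1) = c 1 + 1) := by
    classical
    have hex : ∃ j : ℕ, j = n ∨ c (j + 1) = c 1 + 1 := ⟨n, Or.inl rfl⟩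
    refine ⟨Nat.find hex, Nat.find_min' hex (Or.inl rfl), fun j hj => ?_, fun j hj hjn => ?_⟩
    · have h1 := Nat.find_min hex hj
      have h2 := Nat.find_min' hex (Or.inl rfl)
      push Not at h1
      rcases hr j (by omega) with h3 | h3
      · exact h3
      · exact absurd h3 h1.2
    · rcases Nat.find_spec hex with h1 | h1
      · omega
      · rcases Nat.eq_or_lt_of_le hj with h2 | h2
        · rw [h2] at h1; exact h1
        · have := hmono ((Nat.find hex : ℕ) + 1) (j + 1) (by omega)
          rcases hr j hjn with h3 | h3 <;> omega
  obtain ⟨b, hab⟩ : ∃ b, a + b = n := ⟨n - a, by omega⟩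
  have hinv := inv_count hn 1 w a b hab
    (fun i j hij hja => by
      rw [hc, hc, add_comm (1 : ℤ) j, add_comm (1 : ℤ) i, ha1 i (by omega), ha1 j (by omega)]
      linarith [(by omega : (i : ℤ) < j)])
    (fun i j hi hij hjn => by
      rw [hc, hc, add_comm (1 : ℤ) j, add_comm (1 : ℤ) i, ha2 i (by omega) (by omega),
        ha2 j (by omega) (by omega)]
      linarith [(by omega : (i : ℤ) < j)])
  have hpass := pass_bound hn w
  have hterm : ∀ j : ℕ, j < n → (W n w ((j : ℤ) + 1) - 1) / (n : ℤ) - W n w ((j : ℤ) + 1)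
      + ((j : ℤ) + 1) + Nc w = 2 * j + (Nc w - (n - 1) * c (j + 1)) := fun j hj => by
    rw [hc, div_of (n := n) (q := c (j + 1) - 1) (t := n - 1 - j) (by ring) (by omega) (by omega)]
    ring
  have hs : ∑ j ∈ Finset.range n,
      |(W n w ((j : ℤ) + 1) - 1) / (n : ℤ) - W n w ((j : ℤ) + 1) + ((j : ℤ) + 1) + Nc w| =
      ∑ j ∈ Finset.range n, |2 * (j : ℤ) + (Nc w - (n - 1) * c (j + 1))| :=
    Finset.sum_congr rfl fun j hj => by rw [hterm j (Finset.mem_range.mp hj)]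
  rw [hs] at hpass
  have hsplit : ∑ j ∈ Finset.range n, |2 * (j : ℤ) + (Nc w - (n - 1) * c (j + 1))| =
      ∑ j ∈ Finset.range a, |2 * (j : ℤ) + (Nc w - (n - 1) * c 1)| +
      ∑ j ∈ Finset.range b, |2 * (j : ℤ) + (Nc w - (n - 1) * c 1 + (2 * a - (n - 1)))| := by
    conv_lhs => rw [← hab, Finset.sum_range_add]
    congr 1
    · refine Finset.sum_congr rfl fun x hx => ?_
      rw [Finset.mem_range] at hx
      rw [ha1 x hx, hab]
    · refine Finset.sum_congr rfl fun x hx => ?_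
      rw [Finset.mem_range] at hx
      rw [ha2 (a + x) (by omega) (by omega), hab]
      congr 1; push_cast; ring
  rw [hsplit] at hpass
  generalize Nc w - (n - 1) * c 1 = E at hpass
  have hA := ap_bound a E
  have hB := ap_bound b (E + (2 * a - (n - 1)))
  generalize ∑ j ∈ Finset.range a, |2 * (j : ℤ) + E| = SA at *
  generalize ∑ j ∈ Finset.range b, |2 * (j : ℤ) + (E + (2 * a - (n - 1)))| = SB at *
  have hlen := kc_add_Rc w
  have fin : 2 * (a : ℤ) * b ≤ 2 * SA + 2 * SB := by
    have hsq := sq_nonneg ((a : ℤ) - b)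
    rcases Nat.mod_two_eq_zero_or_one a with pa | pa <;>
    rcases Nat.mod_two_eq_zero_or_one b with pb | pb
    · have := hA.1 pa
      have := hB.1 pb
      nlinarith
    · have := hA.1 pa
      have := hB.2.1 pb
      have h5 : (1 : ℤ) ≤ ((a : ℤ) - b) ^ 2 := by
        have : (a : ℤ) - b ≠ 0 := by omega
        have := sq_pos_of_ne_zero this
        omega
      nlinarith
    · have := hA.2.1 pa
      have := hB.1 pb
      have h5 : (1 : ℤ) ≤ ((a : ℤ) - b) ^ 2 := by
        have : (a : ℤ) - b ≠ 0 := by omega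
        have := sq_pos_of_ne_zero this
        omega
      nlinarith
    · rcases Int.emod_two_eq_zero_or_one E with pe | pe
      · have := hA.2.1 pa
        have := hB.2.2 pb (by omega)
        nlinarith
      · have := hA.2.2 pa pe
        have := hB.2.1 pb
        nlinarith
  have hinv' : (a : ℤ) * (a - 1) + b * (b - 1) ≤ 2 * kc w := by
    have e : ∀ x : ℕ, ((x * (x - 1) : ℕ) : ℤ) = (x : ℤ) * (x - 1) := fun x => by
      cases x <;> simp
    rw [← e, ← e]
    exact_mod_cast hinv
  have hfin : (n : ℤ) * (n - 1) ≤ 2 * w.length := by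
    rw [← hlen, ← hab]
    push_cast
    nlinarith
  have e : ((n * (n - 1) : ℕ) : ℤ) = (n : ℤ) * (n - 1) := by
    rw [Nat.cast_mul, Nat.cast_sub (by omega)]; simp
  rw [← e] at hfin
  exact_mod_cast hfin


theorem two_kc_le (k : ℕ) : ∀ l : List Lt, l.length ≤ k → (∀ u v, l ≠ u ++ d :: d :: v) →
    (∀ u, l ≠ u ++ [d]) → 2 * kc l ≤ l.length := by
  induction k with
  | zero =>
    intro l hl _ _
    have : l = [] := List.eq_nil_of_length_eq_zero (by omega)
    subst this; simp [kc]
  | succ k ih =>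
    intro l hl h1 h2
    have tail : ∀ x l', l = x :: l' → (∀ u v, l' ≠ u ++ d :: d :: v) ∧ (∀ u, l' ≠ u ++ [d]) := by
      rintro x l' rfl
      exact ⟨fun u v e => h1 (x :: u) v (by rw [e]; rfl), fun u e => h2 (x :: u) (by rw [e]; rfl)⟩
    match l, hl, h1, h2, tail with
    | [], _, _, _, _ => simp [kc]
    | p :: l, hl, h1, h2, tail =>
      obtain ⟨t1, t2⟩ := tail _ _ rfl
      have := ih l (by simpa using hl) t1 t2
      simp [kc]; omega
    | m :: l, hl, h1, h2, tail =>
      obtain ⟨t1, t2⟩ := tail _ _ rfl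
      have := ih l (by simpa using hl) t1 t2
      simp [kc]; omega
    | [d], _, _, h2, _ => exact absurd rfl (h2 [])
    | d :: d :: l, _, h1, _, _ => exact absurd rfl (h1 [] l)
    | d :: p :: l, hl, h1, h2, tail =>
      have t1 : ∀ u v, l ≠ u ++ d :: d :: v := fun u v e => h1 (d :: p :: u) v (by rw [e]; rfl)
      have t2 : ∀ u, l ≠ u ++ [d] := fun u e => h2 (d :: p :: u) (by rw [e]; rfl)
      have := ih l (by simp at hl; omega) t1 t2
      simp [kc]; omega
    | d :: m :: l, hl, h1, h2, tail =>
      have t1 : ∀ u v, l ≠ u ++ d :: d :: v := fun u v e => h1 (d :: m :: u) v (by rw [e]; rfl)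
      have t2 : ∀ u, l ≠ u ++ [d] := fun u e => h2 (d :: m :: u) (by rw [e]; rfl)
      have := ih l (by simp at hl; omega) t1 t2
      simp [kc]; omega

theorem good_noDD {n : ℕ} (hn : 4 ≤ n) {w : List Lt} (h : Good n w) (u v : List Lt) :
    w ≠ u ++ d :: d :: v := by
  rintro rfl
  have hr : Ref n (u ++ v) := fun x => by
    have hx := h.1 x
    simp only [W_append, W] at hx ⊢
    rwa [show ∀ y, act n d (act n d y) = y from fun y => act_inv_act hn d y] at hx
  have := (h.2 _ hr).1
  simp at this

theorem good_two_kc {n : ℕ} (hn : 4 ≤ n) {w : List Lt} (h : Good n w) (hk : 2 ≤ kc w) :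
    2 * kc w ≤ w.length := by
  by_cases he : ∃ u, w = u ++ [d]
  · obtain ⟨u, rfl⟩ := he
    have hg : Good n (d :: u) := good_step hn h
    have e1 : kc (u ++ [d]) = kc (d :: u) := by rw [kc_append]; simp [kc]
    have e2 : (u ++ [d]).length = (d :: u).length := by simp
    rw [e1] at hk ⊢
    rw [e2]
    refine two_kc_le _ _ le_rfl (good_noDD hn hg) ?_
    intro u' e
    cases u' with
    | nil =>
      simp at e
      subst e
      simp [kc] at hk
    | cons x u'' =>
      simp only [List.cons_append, List.cons.injEq] at e
      refine good_noDD hn h u'' [] ?_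
      rw [e.2]; simp
  · push Not at he
    exact two_kc_le _ _ le_rfl (good_noDD hn h) he

theorem label {n : ℕ} (hn : 4 ≤ n) {w : List Lt}
    (hB : ∀ u v s t, w = u ++ v → W n v s = 0 → W n v t = 1 → W n w s + s = W n w t + t)
    (v : List Lt) : ∀ u s, w = u ++ v → W n v s = 0 → W n w s + s = W n w 0 := by
  induction v with
  | nil =>
    intro u s _ h
    simp only [W] at h
    rw [h, add_zero]
  | cons x v ih =>
    intro u s hw hs
    have hw' : w = (u ++ [x]) ++ v := by simp [hw]
    obtain ⟨t, ht⟩ := W_surj hn v 0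
    have h1 := ih _ t hw' ht
    rw [← h1]
    cases x
    · have h2 : W n v s = 1 := act_inj hn d (by rw [act_d_one hn]; exact hs)
      exact (hB _ v t s hw' ht h2).symm
    · exact hB u (p :: v) s t hw hs (by simp [W, act, ht])
    · have h2 : W n v s = 1 := by simp only [W, act] at hs; omega
      exact (hB _ v t s hw' ht h2).symm

theorem caseB {n : ℕ} (hn : 4 ≤ n) {w : List Lt} (h : Good n w)
    (hB : ∀ u v s t, w = u ++ v → W n v s = 0 → W n v t = 1 → W n w s + s = W n w t + t) :
    n * (n - 1) ≤ 2 * w.length := by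
  have hc : ∀ i : ℤ, ∃ c : ℤ, W n w i = 1 - i + n * c := fun i => by
    obtain ⟨c, hc⟩ := h.1 i
    exact ⟨c, by linarith⟩
  choose c hc using hc
  have hnp : (0 : ℤ) < n := by omega
  have hper : ∀ i, c (i + n) = c i + 2 := fun i => by
    have h1 := W_add n w i 1
    rw [mul_one, hc, hc] at h1
    have h2 : (n : ℤ) * (c (i + n)) = n * (c i + 2) := by linarith
    exact mul_left_cancel₀ hnp.ne' h2
  have hmono : ∀ i j, i ≤ j → c i ≤ c j := fun i j hij => by
    rcases eq_or_lt_of_le hij with he | hij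
    · rw [he]
    have h1 := good_mono hn h hij
    rw [hc, hc] at h1
    by_contra hh
    nlinarith
  obtain ⟨q, hq1, hq2⟩ : ∃ q : ℤ, c q = c 0 ∧ c (q - 1) < c 0 := by
    classical
    have hex : ∃ k : ℕ, c (-(k : ℤ)) < c 0 := ⟨n, by
      have := hper (-(n : ℤ))
      rw [neg_add_cancel] at this
      omega⟩
    obtain ⟨k, hk⟩ : ∃ k, Nat.find hex = k := ⟨_, rfl⟩
    have hs := Nat.find_spec hex
    rw [hk] at hs
    have hk0 : k ≠ 0 := by
      rintro rfl
      simp at hs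
    have hm := Nat.find_min hex (m := k - 1) (by omega)
    have e : (-((k - 1 : ℕ) : ℤ)) = 1 - k := by omega
    rw [e] at hm
    refine ⟨1 - k, ?_, ?_⟩
    · have := hmono (1 - k) 0 (by omega)
      omega
    · rw [show (1 - (k : ℤ) - 1) = -k by ring]; exact hs
  have hlast : c (q + n - 2) = c 0 := by
    by_contra hne
    have h1 := hmono q (q + n - 2) (by omega)
    have h2 := hmono (q + n - 2) (q + n - 1) (by omega)
    have h3 := hper (q - 1)
    rw [show q - 1 + (n : ℤ) = q + n - 1 by ring] at h3
    have h4 : c (q + n - 2) = c 0 + 1 := by omega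
    have h5 : c (q + n - 1) = c 0 + 1 := by omega
    obtain ⟨u, v, hw, -, k, hk⟩ := cross hn w (i := q + n - 2) (j := q + n - 1) (by omega) (by
      rw [hc, hc, h4, h5]; linarith)
    have hl := label hn hB v (u ++ [d]) (q + n - 2 + n * (-k)) (by simp [hw]) (by
      rw [W_add, hk]; ring)
    rw [W_add, hc, hc, h4] at hl
    have h6 : (n : ℤ) * 1 = n * (2 * k) := by linarith
    have h7 := mul_left_cancel₀ hnp.ne' h6
    omega
  have hinv := inv_count hn q w (n - 1) 1 (by omega)
    (fun i j hij hja => by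
      have a1 := hmono q (q + i) (by omega)
      have a2 := hmono (q + i) (q + j) (by omega)
      have a3 := hmono (q + j) (q + n - 2) (by omega)
      rw [hc, hc, show c (q + i) = c 0 by omega, show c (q + j) = c 0 by omega]
      linarith [(by omega : (i : ℤ) < j)])
    (fun i j hi hij hjn => by omega)
  obtain ⟨k, rfl⟩ : ∃ k, n = k + 4 := ⟨n - 4, by omega⟩
  have e1 : k + 4 - 1 = k + 3 := rfl
  have e2 : k + 3 - 1 = k + 2 := rfl
  rw [e1, e2] at hinv
  rw [e1]
  simp only [Nat.sub_self, mul_zero, add_zero] at hinv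
  have h2 := good_two_kc hn h (by nlinarith)
  nlinarith

theorem good_len {n : ℕ} (hn : 4 ≤ n) {w : List Lt} (h : Good n w) :
    n * (n - 1) ≤ 2 * w.length := by
  by_cases hB : ∀ u v s t, w = u ++ v → W n v s = 0 → W n v t = 1 → W n w s + s = W n w t + t
  · exact caseB hn h hB
  · push Not at hB
    obtain ⟨u, v, s, t, rfl, hs, ht, hne⟩ := hB
    have hg := good_shift hn v u h
    have h1 := shift hn h.1 s
    have h2 := shift hn h.1 t
    rw [hs] at h1
    rw [ht] at h2
    have h3 := good_mono hn hg (by omega : (0 : ℤ) < 1)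
    have := caseA hn hg (by omega)
    simpa [add_comm] using this

theorem ref_len {n : ℕ} (hn : 4 ≤ n) {w : List Lt} (h : Ref n w) :
    n * (n - 1) ≤ 2 * w.length := by
  obtain ⟨w', hw'⟩ := exists_good n w h
  have := good_len hn hw'
  have := (hw'.2 w h).1
  omega

theorem neg_len {n : ℕ} (hn : 4 ≤ n) {w : List Lt} (h : ∀ i : ℤ, (n : ℤ) ∣ W n w i + i) :
    n * (n - 1) ≤ 2 * (w.length + 1) := by
  have := ref_len hn (w := p :: w) (fun i => by
    have := h i
    simp only [W, act]
    rwa [show W n w i + 1 + i - 1 = W n w i + i by ring])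
  simpa using this


def cyc (n : ℕ) (k y : ℤ) : ℤ :=
  if y % (n : ℤ) < k then y + 1 else if y % (n : ℤ) = k then y - k else y

def rvs (n : ℕ) (k y : ℤ) : ℤ :=
  if y % (n : ℤ) ≤ k then y + k - 2 * (y % (n : ℤ)) else y

theorem cyc_of {n : ℕ} {k y t q : ℤ} (h : y = t + n * q) (h0 : 0 ≤ t) (h1 : t < n) :
    cyc n k y = if t < k then y + 1 else if t = k then y - k else y := by
  unfold cyc
  rw [emod_of h h0 h1]

theorem rvs_of {n : ℕ} {k y t q : ℤ} (h : y = t + n * q) (h0 : 0 ≤ t) (h1 : t < n) :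
    rvs n k y = if t ≤ k then y + k - 2 * t else y := by
  unfold rvs
  rw [emod_of h h0 h1]

def Cw : ℕ → List Lt
  | 0 => [d]
  | k + 1 => Cw k ++ [p, d]

theorem Cw_len (k : ℕ) : (Cw k).length = 2 * k + 1 := by
  induction k with
  | zero => rfl
  | succ k ih => simp [Cw, ih]; omega

theorem W_Cw {n : ℕ} (hn : 4 ≤ n) (k : ℕ) (hk : k + 1 < n) (x : ℤ) :
    W n (Cw k) x = cyc n (k + 1) (x + k) := by
  induction k generalizing x with
  | zero =>
    simp only [Cw, W]
    push_cast
    rcases act_d_cases hn x with ⟨q, h, h'⟩ | ⟨q, h, h'⟩ | ⟨q, t, h, h0, h1, h'⟩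
    · rw [h', cyc_of (t := 0) (q := q) (by rw [h]; ring) (by omega) (by omega), if_pos (by omega), h]
      ring
    · rw [h', cyc_of (t := 1) (q := q) (by rw [h]; ring) (by omega) (by omega), if_neg (by omega),
        if_pos (by omega), h]
      ring
    · rw [h', cyc_of (t := t) (q := q) (by rw [h]; ring) (by omega) (by omega), if_neg (by omega),
        if_neg (by omega)]
      ring
  | succ k ih =>
    simp only [Cw, W_append, W]
    rw [ih (by omega)]
    simp only [act.eq_2]
    push_cast
    rcases act_d_cases hn x with ⟨q, h, h'⟩ | ⟨q, h, h'⟩ | ⟨q, t, h, h0, h1, h'⟩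
    · rw [h', cyc_of (t := k + 2) (q := q) (by ring) (by omega) (by omega), if_neg (by omega),
        if_neg (by omega), cyc_of (t := k + 1) (q := q) (by rw [h]; ring) (by omega) (by omega),
        if_pos (by omega), h]
      ring
    · rw [h', cyc_of (t := k + 1) (q := q) (by ring) (by omega) (by omega), if_neg (by omega),
        if_pos (by omega), cyc_of (t := k + 2) (q := q) (by rw [h]; ring) (by omega) (by omega),
        if_neg (by omega), if_pos (by omega), h]
      ring
    · rw [h']
      rcases lt_or_ge (t + k + 1) n with hh | hh
      · rw [cyc_of (t := t + k + 1) (q := q) (by rw [h]; ring) (by omega) (by omega),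
          cyc_of (t := t + k + 1) (q := q) (by rw [h]; ring) (by omega) (by omega),
          if_neg (by omega), if_neg (by omega), if_neg (by omega), if_neg (by omega)]
        ring
      · rw [cyc_of (t := t + k + 1 - n) (q := q + 1) (by rw [h]; ring) (by omega) (by omega),
          cyc_of (t := t + k + 1 - n) (q := q + 1) (by rw [h]; ring) (by omega) (by omega),
          if_pos (by omega), if_pos (by omega)]
        ring

def Uw : ℕ → List Lt
  | 0 => [d]
  | k + 1 => Cw (k + 1) ++ m :: (Uw k).map inv

theorem Uw_len (k : ℕ) : (Uw k).length + 1 = (k + 1) * (k + 2) := by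
  induction k with
  | zero => rfl
  | succ k ih => simp [Uw, Cw_len]; nlinarith

theorem cyc_rvs {n : ℕ} (hn : 4 ≤ n) (M z : ℤ) (hM : 0 ≤ M) (hMn : M + 1 < n) :
    cyc n (M + 1) (M - rvs n M z) = rvs n (M + 1) (M - z) := by
  obtain ⟨q, t, hz, h0, h1⟩ := decomp hn z
  rw [rvs_of hz h0 h1]
  rcases lt_or_ge M t with h | h
  · rw [if_neg (by omega), cyc_of (t := M - t + n) (q := -q - 1) (by rw [hz]; ring) (by omega) (by omega),
      rvs_of (t := M - t + n) (q := -q - 1) (by rw [hz]; ring) (by omega) (by omega), if_neg (by omega)]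
    rcases (by omega : t = n - 1 ∨ t < n - 1) with h2 | h2
    · rw [if_pos (by omega), if_pos (by omega), h2]; ring
    · rw [if_neg (by omega), if_neg (by omega)]
  · rw [if_pos h, cyc_of (t := t) (q := -q) (by rw [hz]; ring) (by omega) (by omega),
      rvs_of (t := M - t) (q := -q) (by rw [hz]; ring) (by omega) (by omega), if_pos (by omega),
      if_pos (by omega)]
    ring

theorem W_Uw {n : ℕ} (hn : 4 ≤ n) (k : ℕ) (hk : k + 1 < n) (x : ℤ) :
    W n (Uw k) x = rvs n (k + 1) (x + (k / 2 : ℕ)) := by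
  induction k generalizing x with
  | zero =>
    simp only [Uw, W]
    push_cast
    simp only [Int.zero_ediv, add_zero, zero_add]
    rcases act_d_cases hn x with ⟨q, h, h'⟩ | ⟨q, h, h'⟩ | ⟨q, t, h, h0, h1, h'⟩
    · rw [h', rvs_of (t := 0) (q := q) (by rw [h]; ring) (by omega) (by omega), if_pos (by omega), h]
      ring
    · rw [h', rvs_of (t := 1) (q := q) (by rw [h]) (by omega) (by omega), if_pos (by omega), h]
      ring
    · rw [h', rvs_of (t := t) (q := q) (by rw [h]) (by omega) (by omega), if_neg (by omega)]
  | succ k ih =>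
    simp only [Uw, W_append, W]
    have h1 := W_conj hn (Uw k) (1 - x)
    rw [sub_sub_cancel, ih (by omega)] at h1
    rw [h1, W_Cw hn _ hk]
    simp only [act.eq_3]
    have h2 := cyc_rvs hn (k + 1) (1 - x + (k / 2 : ℕ)) (by omega) (by omega)
    push_cast at *
    rw [show 1 - rvs n (k + 1) (1 - x + k / 2) - 1 + ((k : ℤ) + 1) =
      (k : ℤ) + 1 - rvs n (k + 1) (1 - x + k / 2) by ring, h2]
    congr 1
    omega

theorem W_rep (n c : ℕ) (x : ℤ) : W n (List.replicate c m) x = x - c := by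
  induction c with
  | zero => simp [W]
  | succ c ih => simp only [List.replicate_succ, W, ih, act]; push_cast; ring

theorem upper_ab {n : ℕ} (hn : 4 ≤ n) (A B : ℕ) (hAB : A + 2 + (B + 2) = n) :
    ∃ w : List Lt, (∀ i : ℤ, (n : ℤ) ∣ W n w i + i) ∧
      w.length = (B + 1) * (B + 2) + (A + 1) * (A + 2) + B / 2 + (A + 1 - A / 2) := by
  refine ⟨Uw B ++ (List.replicate (B / 2 + 2) m ++ ((Uw A).map inv ++
    List.replicate (A + 1 - A / 2) m)), fun i => ?_, ?_⟩
  · simp only [W_append, W_rep]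
    have h1 := W_conj hn (Uw A) (1 - (i - ((A + 1 - A / 2 : ℕ) : ℤ)))
    rw [sub_sub_cancel] at h1
    rw [h1, W_Uw hn A (by omega), W_Uw hn B (by omega)]
    have e1 : 1 - (i - ((A + 1 - A / 2 : ℕ) : ℤ)) + ((A / 2 : ℕ) : ℤ) = A + 2 - i := by omega
    rw [e1]
    have e2 : ∀ z : ℤ, 1 - z - ((B / 2 + 2 : ℕ) : ℤ) + ((B / 2 : ℕ) : ℤ) = - 1 - z := fun z => by
      push_cast; ring
    rw [e2]
    obtain ⟨q, t, hz, h0, h1⟩ := decomp hn (A + 2 - i)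
    have hi : i = A + 2 - t - n * q := by linarith
    have hn' : (n : ℤ) = A + 2 + (B + 2) := by omega
    rw [rvs_of hz h0 h1]
    rcases lt_or_ge ((A : ℤ) + 1) t with h | h
    · rw [if_neg (by omega), rvs_of (t := n - 1 - t) (q := - q - 1) (by rw [hz]; ring) (by omega)
        (by omega), if_pos (by omega), hi]
      exact ⟨- 2 * q - 1, by rw [hn']; ring⟩
    · rw [if_pos (by omega), rvs_of (t := n - A - 2 + t) (q := - q - 1) (by rw [hz]; ring) (by omega)
        (by omega), if_neg (by omega), hi]
      exact ⟨- 2 * q, by ring⟩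
  · have h1 := Uw_len A
    have h2 := Uw_len B
    simp only [List.length_append, List.length_replicate, List.length_map]
    omega

theorem upper {n : ℕ} (hn : 4 ≤ n) :
    ∃ w : List Lt, (∀ i : ℤ, (n : ℤ) ∣ W n w i + i) ∧
      w.length = ((n + 1) / 2 * ((n + 1) / 2 - 1) - 1) + (n / 2 * (n / 2 - 1) - 1) + (n / 2 + 1) := by
  obtain ⟨g, hg⟩ : ∃ g, n = 4 * g + 4 ∨ n = 4 * g + 5 ∨ n = 4 * g + 6 ∨ n = 4 * g + 7 :=
    ⟨n / 4 - 1, by omega⟩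
  rcases hg with h | h | h | h
  · obtain ⟨w, h1, h2⟩ := upper_ab hn (2 * g) (2 * g) (by omega)
    refine ⟨w, h1, ?_⟩
    rw [h2, show (n + 1) / 2 = 2 * g + 2 by omega, show n / 2 = 2 * g + 2 by omega,
      show 2 * g / 2 = g by omega, show 2 * g + 2 - 1 = 2 * g + 1 by omega,
      show 2 * g + 1 - g = g + 1 by omega, mul_comm (2 * g + 1)]
    have : 2 ≤ (2 * g + 2) * (2 * g + 1) := by nlinarith
    omega
  · obtain ⟨w, h1, h2⟩ := upper_ab hn (2 * g) (2 * g + 1) (by omega)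
    refine ⟨w, h1, ?_⟩
    rw [h2, show (n + 1) / 2 = 2 * g + 3 by omega, show n / 2 = 2 * g + 2 by omega,
      show 2 * g / 2 = g by omega, show (2 * g + 1) / 2 = g by omega,
      show 2 * g + 2 - 1 = 2 * g + 1 by omega, show 2 * g + 3 - 1 = 2 * g + 2 by omega,
      show 2 * g + 1 - g = g + 1 by omega, mul_comm (2 * g + 1) (2 * g + 2),
      show (2 * g + 1 + 1) * (2 * g + 1 + 2) = (2 * g + 3) * (2 * g + 2) by ring]
    have : 2 ≤ (2 * g + 2) * (2 * g + 1) := by nlinarith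
    have : 2 ≤ (2 * g + 3) * (2 * g + 2) := by nlinarith
    omega
  · obtain ⟨w, h1, h2⟩ := upper_ab hn (2 * g + 1) (2 * g + 1) (by omega)
    refine ⟨w, h1, ?_⟩
    rw [h2, show (n + 1) / 2 = 2 * g + 3 by omega, show n / 2 = 2 * g + 3 by omega,
      show (2 * g + 1) / 2 = g by omega,
      show 2 * g + 3 - 1 = 2 * g + 2 by omega,
      show 2 * g + 1 + 1 - g = g + 2 by omega,
      show (2 * g + 1 + 1) * (2 * g + 1 + 2) = (2 * g + 3) * (2 * g + 2) by ring]
    have : 2 ≤ (2 * g + 3) * (2 * g + 2) := by nlinarith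
    omega
  · obtain ⟨w, h1, h2⟩ := upper_ab hn (2 * g + 2) (2 * g + 1) (by omega)
    refine ⟨w, h1, ?_⟩
    rw [h2, show (n + 1) / 2 = 2 * g + 4 by omega, show n / 2 = 2 * g + 3 by omega,
      show (2 * g + 1) / 2 = g by omega, show (2 * g + 2) / 2 = g + 1 by omega,
      show 2 * g + 3 - 1 = 2 * g + 2 by omega, show 2 * g + 4 - 1 = 2 * g + 3 by omega,
      show 2 * g + 2 + 1 - (g + 1) = g + 2 by omega,
      show (2 * g + 1 + 1) * (2 * g + 1 + 2) = (2 * g + 3) * (2 * g + 2) by ring,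
      show (2 * g + 2 + 1) * (2 * g + 2 + 2) = (2 * g + 4) * (2 * g + 3) by ring]
    have : 2 ≤ (2 * g + 3) * (2 * g + 2) := by nlinarith
    have : 2 ≤ (2 * g + 4) * (2 * g + 3) := by nlinarith
    omega

/-- the target number is `n(n-1)/2 - 1` -/
theorem number {n : ℕ} (hn : 4 ≤ n) :
    2 * (((n + 1) / 2 * ((n + 1) / 2 - 1) - 1) + (n / 2 * (n / 2 - 1) - 1) + (n / 2 + 1)) + 2 =
      n * (n - 1) := by
  obtain ⟨g, hg⟩ : ∃ g, n = 2 * g + 4 ∨ n = 2 * g + 5 := ⟨n / 2 - 2, by omega⟩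
  rcases hg with h | h
  · rw [show (n + 1) / 2 = g + 2 by omega, show n / 2 = g + 2 by omega,
      show g + 2 - 1 = g + 1 by omega, show n - 1 = 2 * g + 3 by omega, h]
    have : 2 ≤ (g + 2) * (g + 1) := by nlinarith
    have e : (2 * g + 4) * (2 * g + 3) = 4 * ((g + 2) * (g + 1)) + 2 * g + 4 := by ring
    omega
  · rw [show (n + 1) / 2 = g + 3 by omega, show n / 2 = g + 2 by omega,
      show g + 2 - 1 = g + 1 by omega, show g + 3 - 1 = g + 2 by omega,
      show n - 1 = 2 * g + 4 by omega, h]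
    have : 2 ≤ (g + 2) * (g + 1) := by nlinarith
    have : 2 ≤ (g + 3) * (g + 2) := by nlinarith
    have e : (2 * g + 5) * (2 * g + 4) = 2 * ((g + 3) * (g + 2)) + 2 * ((g + 2) * (g + 1)) + 2 * g + 4 := by
      ring
    omega


def toGen (n : ℕ) (hn : 2 ≤ n) : Lt → Equiv.Perm (Fin n)
  | d => delta n hn
  | p => finRotate n
  | m => (finRotate n)⁻¹

theorem rot_dvd (n : ℕ) (y : Fin n) : (n : ℤ) ∣ ((finRotate n y : Fin n) : ℤ) - ((y : ℕ) + 1) := by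
  cases n with
  | zero => exact y.elim0
  | succ k =>
    by_cases h : y = Fin.last k
    · subst h
      rw [finRotate_last]
      exact ⟨-1, by simp⟩
    · rw [coe_finRotate_of_ne_last h]
      simp

theorem gen_dvd {n : ℕ} (hn : 4 ≤ n) (h2 : 2 ≤ n) (a : Lt) (y : Fin n) :
    (n : ℤ) ∣ act n a (y : ℕ) - ((toGen n h2 a y : Fin n) : ℕ) := by
  cases a
  · simp only [toGen, delta]
    have hy := y.2
    rcases (by omega : (y : ℕ) = 0 ∨ (y : ℕ) = 1 ∨ 2 ≤ (y : ℕ)) with h | h | h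
    · have : y = ⟨0, by omega⟩ := Fin.ext h
      rw [this, Equiv.swap_apply_left]
      simp [act_d_zero hn]
    · have : y = ⟨1, by omega⟩ := Fin.ext h
      rw [this, Equiv.swap_apply_right]
      simp [act_d_one hn]
    · rw [Equiv.swap_apply_of_ne_of_ne, act_d_ge hn (by omega) (by omega)]
      · simp
      · intro e; rw [e] at h; simp at h
      · intro e; rw [e] at h; simp at h
  · have := rot_dvd n y
    simp only [toGen, act]
    rw [← dvd_neg, neg_sub]
    exact this
  · simp only [toGen, act]
    obtain ⟨z, rfl⟩ := (finRotate n).surjective y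
    rw [← Equiv.Perm.mul_apply, inv_mul_cancel, Equiv.Perm.one_apply]
    have := rot_dvd n z
    rwa [sub_right_comm, sub_sub]

theorem prod_dvd {n : ℕ} (hn : 4 ≤ n) (h2 : 2 ≤ n) (l : List Lt) (i : Fin n) :
    (n : ℤ) ∣ W n l (i : ℕ) - (((l.map (toGen n h2)).prod i : Fin n) : ℕ) := by
  induction l with
  | nil => simp [W]
  | cons a l ih =>
    obtain ⟨q, hq⟩ := ih
    simp only [List.map_cons, List.prod_cons, Equiv.Perm.mul_apply, W]
    obtain ⟨r, hr⟩ := gen_dvd hn h2 a ((l.map (toGen n h2)).prod i)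
    rw [show W n l (i : ℕ) = (((l.map (toGen n h2)).prod i : Fin n) : ℕ) + n * q by linarith,
      act_add]
    exact ⟨r + q, by linarith⟩

theorem rot_pow (n k : ℕ) (i : Fin n) :
    (n : ℤ) ∣ ((((finRotate n) ^ k) i : Fin n) : ℤ) - ((i : ℕ) + k) := by
  induction k with
  | zero => simp
  | succ k ih =>
    rw [pow_succ', Equiv.Perm.mul_apply]
    obtain ⟨a, ha⟩ := rot_dvd n (((finRotate n) ^ k) i)
    obtain ⟨b, hb⟩ := ih
    rw [Nat.cast_succ]
    exact ⟨a + b, by linarith⟩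

theorem target_dvd {n : ℕ} (hn : 4 ≤ n) (i : Fin n) : (n : ℤ) ∣
    (((((Fin.revPerm : Equiv.Perm (Fin n)) * (finRotate n) ^ (n - 1))⁻¹) i : Fin n) : ℤ) + (i : ℕ) := by
  obtain ⟨z, rfl⟩ := ((Fin.revPerm : Equiv.Perm (Fin n)) * (finRotate n) ^ (n - 1)).surjective i
  rw [← Equiv.Perm.mul_apply _⁻¹, inv_mul_cancel, Equiv.Perm.one_apply, Equiv.Perm.mul_apply, Fin.revPerm_apply, Fin.val_rev]
  obtain ⟨q, hq⟩ := rot_pow n (n - 1) z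
  have hlt := (((finRotate n) ^ (n - 1)) z).2
  generalize ((finRotate n) ^ (n - 1)) z = y at *
  rw [Nat.cast_sub (by omega)] at hq
  rw [Nat.cast_sub (by omega)]
  push_cast at *
  exact ⟨- q, by linarith⟩

theorem perm_uniq {n : ℕ} (g h : Equiv.Perm (Fin n)) (hg : ∀ i, (n : ℤ) ∣ ((g i : Fin n) : ℤ) + (i : ℕ))
    (hh : ∀ i, (n : ℤ) ∣ ((h i : Fin n) : ℤ) + (i : ℕ)) : g = h := by
  ext i
  have h1 := dvd_sub (hg i) (hh i)
  rw [add_sub_add_right_eq_sub] at h1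
  have := eq_of_dvd_lt h1 (by omega) (by omega)
  omega

theorem toGen_mem {n : ℕ} (hn : 2 ≤ n) (a : Lt) : toGen n hn a ∈ gens n hn := by
  cases a <;> simp [toGen, gens]

theorem lift_list {n : ℕ} (hn : 2 ≤ n) (l : List (Equiv.Perm (Fin n)))
    (h : ∀ x ∈ l, x ∈ gens n hn) : ∃ w : List Lt, w.map (toGen n hn) = l := by
  induction l with
  | nil => exact ⟨[], rfl⟩
  | cons x l ih =>
    obtain ⟨w, rfl⟩ := ih fun y hy => h y (List.mem_cons_of_mem _ hy)
    have hx := h x List.mem_cons_self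
    rcases hx with hx | hx | hx
    · exact ⟨d :: w, by rw [hx]; rfl⟩
    · exact ⟨p :: w, by rw [hx]; rfl⟩
    · exact ⟨m :: w, by rw [hx]; rfl⟩

theorem neg_of_fin {n : ℕ} (hn : 4 ≤ n) (w : List Lt)
    (h : ∀ i : Fin n, (n : ℤ) ∣ W n w (i : ℕ) + (i : ℕ)) (x : ℤ) : (n : ℤ) ∣ W n w x + x := by
  obtain ⟨q, t, rfl, h0, h1⟩ := decomp hn x
  obtain ⟨c, hc⟩ := h ⟨t.toNat, by omega⟩
  have e : ((t.toNat : ℕ) : ℤ) = t := by omega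
  simp only [e] at hc
  rw [W_add]
  exact ⟨c + 2 * q, by linarith⟩

end Lt

/-- For `n ≥ 4`, with `s = [n n-1 … 1]` and `r = (1 2 … n)`,
`dist(s r^(n-1), 1) = ⌈n/2⌉(⌈n/2⌉-1) - 1 + ⌊n/2⌋(⌊n/2⌋-1) - 1 + ⌊n/2⌋ + 1`
in the word metric with respect to `{(1 2), r, r⁻¹}`. -/
theorem stmt11 (n : ℕ) (hn : 4 ≤ n) :
    IsMinWordLen n (by omega)
      (((Fin.revPerm : Equiv.Perm (Fin n)) * (finRotate n) ^ (n - 1))⁻¹)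
      (((n + 1) / 2 * ((n + 1) / 2 - 1) - 1) + (n / 2 * (n / 2 - 1) - 1) + (n / 2 + 1)) := by
  have hn2 : 2 ≤ n := by omega
  refine ⟨?_, ?_⟩
  · obtain ⟨w, h1, h2⟩ := Lt.upper hn
    refine ⟨w.map (Lt.toGen n hn2), ?_, ?_, ?_⟩
    · intro x hx
      obtain ⟨a, -, rfl⟩ := List.mem_map.mp hx
      exact Lt.toGen_mem _ a
    · refine Lt.perm_uniq _ _ (fun i => ?_) (Lt.target_dvd hn)
      obtain ⟨a, ha⟩ := h1 (i : ℕ)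
      obtain ⟨b, hb⟩ := Lt.prod_dvd hn hn2 w i
      exact ⟨a - b, by linarith⟩
    · rw [List.length_map]; exact h2
  · intro l hl hp
    obtain ⟨w, rfl⟩ := Lt.lift_list _ l hl
    have h := Lt.neg_len hn (w := w) (Lt.neg_of_fin hn w fun i => by
      have h1 := Lt.prod_dvd hn hn2 w i
      rw [hp] at h1
      obtain ⟨a, ha⟩ := h1
      obtain ⟨b, hb⟩ := Lt.target_dvd hn i
      exact ⟨a + b, by linarith⟩)
    have := Lt.number hn
    rw [List.length_map]
    omega
end

section
/- Let n ≥ 4, s = [n n-1 … 1], r = (1 2 … n), δ = (1 2) in S_n, and dist the word metric with respect to {δ, r, r^{-1}}. For every integer i with 2 ≤ i ≤ ⌊n/2⌋ + 2, dist(s r^{n-i}, 1) = ⌈n/2⌉(⌈n/2⌉-1) - 1 + ⌊n/2⌋(⌊n/2⌋-1) - 1 + ⌊n/2⌋ - i + 4. -/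
namespace LRX

/-- Letters of words in the generators. -/
inductive Letter
  | d
  | r
  | ri

/-- Lift of the transposition to the integers. -/
def Md (n : ℕ) (z : ℤ) : ℤ :=
  if (z : ZMod n) = 0 then z + 1 else if (z : ZMod n) = 1 then z - 1 else z

/-- Lift of a letter. -/
def M (n : ℕ) : Letter → ℤ → ℤ
  | .d, z => Md n z
  | .r, z => z + 1
  | .ri, z => z - 1

/-- Lift of a word. -/
def F (n : ℕ) : List Letter → ℤ → ℤ
  | [], z => z
  | c :: l, z => M n c (F n l z)

/-- Net rotation. -/
def N : List Letter → ℤ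
  | [] => 0
  | .d :: l => N l
  | .r :: l => N l + 1
  | .ri :: l => N l - 1

/-- Number of rotations. -/
def P : List Letter → ℕ
  | [] => 0
  | .d :: l => P l
  | .r :: l => P l + 1
  | .ri :: l => P l + 1

/-- Number of transpositions. -/
def K : List Letter → ℕ
  | [] => 0
  | .d :: l => K l + 1
  | .r :: l => K l
  | .ri :: l => K l

/-- The potential. -/
def Ph (n : ℕ) (z : ℤ) : ℤ := (z - 1) / (n : ℤ) - z

theorem F_append (n : ℕ) (A B : List Letter) (z : ℤ) : F n (A ++ B) z = F n A (F n B z) := by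
  induction A with
  | nil => rfl
  | cons c A ih => simp [F, ih]

theorem N_append (A B : List Letter) : N (A ++ B) = N A + N B := by
  induction A with
  | nil => simp [N]
  | cons c A ih => cases c <;> simp [N, ih] <;> ring

theorem P_append (A B : List Letter) : P (A ++ B) = P A + P B := by
  induction A with
  | nil => simp [P]
  | cons c A ih => cases c <;> simp [P, ih] <;> ring

theorem PK_length (A : List Letter) : P A + K A = A.length := by
  induction A with
  | nil => rfl
  | cons c A ih => cases c <;> simp [P, K] <;> omega

theorem one_ne (n : ℕ) (hn : 4 ≤ n) : (1 : ZMod n) ≠ 0 := by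
  have : Fact (1 < n) := ⟨by omega⟩
  exact one_ne_zero

theorem fl_dvd (n : ℕ) (hn : 4 ≤ n) (z : ℤ) (h : (z : ZMod n) = 0) :
    z / (n : ℤ) = (z - 1) / (n : ℤ) + 1 := by
  rw [ZMod.intCast_zmod_eq_zero_iff_dvd z n] at h
  obtain ⟨k, rfl⟩ := h
  have hp : (0 : ℤ) < n := by omega
  rw [Int.mul_ediv_cancel_left _ hp.ne']
  have : ((n : ℤ) * k - 1) / n = k - 1 := by
    rw [Int.ediv_eq_iff_of_pos hp]
    constructor <;> nlinarith
  omega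

theorem fl_not_dvd (n : ℕ) (hn : 4 ≤ n) (z : ℤ) (h : ¬ (z : ZMod n) = 0) :
    z / (n : ℤ) = (z - 1) / (n : ℤ) := by
  rw [ZMod.intCast_zmod_eq_zero_iff_dvd z n, Int.dvd_iff_emod_eq_zero] at h
  have hp : (0 : ℤ) < n := by omega
  symm
  have h1 := Int.emod_nonneg z hp.ne'
  have h2 := Int.emod_lt_of_pos z hp
  have h3 := Int.emod_add_mul_ediv z n
  rw [Int.ediv_eq_iff_of_pos hp]
  have : 0 < z % n := by omega
  constructor <;> nlinarith

theorem Ph_add (n : ℕ) (hn : 4 ≤ n) (z : ℤ) :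
    Ph n (z + 1) + 1 = Ph n z + if (z : ZMod n) = 0 then 1 else 0 := by
  unfold Ph
  split_ifs with h
  · have := fl_dvd n hn z h
    simp only [add_sub_cancel_right]; omega
  · have := fl_not_dvd n hn z h
    simp only [add_sub_cancel_right]; omega

theorem Ph_sub (n : ℕ) (hn : 4 ≤ n) (z : ℤ) :
    Ph n (z - 1) - 1 = Ph n z - if (z : ZMod n) = 1 then 1 else 0 := by
  have h := Ph_add n hn (z - 1)
  simp only [sub_add_cancel] at h
  have e : ((((z - 1 : ℤ)) : ZMod n) = 0) ↔ ((z : ZMod n) = 1) := by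
    push_cast; exact sub_eq_zero
  simp only [e] at h
  omega

theorem Ph_Md (n : ℕ) (hn : 4 ≤ n) (z : ℤ) : Ph n (Md n z) = Ph n z := by
  unfold Md
  split_ifs with h h'
  · have := Ph_add n hn z
    rw [if_pos h] at this; omega
  · have := Ph_sub n hn z
    rw [if_pos h'] at this; omega
  · rfl

/-- The potential is weakly decreasing, and collisions are only between neighbours. -/
theorem Ph_coll (n : ℕ) (hn : 4 ≤ n) (a b : ℤ) (hab : a < b) (h : Ph n a = Ph n b) :
    b = a + 1 ∧ (a : ZMod n) = 0 := by
  unfold Ph at h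
  have hp : (0 : ℤ) < n := by omega
  have h1 := Int.emod_nonneg (b - 1) hp.ne'
  have h2 := Int.emod_lt_of_pos (a - 1) hp
  have h3 := Int.emod_add_mul_ediv (a - 1) n
  have h4 := Int.emod_add_mul_ediv (b - 1) n
  have hn' : (4 : ℤ) ≤ n := by exact_mod_cast hn
  have hb : b = a + 1 := by
    by_contra hne
    have : a + 2 ≤ b := by omega
    nlinarith
  refine ⟨hb, ?_⟩
  by_contra hz
  have := fl_not_dvd n hn a hz
  subst hb
  simp only [add_sub_cancel_right] at h
  omega

theorem M_cast_inj (n : ℕ) (hn : 4 ≤ n) (c : Letter) (a b : ℤ)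
    (h : (M n c a : ZMod n) = (M n c b : ZMod n)) : (a : ZMod n) = (b : ZMod n) := by
  have := one_ne n hn
  cases c
  · simp only [M, Md] at h
    split_ifs at h <;> push_cast at h <;> simp_all
  · simpa [M] using h
  · simpa [M] using h

theorem F_cast_inj (n : ℕ) (hn : 4 ≤ n) (L : List Letter) (a b : ℤ)
    (h : (F n L a : ZMod n) = (F n L b : ZMod n)) : (a : ZMod n) = (b : ZMod n) := by
  induction L with
  | nil => exact h
  | cons c L ih => exact ih (M_cast_inj n hn c _ _ h)

theorem M_shift (n : ℕ) (c : Letter) (z k : ℤ) : M n c (z + n * k) = M n c z + n * k := by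
  cases c
  · simp only [M, Md]; push_cast; simp only [CharP.cast_eq_zero, zero_mul, add_zero]
    split_ifs <;> ring
  · simp only [M]; ring
  · simp only [M]; ring

theorem F_shift (n : ℕ) (L : List Letter) (z k : ℤ) : F n L (z + n * k) = F n L z + n * k := by
  induction L with
  | nil => rfl
  | cons c L ih => simp only [F, ih, M_shift]

/-- Rotations bound the variation of the potential. -/
theorem rot_bound (n : ℕ) (hn : 4 ≤ n) (L : List Letter) (y : Fin n → ℤ)
    (hy : Function.Injective fun x => (y x : ZMod n)) :
    ∑ x, |Ph n (F n L (y x)) + N L - Ph n (y x)| ≤ (P L : ℤ) := by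
  induction L with
  | nil => simp [F, N, P]
  | cons c L ih =>
    have hinj : ∀ x x', (F n L (y x) : ZMod n) = (F n L (y x') : ZMod n) → x = x' :=
      fun x x' h => hy (F_cast_inj n hn L _ _ h)
    have key : ∀ v : ZMod n, ∑ x, (if (F n L (y x) : ZMod n) = v then (1 : ℤ) else 0) ≤ 1 := by
      intro v
      rw [Finset.sum_boole]
      have : (Finset.univ.filter fun x => (F n L (y x) : ZMod n) = v).card ≤ 1 := by
        rw [Finset.card_le_one]
        intro a ha b hb
        simp only [Finset.mem_filter] at ha hb
        exact hinj a b (ha.2.trans hb.2.symm)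
      exact_mod_cast this
    cases c
    · simpa [F, M, N, P, Ph_Md n hn] using ih
    · simp only [F, M, N, P]
      calc _ ≤ ∑ x, (|Ph n (F n L (y x)) + N L - Ph n (y x)|
              + (if (F n L (y x) : ZMod n) = 0 then (1 : ℤ) else 0)) := by
            apply Finset.sum_le_sum
            intro x _
            have := Ph_add n hn (F n L (y x))
            have e : Ph n (F n L (y x) + 1) + (N L + 1) - Ph n (y x)
              = (Ph n (F n L (y x)) + N L - Ph n (y x))
                + (if (F n L (y x) : ZMod n) = 0 then (1 : ℤ) else 0) := by linarith
            rw [e]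
            refine (abs_add_le _ _).trans ?_
            gcongr
            split_ifs <;> simp
        _ ≤ _ := by
            rw [Finset.sum_add_distrib]; push_cast
            exact add_le_add ih (key 0)
    · simp only [F, M, N, P]
      calc _ ≤ ∑ x, (|Ph n (F n L (y x)) + N L - Ph n (y x)|
              + (if (F n L (y x) : ZMod n) = 1 then (1 : ℤ) else 0)) := by
            apply Finset.sum_le_sum
            intro x _
            have := Ph_sub n hn (F n L (y x))
            have e : Ph n (F n L (y x) - 1) + (N L - 1) - Ph n (y x)
              = (Ph n (F n L (y x)) + N L - Ph n (y x))
                - (if (F n L (y x) : ZMod n) = 1 then (1 : ℤ) else 0) := by linarith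
            rw [e]
            refine (abs_sub _ _).trans ?_
            gcongr
            split_ifs <;> simp
        _ ≤ _ := by
            rw [Finset.sum_add_distrib]; push_cast
            exact add_le_add ih (key 1)

theorem Md_flip (n : ℕ) (hn : 4 ≤ n) (a b : ℤ) (hab : a < b) (h : Md n b < Md n a) :
    (a : ZMod n) = 0 ∧ (b : ZMod n) = 1 := by
  have h1 := one_ne n hn
  unfold Md at h
  by_cases ha : (a : ZMod n) = 0
  · refine ⟨ha, ?_⟩
    rw [if_pos ha] at h
    split_ifs at h with h2 h3
    · omega
    · exact h3
    · omega
  · exfalso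
    rw [if_neg ha] at h
    by_cases ha1 : (a : ZMod n) = 1
    · rw [if_pos ha1] at h
      split_ifs at h <;> omega
    · rw [if_neg ha1] at h
      split_ifs at h with h2 h3
      · omega
      · have : b = a + 1 := by omega
        subst this
        push_cast at h3
        simp at h3
        exact ha h3
      · omega

/-- Transpositions bound the number of inversions. -/
theorem inv_bound (n : ℕ) (hn : 4 ≤ n) (L : List Letter) (y : Fin n → ℤ)
    (hy : Function.Injective fun x => (y x : ZMod n)) :
    (Finset.univ.filter fun q : Fin n × Fin n =>
      y q.1 < y q.2 ∧ F n L (y q.2) < F n L (y q.1)).card ≤ K L := by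
  induction L with
  | nil =>
    refine (Finset.card_eq_zero.mpr (Finset.filter_eq_empty_iff.mpr ?_)).le
    rintro q - ⟨h1, h2⟩
    simp only [F] at h2
    omega
  | cons c L ih =>
    have hinj : ∀ x x', (F n L (y x) : ZMod n) = (F n L (y x') : ZMod n) → x = x' :=
      fun x x' h => hy (F_cast_inj n hn L _ _ h)
    cases c
    · set S := Finset.univ.filter fun q : Fin n × Fin n =>
        y q.1 < y q.2 ∧ Md n (F n L (y q.2)) < Md n (F n L (y q.1)) with hS
      set S' := Finset.univ.filter fun q : Fin n × Fin n =>
        y q.1 < y q.2 ∧ F n L (y q.2) < F n L (y q.1) with hS'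
      have h1 : (S \ S').card ≤ 1 := by
        have hq : ∀ q ∈ S \ S', (F n L (y q.1) : ZMod n) = 0 ∧ (F n L (y q.2) : ZMod n) = 1 := by
          intro q hq
          simp only [hS, hS', Finset.mem_sdiff, Finset.mem_filter, Finset.mem_univ, true_and,
            not_and, not_lt] at hq
          obtain ⟨⟨h1, h2⟩, h3⟩ := hq
          refine Md_flip n hn _ _ (lt_of_le_of_ne (h3 h1) ?_) h2
          intro he
          have := hinj q.1 q.2 (by rw [he])
          rw [this] at h1
          omega
        rw [Finset.card_le_one]
        intro a ha b hb
        have ha := hq a ha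
        have hb := hq b hb
        exact Prod.ext (hinj _ _ (ha.1.trans hb.1.symm)) (hinj _ _ (ha.2.trans hb.2.symm))
      have h2 := Finset.card_le_card_sdiff_add_card (s := S) (t := S')
      change S.card ≤ K L + 1
      omega
    · simpa [F, M, K] using ih
    · simpa [F, M, K] using ih


/-- Sum of absolute values of distinct integers of the same parity. -/
theorem abs_sum_set (c : ℤ) : ∀ (k : ℕ) (S : Finset ℤ), S.card = k →
    (k : ℤ) ^ 2 - 1 ≤ 2 * ∑ b ∈ S, |c - 2 * b| ∧
    (¬ (2 : ℤ) ∣ c → (k : ℤ) ^ 2 ≤ 2 * ∑ b ∈ S, |c - 2 * b|) := by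
  intro k
  induction k using Nat.strong_induction_on with
  | _ k ih =>
    intro S hS
    match k, ih, hS with
    | 0, _, hS =>
      have : S = ∅ := Finset.card_eq_zero.mp hS
      subst this
      simp
    | 1, _, hS =>
      obtain ⟨b, rfl⟩ := Finset.card_eq_one.mp hS
      simp only [Finset.sum_singleton]
      refine ⟨by have := abs_nonneg (c - 2 * b); push_cast; omega, fun h => ?_⟩
      have : 0 < |c - 2 * b| := abs_pos.mpr (by omega)
      push_cast; omega
    | k + 2, ih, hS =>
      have hne : S.Nonempty := Finset.card_pos.mp (by omega)
      set a := S.min' hne with ha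
      set b := S.max' hne with hb
      have hsub : S ⊆ Finset.Icc a b := fun x hx =>
        Finset.mem_Icc.mpr ⟨Finset.min'_le S x hx, Finset.le_max' S x hx⟩
      have hcard := Finset.card_le_card hsub
      rw [Int.card_Icc, hS] at hcard
      have hab : (k : ℤ) + 1 ≤ b - a := by omega
      have hamem : a ∈ S := Finset.min'_mem S hne
      have hbmem : b ∈ S.erase a :=
        Finset.mem_erase.mpr ⟨by omega, Finset.max'_mem S hne⟩
      have hc2 : ((S.erase a).erase b).card = k := by
        rw [Finset.card_erase_of_mem hbmem, Finset.card_erase_of_mem hamem, hS]; omega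
      have hi := ih k (by omega) _ hc2
      rw [← Finset.add_sum_erase S _ hamem, ← Finset.add_sum_erase _ _ hbmem]
      have h1 : 2 * ((k : ℤ) + 1) ≤ |c - 2 * a| + |c - 2 * b| := by
        have h2 := le_abs_self (c - 2 * a)
        have h3 := neg_abs_le (c - 2 * b)
        omega
      push_cast
      constructor
      · nlinarith [hi.1]
      · intro h
        nlinarith [hi.2 h]

theorem abs_sum {ι : Type*} (c : ℤ) (T : Finset ι) (f : ι → ℤ) (hf : Set.InjOn f T) :
    (T.card : ℤ) ^ 2 - 1 ≤ 2 * ∑ x ∈ T, |c - 2 * f x| ∧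
    (¬ (2 : ℤ) ∣ c → (T.card : ℤ) ^ 2 ≤ 2 * ∑ x ∈ T, |c - 2 * f x|) := by
  classical
  have h := abs_sum_set c (T.card) (T.image f) (Finset.card_image_of_injOn hf)
  rw [Finset.sum_image hf] at h
  exact h

/-- Each class of tokens gets completely reversed. -/
theorem K_lower (n : ℕ) (hn : 4 ≤ n) (L : List Letter) (s : Fin n → ℤ) (ε : Fin n → ℤ)
    (hs : Function.Injective fun x => (s x : ZMod n))
    (hF : ∀ x, F n L (s x) = 1 - s x + n * ε x) :
    (Finset.univ.filter fun x => ε x = 0).card.choose 2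
      + (Finset.univ.filter fun x => ε x = 1).card.choose 2 ≤ K L := by
  classical
  refine le_trans ?_ (inv_bound n hn L s hs)
  have hsi : Function.Injective s := fun a b h => hs (by simp [h])
  set I := (Finset.univ.filter fun q : Fin n × Fin n =>
      s q.1 < s q.2 ∧ F n L (s q.2) < F n L (s q.1)) with hI
  have hcl : ∀ e : ℤ, (Finset.univ.filter fun x => ε x = e).card.choose 2
      ≤ (I.filter fun q => ε q.1 = e).card := by
    intro e
    set T := Finset.univ.filter fun x => ε x = e with hT
    have h1 : T.offDiag.card ≤ 2 * (I.filter fun q => ε q.1 = e).card := by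
      have : T.offDiag ⊆ (I.filter fun q => ε q.1 = e) ∪
          (I.filter fun q => ε q.1 = e).image Prod.swap := by
        rintro ⟨x, y⟩ hxy
        simp only [Finset.mem_offDiag, hT, Finset.mem_filter, Finset.mem_univ, true_and] at hxy
        obtain ⟨hx, hy, hne⟩ := hxy
        simp only [Finset.mem_union, Finset.mem_image, hI, Finset.mem_filter, Finset.mem_univ,
          true_and]
        rcases lt_or_gt_of_ne (fun h => hne (hsi h) : s x ≠ s y) with h | h
        · left
          refine ⟨⟨h, ?_⟩, hx⟩
          rw [hF, hF, hx, hy]; omega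
        · right
          refine ⟨(y, x), ⟨⟨h, ?_⟩, hy⟩, rfl⟩
          simp only
          rw [hF, hF, hx, hy]; omega
      have h2 := Finset.card_le_card this
      have h3 := Finset.card_union_le (I.filter fun q => ε q.1 = e)
        ((I.filter fun q => ε q.1 = e).image Prod.swap)
      have h4 := Finset.card_image_le (s := I.filter fun q => ε q.1 = e) (f := Prod.swap)
      omega
    rw [Finset.offDiag_card] at h1
    have h5 : T.card * T.card - T.card = T.card * (T.card - 1) := by
      rw [Nat.mul_sub, mul_one]
    rw [h5] at h1
    rw [Nat.choose_two_right]
    omega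
  have hd : Disjoint (I.filter fun q => ε q.1 = 0) (I.filter fun q => ε q.1 = 1) := by
    rw [Finset.disjoint_filter]
    intro q _ h; omega
  calc _ ≤ (I.filter fun q => ε q.1 = 0).card + (I.filter fun q => ε q.1 = 1).card :=
        add_le_add (hcl 0) (hcl 1)
    _ = ((I.filter fun q => ε q.1 = 0) ∪ (I.filter fun q => ε q.1 = 1)).card :=
        (Finset.card_union_of_disjoint hd).symm
    _ ≤ I.card := Finset.card_le_card (by
        intro q hq
        simp only [Finset.mem_union, Finset.mem_filter] at hq
        tauto)

theorem fl_refl (n : ℕ) (hn : 4 ≤ n) (s e : ℤ) :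
    Ph n s + Ph n (1 - s + n * e) = -2 - (n - 1) * e := by
  unfold Ph
  have hp : (0 : ℤ) < n := by omega
  have h : (1 - s + n * e - 1) / (n : ℤ) = -1 - (s - 1) / n + e := by
    rw [Int.ediv_eq_iff_of_pos hp]
    have h1 := Int.emod_nonneg (s - 1) hp.ne'
    have h2 := Int.emod_lt_of_pos (s - 1) hp
    have h3 := Int.emod_add_mul_ediv (s - 1) n
    constructor <;> nlinarith
  rw [h]; ring

/-- Bound on rotations by looking at the configuration at an intermediate time. -/
theorem P_lower (n : ℕ) (hn : 4 ≤ n) (A B : List Letter) (s : Fin n → ℤ) (ε : Fin n → ℤ)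
    (hs : Function.Injective fun x => (s x : ZMod n))
    (hF : ∀ x, F n (A ++ B) (s x) = 1 - s x + n * ε x) :
    ∑ x, |(N (A ++ B) - 2 - (n - 1) * ε x) - 2 * (Ph n (F n B (s x)) + N B)|
      ≤ (P (A ++ B) : ℤ) := by
  have h1 := rot_bound n hn B s hs
  have h2 := rot_bound n hn A (fun x => F n B (s x)) (fun a b h => hs (F_cast_inj n hn B _ _ h))
  rw [P_append, N_append]
  push_cast
  refine le_trans ?_ (add_le_add h2 h1)
  rw [← Finset.sum_add_distrib]
  apply Finset.sum_le_sum
  intro x _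
  have h3 := hF x
  rw [F_append] at h3
  rw [h3]
  have h4 := fl_refl n hn (s x) (ε x)
  refine le_trans (le_of_eq ?_) (abs_sub _ _)
  congr 1
  linarith

theorem arith_final (n k l p q : ℕ) (e : ℤ) (hkl : k + l = n) (hq : k.choose 2 + l.choose 2 ≤ q)
    (hp : (k : ℤ) ^ 2 + (l : ℤ) ^ 2 - e ≤ 2 * p) (he : e ≤ 2) (he1 : n % 2 = 0 → e ≤ 1) :
    n.choose 2 ≤ p + q := by
  subst hkl
  have hsq1 : ∀ d : ℤ, d ≤ -2 → 4 ≤ d * d := fun d h => by nlinarith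
  have hsq2 : ∀ d : ℤ, 2 ≤ d → 4 ≤ d * d := fun d h => by nlinarith
  have hc : ∀ a : ℕ, 2 * ((a.choose 2 : ℕ) : ℤ) = (a : ℤ) ^ 2 - a := by
    intro a
    have h1 := Nat.triangle_succ (a - 1)
    rcases a with _ | a
    · simp
    · have h2 : 2 * (a + 1).choose 2 = (a + 1) * a := by
        rw [Nat.choose_two_right, Nat.add_sub_cancel]
        rw [Nat.mul_div_cancel']
        rw [mul_comm]; exact (Nat.even_mul_succ_self a).two_dvd
      have : (2 : ℤ) * ((a + 1).choose 2 : ℕ) = (a + 1) * a := by exact_mod_cast h2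
      rw [this]; push_cast; ring
  have h1 := hc k
  have h2 := hc l
  have h3 := hc (k + l)
  zify
  zify at hq
  push_cast at h3
  obtain ⟨d, hd⟩ : ∃ d : ℤ, (k : ℤ) = l + d := ⟨k - l, by ring⟩
  have hkey : (k : ℤ) ^ 2 + l ^ 2 = 2 * (l * l + l * d) + d * d := by rw [hd]; ring
  have hkey2 : ((k : ℤ) + l) ^ 2 = 4 * (l * l + l * d) + d * d := by rw [hd]; ring
  have hkk : 2 * (((k + l).choose 2 : ℕ) : ℤ) = 4 * (l * l + l * d) + d * d - k - l := by
    rw [h3, hkey2]; ring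
  have hqq : 2 * ((k.choose 2 : ℕ) : ℤ) + 2 * ((l.choose 2 : ℕ) : ℤ)
      = 2 * (l * l + l * d) + d * d - k - l := by rw [h1, h2, ← hkey]; ring
  rw [hkey] at hp
  generalize (l : ℤ) * l + l * d = w at *
  rcases lt_trichotomy d 0 with hlt | rfl | hgt
  · rcases (show d = -1 ∨ d ≤ -2 by omega) with rfl | h
    · omega
    · have := hsq1 d h
      omega
  · simp only [mul_zero] at *
    have : e ≤ 1 := he1 (by omega)
    omega
  · rcases (show d = 1 ∨ 2 ≤ d by omega) with rfl | h
    · omega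
    · have := hsq2 d h
      omega


theorem exists_lift (n : ℕ) (L : List Letter)
    (hL : ∀ z : ℤ, (F n L z : ZMod n) = 1 - z) (x : ℤ) :
    ∃ s e : ℤ, (s : ZMod n) = x ∧ (e = 0 ∨ e = 1) ∧ F n L s = 1 - s + n * e := by
  have h : ((F n L x - (1 - x) : ℤ) : ZMod n) = 0 := by
    push_cast; rw [hL]; ring
  rw [ZMod.intCast_zmod_eq_zero_iff_dvd] at h
  obtain ⟨w, hw⟩ := h
  refine ⟨x + n * (-(w / 2)), w % 2, by push_cast; simp, by omega, ?_⟩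
  rw [F_shift]
  have h2 : w = w % 2 + 2 * (w / 2) := (Int.emod_add_mul_ediv w 2).symm
  have h3 : F n L x = 1 - x + n * w := by linarith
  rw [h3]
  generalize w / 2 = a at *
  generalize w % 2 = b at *
  rw [h2]; ring

/-- A time at which the two tokens in the window are a colliding pair of the same class. -/
def Bad (n : ℕ) (s ε : Fin n → ℤ) (B : List Letter) : Prop :=
  ∃ x x', (F n B (s x) : ZMod n) = 0 ∧ (F n B (s x') : ZMod n) = 1 ∧ ε x = ε x'

theorem good_case (n : ℕ) (hn : 4 ≤ n) (A B : List Letter) (s ε : Fin n → ℤ)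
    (hs : Function.Injective fun x => (s x : ZMod n))
    (he : ∀ x, ε x = 0 ∨ ε x = 1)
    (hF : ∀ x, F n (A ++ B) (s x) = 1 - s x + n * ε x)
    (hB : ¬ Bad n s ε B) : n.choose 2 ≤ P (A ++ B) + K (A ++ B) := by
  classical
  have hK := K_lower n hn (A ++ B) s ε hs hF
  have hP := P_lower n hn A B s ε hs hF
  set T0 := Finset.univ.filter fun x => ε x = 0 with hT0
  set T1 := Finset.univ.filter fun x => ε x = 1 with hT1
  have hd : Disjoint T0 T1 := by
    rw [hT0, hT1, Finset.disjoint_filter]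
    intro q _ h; omega
  have hu : T0 ∪ T1 = Finset.univ := by
    ext x
    simp only [hT0, hT1, Finset.mem_union, Finset.mem_filter, Finset.mem_univ, true_and, iff_true]
    exact he x
  have hcard : T0.card + T1.card = n := by
    rw [← Finset.card_union_of_disjoint hd, hu, Finset.card_univ, Fintype.card_fin]
  have hinj : ∀ e, Set.InjOn (fun x => Ph n (F n B (s x)) + N B)
      ((Finset.univ.filter fun x => ε x = e : Finset (Fin n)) : Set (Fin n)) := by
    intro e x hx y hy hxy
    simp only [Finset.coe_filter, Finset.mem_univ, true_and, Set.mem_ofPred_eq] at hx hy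
    have hxy' : Ph n (F n B (s x)) = Ph n (F n B (s y)) := by
      simpa using hxy
    by_contra hne
    have hF' : F n B (s x) ≠ F n B (s y) := fun h => hne (hs (F_cast_inj n hn B _ _ (by rw [h])))
    rcases lt_or_gt_of_ne hF' with h | h
    · obtain ⟨h1, h2⟩ := Ph_coll n hn _ _ h hxy'
      exact hB ⟨x, y, h2, by rw [h1]; push_cast; rw [h2]; ring, by rw [hx, hy]⟩
    · obtain ⟨h1, h2⟩ := Ph_coll n hn _ _ h hxy'.symm
      exact hB ⟨y, x, h2, by rw [h1]; push_cast; rw [h2]; ring, by rw [hx, hy]⟩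
  rw [← hu, Finset.sum_union hd] at hP
  have e0 : ∑ x ∈ T0, |(N (A ++ B) - 2 - (n - 1) * ε x) - 2 * (Ph n (F n B (s x)) + N B)|
      = ∑ x ∈ T0, |(N (A ++ B) - 2) - 2 * (Ph n (F n B (s x)) + N B)| := by
    apply Finset.sum_congr rfl
    intro x hx
    rw [(Finset.mem_filter.mp hx).2, mul_zero, sub_zero]
  have e1 : ∑ x ∈ T1, |(N (A ++ B) - 2 - (n - 1) * ε x) - 2 * (Ph n (F n B (s x)) + N B)|
      = ∑ x ∈ T1, |(N (A ++ B) - 2 - (n - 1)) - 2 * (Ph n (F n B (s x)) + N B)| := by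
    apply Finset.sum_congr rfl
    intro x hx
    rw [(Finset.mem_filter.mp hx).2, mul_one]
  rw [e0, e1] at hP
  have b0 := abs_sum (N (A ++ B) - 2) T0 _ (hinj 0)
  have b1 := abs_sum (N (A ++ B) - 2 - (n - 1)) T1 _ (hinj 1)
  by_cases hpar : n % 2 = 0
  · refine arith_final n _ _ _ _ 1 hcard hK ?_ (by norm_num) (fun _ => le_rfl)
    by_cases h0 : (2 : ℤ) ∣ N (A ++ B) - 2
    · have := b1.2 (by omega)
      linarith [b0.1]
    · have := b0.2 h0
      linarith [b1.1]
  · refine arith_final n _ _ _ _ 2 hcard hK ?_ le_rfl (fun h => absurd h hpar)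
    linarith [b0.1, b1.1]

theorem bad_const (n : ℕ) (hn : 4 ≤ n) (L : List Letter) (s ε : Fin n → ℤ)
    (hs : Function.Injective fun x => (s x : ZMod n))
    (hbad : ∀ A B, L = A ++ B → Bad n s ε B) :
    ∃ e0, ∀ B A, L = A ++ B → ∀ x, ((F n B (s x) : ZMod n) = 0 ∨ (F n B (s x) : ZMod n) = 1) →
      ε x = e0 := by
  have huniq : ∀ B x y, (F n B (s x) : ZMod n) = (F n B (s y) : ZMod n) → x = y :=
    fun B x y h => hs (F_cast_inj n hn B _ _ h)
  have h1 := one_ne n hn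
  obtain ⟨a, a', ha, ha', haa⟩ := hbad L [] (by simp)
  refine ⟨ε a, fun B => ?_⟩
  induction B with
  | nil =>
    intro A _ x hx
    rcases hx with hx | hx
    · rw [huniq [] x a (hx.trans ha.symm)]
    · rw [huniq [] x a' (hx.trans ha'.symm), haa]
  | cons c B ih =>
    intro A hA x hx
    have ih' := ih (A ++ [c]) (by simp [hA])
    obtain ⟨b, b', hb, hb', hbb⟩ := hbad A (c :: B) hA
    have hw : ε b = ε a := by
      cases c
      · apply ih'
        simp only [F, M, Md] at hb
        split_ifs at hb with g1 g2
        · exact Or.inl g1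
        · exact Or.inr g2
        · exact Or.inl hb
      · rw [hbb]
        apply ih'
        simp only [F, M] at hb'
        push_cast at hb'
        left
        simpa using hb'
      · apply ih'
        simp only [F, M] at hb
        push_cast at hb
        right
        exact sub_eq_zero.mp hb
    rcases hx with hx | hx
    · rw [huniq _ x b (hx.trans hb.symm), hw]
    · rw [huniq _ x b' (hx.trans hb'.symm), ← hbb, hw]

theorem unvisited (n : ℕ) (hn : 4 ≤ n) (L : List Letter) (z : ℤ)
    (hz : ∀ B A, L = A ++ B → ¬ ((F n B z : ZMod n) = 0 ∨ (F n B z : ZMod n) = 1)) :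
    ∀ B A, L = A ++ B → F n B z = z + N B ∧ Ph n (F n B z) + N B = Ph n z := by
  intro B
  induction B with
  | nil => intro A _; simp [F, N]
  | cons c B ih =>
    intro A hA
    have ih' := ih (A ++ [c]) (by simp [hA])
    have hz' := hz B (A ++ [c]) (by simp [hA])
    rw [not_or] at hz'
    cases c
    · simp only [F, M, N, Md, if_neg hz'.1, if_neg hz'.2]
      exact ih'
    · simp only [F, M, N]
      have := Ph_add n hn (F n B z)
      rw [if_neg hz'.1] at this
      omega
    · simp only [F, M, N]
      have := Ph_sub n hn (F n B z)
      rw [if_neg hz'.2] at this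
      omega

theorem bad_case (n : ℕ) (hn : 4 ≤ n) (L : List Letter) (s ε : Fin n → ℤ)
    (hs : Function.Injective fun x => (s x : ZMod n))
    (he : ∀ x, ε x = 0 ∨ ε x = 1)
    (hF : ∀ x, F n L (s x) = 1 - s x + n * ε x)
    (hbad : ∀ A B, L = A ++ B → Bad n s ε B) : n.choose 2 ≤ P L + K L := by
  classical
  obtain ⟨e0, h0⟩ := bad_const n hn L s ε hs hbad
  have hun : ∀ x, ε x ≠ e0 → F n L (s x) = s x + N L ∧ Ph n (F n L (s x)) + N L = Ph n (s x) :=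
    fun x hx => unvisited n hn L (s x) (fun B A hA h => hx (h0 B A hA x h)) L [] rfl
  have hK := K_lower n hn L s ε hs hF
  by_cases hall : ∀ x, ε x = e0
  · -- all tokens are in the same class
    have hc : ∀ e, e0 = e → (Finset.univ.filter fun x => ε x = e).card = n := by
      intro e h
      rw [Finset.filter_true_of_mem (fun x _ => (hall x).trans h), Finset.card_univ,
        Fintype.card_fin]
    have x0 : Fin n := ⟨0, by omega⟩
    rcases he x0 with h | h
    · rw [hc 0 ((hall x0).symm.trans h)] at hK; omega
    · rw [hc 1 ((hall x0).symm.trans h)] at hK; omega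
  · push Not at hall
    obtain ⟨z, hz⟩ := hall
    obtain ⟨hz1, hz2⟩ := hun z hz
    have hz3 := fl_refl n hn (s z) (ε z)
    rw [← hF z] at hz3
    have hz4 := hF z
    -- the odd token out belongs to class one
    have hez : ε z = 1 := by
      rcases he z with h | h
      · rw [h] at hz3 hz4
        simp only [mul_zero] at hz3 hz4
        exfalso
        omega
      · exact h
    have he0 : ∀ x, ε x = 0 ↔ ε x = e0 := by
      have : e0 = 0 := by
        obtain ⟨x, x', hx, -, -⟩ := hbad L [] (by simp)
        have := h0 [] L (by simp) x (Or.inl hx)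
        rcases he x with h | h
        · omega
        · omega
      intro x; rw [this]
    have huniq : ∀ x, ε x ≠ 0 → x = z := by
      intro x hx
      have hx1 : ε x = 1 := (he x).resolve_left hx
      have h1 := (hun x (fun h => hx ((he0 x).mpr h))).1
      have h2 := hF x
      rw [hx1] at h2
      rw [hez] at hz4
      apply hs
      have : s x = s z := by omega
      simp [this]
    have hT0 : (Finset.univ.filter fun x => ε x = 0) = Finset.univ.erase z := by
      ext x
      simp only [Finset.mem_filter, Finset.mem_univ, true_and, Finset.mem_erase, and_true]
      constructor
      · rintro h rfl; omega
      · intro h; by_contra h'; exact h (huniq x h')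
    have hcard : (Finset.univ.filter fun x => ε x = 0).card = n - 1 := by
      rw [hT0, Finset.card_erase_of_mem (Finset.mem_univ _), Finset.card_univ, Fintype.card_fin]
    rw [hcard] at hK
    have hchoose : n.choose 2 = (n - 1).choose 2 + (n - 1) := by
      obtain ⟨m, rfl⟩ : ∃ m, n = m + 1 := ⟨n - 1, by omega⟩
      rw [Nat.choose_succ_succ' m 1]
      simp [Nat.choose_one_right, add_comm]
    have hP := P_lower n hn L [] s ε hs (by simpa using hF)
    simp only [List.append_nil, N, F, add_zero] at hP
    set T0 := Finset.univ.filter fun x => ε x = 0 with hT0'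
    have hP' : ∑ x ∈ T0, |(N L - 2) - 2 * Ph n (s x)| ≤ (P L : ℤ) := by
      refine le_trans ?_ hP
      refine le_trans (le_of_eq ?_) (Finset.sum_le_sum_of_subset_of_nonneg
        (Finset.subset_univ T0) (fun _ _ _ => abs_nonneg _))
      apply Finset.sum_congr rfl
      intro x hx
      rw [(Finset.mem_filter.mp hx).2, mul_zero, sub_zero]
    have hN : N L = 1 - 2 * s z + n := by
      rw [hez] at hz4; omega
    have hPfin : ((n - 1 : ℕ) : ℤ) ≤ P L := by
      refine le_trans ?_ hP'
      by_cases hpar : n % 2 = 0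
      · rw [← hcard, Finset.card_eq_sum_ones]
        push_cast
        apply Finset.sum_le_sum
        intro x _
        have : N L - 2 - 2 * Ph n (s x) ≠ 0 := by omega
        have := abs_pos.mpr this
        omega
      · set Z := T0.filter fun x => N L - 2 - 2 * Ph n (s x) = 0 with hZ
        have hZc : Z.card ≤ 2 := by
          by_contra hc
          push Not at hc
          obtain ⟨a, ha, b, hb, c, hc, hab, hac, hbc⟩ := Finset.two_lt_card.mp hc
          have hsne : ∀ {a b}, a ≠ b → s a ≠ s b := fun h h' => h (hs (by simp [h']))
          have q : ∀ {a b}, a ∈ Z → b ∈ Z → s a < s b → s b = s a + 1 := by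
            intro a b ha hb hlt
            have ha := (Finset.mem_filter.mp ha).2
            have hb := (Finset.mem_filter.mp hb).2
            exact (Ph_coll n hn _ _ hlt (by omega)).1
          have h1 := hsne hab
          have h2 := hsne hac
          have h3 := hsne hbc
          have q1 := q ha hb
          have q2 := q ha hc
          have q3 := q hb hc
          have q4 := q hb ha
          have q5 := q hc ha
          have q6 := q hc hb
          omega
        have hsd : (T0 \ Z).card + Z.card = T0.card :=
          Finset.card_sdiff_add_card_eq_card (Finset.filter_subset _ _)
        have hle : ((T0 \ Z).card : ℤ) * 2 ≤ ∑ x ∈ T0, |(N L - 2) - 2 * Ph n (s x)| := by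
          refine le_trans ?_ (Finset.sum_le_sum_of_subset_of_nonneg
            (Finset.sdiff_subset (s := T0) (t := Z)) (fun _ _ _ => abs_nonneg _))
          rw [← smul_eq_mul, natCast_zsmul]
          apply Finset.card_nsmul_le_sum
          intro x hx
          have h1 : ¬ (N L - 2 - 2 * Ph n (s x) = 0) := by
            intro h
            rw [Finset.mem_sdiff] at hx
            exact hx.2 (Finset.mem_filter.mpr ⟨hx.1, h⟩)
          rcases abs_choice (N L - 2 - 2 * Ph n (s x)) with h | h <;>
            have := abs_pos.mpr h1 <;> omega
        omega
    omega

theorem lower_aux (n : ℕ) (hn : 4 ≤ n) (L : List Letter)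
    (hL : ∀ z : ℤ, (F n L z : ZMod n) = 1 - z) : n.choose 2 ≤ L.length := by
  rw [← PK_length]
  choose s e hs he hF using fun x : Fin n => exists_lift n L hL (x.val : ℤ)
  have hinj : Function.Injective fun x => (s x : ZMod n) := by
    intro a b h
    simp only [hs] at h
    push_cast at h
    rw [ZMod.natCast_eq_natCast_iff'] at h
    rw [Nat.mod_eq_of_lt a.2, Nat.mod_eq_of_lt b.2] at h
    exact Fin.ext h
  by_cases hbad : ∀ A B, L = A ++ B → Bad n s e B
  · exact bad_case n hn L s e hinj he hF hbad
  · push Not at hbad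
    obtain ⟨A, B, rfl, hB⟩ := hbad
    exact good_case n hn A B s e hinj he hF hB


theorem two_le {n : ℕ} (hn : 4 ≤ n) : 2 ≤ n := le_trans (by norm_num) hn

theorem perm_apply_inv {n : ℕ} (g : Equiv.Perm (Fin n)) (x : Fin n) : g (g⁻¹ x) = x := by
  rw [← Equiv.Perm.mul_apply, mul_inv_cancel]; rfl

/-- Residue of an element of `Fin n`. -/
def ph (n : ℕ) (x : Fin n) : ZMod n := ((x.val : ℕ) : ZMod n)

theorem ph_inj (n : ℕ) : Function.Injective (ph n) := by
  intro a b h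
  unfold ph at h
  rw [ZMod.natCast_eq_natCast_iff'] at h
  rw [Nat.mod_eq_of_lt a.2, Nat.mod_eq_of_lt b.2] at h
  exact Fin.ext h

theorem ph_rot (n : ℕ) (hn : 4 ≤ n) (x : Fin n) : ph n (finRotate n x) = ph n x + 1 := by
  obtain ⟨m, rfl⟩ : ∃ m, n = m + 1 := ⟨n - 1, by omega⟩
  unfold ph
  rcases eq_or_ne x (Fin.last m) with rfl | h
  · rw [finRotate_last]
    have : ((m + 1 : ℕ) : ZMod (m + 1)) = 0 := ZMod.natCast_self _
    push_cast at this
    simp [this]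
  · rw [coe_finRotate_of_ne_last h]
    push_cast; rfl

theorem ph_rot_inv (n : ℕ) (hn : 4 ≤ n) (x : Fin n) :
    ph n ((finRotate n)⁻¹ x) = ph n x - 1 := by
  have := ph_rot n hn ((finRotate n)⁻¹ x)
  rw [perm_apply_inv] at this
  rw [this]; ring

theorem ph_rot_zpow (n : ℕ) (hn : 4 ≤ n) (k : ℤ) (x : Fin n) :
    ph n (((finRotate n) ^ k) x) = ph n x + k := by
  induction k using Int.induction_on generalizing x with
  | zero => simp
  | succ k ih =>
    rw [zpow_add_one, Equiv.Perm.mul_apply, ih, ph_rot n hn]; push_cast; ring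
  | pred k ih =>
    rw [zpow_sub_one, Equiv.Perm.mul_apply, ih, ph_rot_inv n hn]; push_cast; ring

theorem ph_delta (n : ℕ) (hn : 4 ≤ n) (z : ℤ) (x : Fin n) (hx : ph n x = z) :
    ph n (delta n (two_le hn) x) = (Md n z : ZMod n) := by
  have h0 : ph n ⟨0, by omega⟩ = 0 := by simp [ph]
  have h1 : ph n ⟨1, by omega⟩ = 1 := by simp [ph]
  unfold delta Md
  split_ifs with h h'
  · have : x = ⟨0, by omega⟩ := ph_inj n (by rw [hx, h, h0])
    rw [this, Equiv.swap_apply_left, h1]; push_cast; rw [h]; ring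
  · have : x = ⟨1, by omega⟩ := ph_inj n (by rw [hx, h', h1])
    rw [this, Equiv.swap_apply_right, h0]; push_cast; rw [h']; ring
  · rw [Equiv.swap_apply_of_ne_of_ne, hx]
    · rintro rfl; exact h (by rw [← hx, h0])
    · rintro rfl; exact h' (by rw [← hx, h1])

theorem to_letters (n : ℕ) (hn : 4 ≤ n) (l : List (Equiv.Perm (Fin n)))
    (hl : ∀ x ∈ l, x ∈ gens n (two_le hn)) :
    ∃ L : List Letter, L.length = l.length ∧
      ∀ (z : ℤ) (x : Fin n), ph n x = z → ph n (l.prod x) = (F n L z : ZMod n) := by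
  induction l with
  | nil => exact ⟨[], rfl, fun z x h => by simpa [F] using h⟩
  | cons g l ih =>
    obtain ⟨L, hlen, hL⟩ := ih (fun x hx => hl x (List.mem_cons_of_mem _ hx))
    have hg := hl g List.mem_cons_self
    simp only [gens, Set.mem_insert_iff, Set.mem_singleton_iff] at hg
    rcases hg with rfl | rfl | rfl
    · refine ⟨.d :: L, by simp [hlen], fun z x h => ?_⟩
      rw [List.prod_cons, Equiv.Perm.mul_apply]
      exact ph_delta n hn _ _ (hL z x h)
    · refine ⟨.r :: L, by simp [hlen], fun z x h => ?_⟩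
      rw [List.prod_cons, Equiv.Perm.mul_apply, ph_rot n hn, hL z x h]
      simp [F, M]
    · refine ⟨.ri :: L, by simp [hlen], fun z x h => ?_⟩
      rw [List.prod_cons, Equiv.Perm.mul_apply, ph_rot_inv n hn, hL z x h]
      simp [F, M]

theorem exists_ph (n : ℕ) (hn : 4 ≤ n) (z : ℤ) : ∃ x, ph n x = z := by
  have hp : (0 : ℤ) < n := by omega
  have h1 := Int.emod_nonneg z hp.ne'
  have h2 := Int.emod_lt_of_pos z hp
  refine ⟨⟨(z % n).toNat, by omega⟩, ?_⟩
  unfold ph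
  have : (((z % n).toNat : ℕ) : ZMod n) = (((z % n).toNat : ℤ) : ZMod n) := by push_cast; rfl
  simp only
  rw [this, Int.toNat_of_nonneg h1, ZMod.intCast_mod]

/-- Reflections of the circle. -/
def IsRefl (n : ℕ) (c : ℤ) (g : Equiv.Perm (Fin n)) : Prop := ∀ x, ph n (g x) = c - ph n x

theorem IsRefl.unique {n : ℕ} {c : ℤ} {g h : Equiv.Perm (Fin n)} (hg : IsRefl n c g)
    (hh : IsRefl n c h) : g = h := by
  ext1 x; exact ph_inj n (by rw [hg, hh])

theorem lower (n : ℕ) (hn : 4 ≤ n) (g : Equiv.Perm (Fin n)) (hg : IsRefl n 1 g)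
    (l : List (Equiv.Perm (Fin n))) (hl : ∀ x ∈ l, x ∈ gens n (two_le hn)) (h : l.prod = g) :
    n.choose 2 ≤ l.length := by
  obtain ⟨L, hlen, hL⟩ := to_letters n hn l hl
  rw [← hlen]
  apply lower_aux n hn L
  intro z
  obtain ⟨x, hx⟩ := exists_ph n hn z
  rw [← hL z x hx, h, hg, hx]
  simp

theorem rev_refl (n : ℕ) (x : Fin n) : ph n (Fin.revPerm x) = -1 - ph n x := by
  unfold ph
  rw [Fin.revPerm_apply, Fin.val_rev]
  have := x.2
  rw [Nat.cast_sub (by omega)]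
  push_cast
  simp
  ring

theorem target_refl (n : ℕ) (hn : 4 ≤ n) (i : ℕ) (hi2 : i ≤ n / 2 + 2) :
    IsRefl n (i - 1) ((((Fin.revPerm : Equiv.Perm (Fin n)) * (finRotate n) ^ (n - i))⁻¹)) := by
  have h : ∀ y, ph n (((Fin.revPerm : Equiv.Perm (Fin n)) * (finRotate n) ^ (n - i)) y)
      = i - 1 - ph n y := by
    intro y
    have := ph_rot_zpow n hn ((n - i : ℕ) : ℤ) y
    rw [zpow_natCast] at this
    rw [Equiv.Perm.mul_apply, rev_refl, this]
    rw [Nat.cast_sub (by omega)]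
    push_cast
    simp
    ring
  intro x
  have := h ((((Fin.revPerm : Equiv.Perm (Fin n)) * (finRotate n) ^ (n - i))⁻¹) x)
  rw [perm_apply_inv] at this
  rw [this]; push_cast; ring

/-- Existence of a word of given length. -/
def HasWord (n : ℕ) (hn : 2 ≤ n) (g : Equiv.Perm (Fin n)) (d : ℕ) : Prop :=
  ∃ l : List (Equiv.Perm (Fin n)), (∀ x ∈ l, x ∈ gens n hn) ∧ l.prod = g ∧ l.length = d

theorem HasWord.mul {n : ℕ} {hn : 2 ≤ n} {g h : Equiv.Perm (Fin n)} {a b : ℕ}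
    (hg : HasWord n hn g a) (hh : HasWord n hn h b) : HasWord n hn (g * h) (a + b) := by
  obtain ⟨l, h1, h2, h3⟩ := hg
  obtain ⟨l', h1', h2', h3'⟩ := hh
  refine ⟨l ++ l', ?_, by simp [h2, h2'], by simp [h3, h3']⟩
  intro x hx
  rcases List.mem_append.mp hx with h | h
  · exact h1 x h
  · exact h1' x h

theorem HasWord.pow {n : ℕ} {hn : 2 ≤ n} {g : Equiv.Perm (Fin n)} {a : ℕ}
    (hg : HasWord n hn g a) (k : ℕ) : HasWord n hn (g ^ k) (a * k) := by
  induction k with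
  | zero => exact ⟨[], by simp, by simp, by simp⟩
  | succ k ih => rw [pow_succ, mul_add, mul_one]; exact ih.mul hg

theorem hasWord_d (n : ℕ) (hn : 2 ≤ n) : HasWord n hn (delta n hn) 1 :=
  ⟨[delta n hn], by simp [gens], by simp, rfl⟩

theorem hasWord_r (n : ℕ) (hn : 2 ≤ n) : HasWord n hn (finRotate n) 1 :=
  ⟨[finRotate n], by simp [gens], by simp, rfl⟩

theorem hasWord_ri (n : ℕ) (hn : 2 ≤ n) : HasWord n hn (finRotate n)⁻¹ 1 :=
  ⟨[(finRotate n)⁻¹], by simp [gens], by simp, rfl⟩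

theorem delta_inv (n : ℕ) (hn : 2 ≤ n) : (delta n hn)⁻¹ = delta n hn := by
  unfold delta; exact Equiv.swap_inv _ _

theorem HasWord.inv {n : ℕ} {hn : 2 ≤ n} {g : Equiv.Perm (Fin n)} {a : ℕ}
    (hg : HasWord n hn g a) : HasWord n hn g⁻¹ a := by
  obtain ⟨l, h1, h2, h3⟩ := hg
  refine ⟨(l.map fun x => x⁻¹).reverse, ?_, ?_, by simp [h3]⟩
  · intro x hx
    simp only [List.mem_reverse, List.mem_map] at hx
    obtain ⟨y, hy, rfl⟩ := hx
    have := h1 y hy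
    simp only [gens, Set.mem_insert_iff, Set.mem_singleton_iff] at this ⊢
    rcases this with rfl | rfl | rfl
    · left; exact delta_inv n hn
    · right; right; rfl
    · right; left; simp
  · rw [← h2, List.prod_inv_reverse]

/-- Mirror images of words. -/
theorem HasWord.conj {n : ℕ} (hn : 4 ≤ n) {g J : Equiv.Perm (Fin n)} {a : ℕ}
    (hJ : IsRefl n 1 J) (hg : HasWord n (two_le hn) g a) :
    HasWord n (two_le hn) (J * g * J⁻¹) a := by
  have hd : J * delta n (two_le hn) * J⁻¹ = delta n (two_le hn) := by
    have h0 : ph n ⟨0, by omega⟩ = 0 := by simp [ph]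
    have h1 : ph n ⟨1, by omega⟩ = 1 := by simp [ph]
    have j0 : J ⟨0, by omega⟩ = ⟨1, by omega⟩ := ph_inj n (by rw [hJ, h0, h1]; simp)
    have j1 : J ⟨1, by omega⟩ = ⟨0, by omega⟩ := ph_inj n (by rw [hJ, h0, h1]; simp)
    unfold delta
    rw [← Equiv.swap_apply_apply, j0, j1, Equiv.swap_comm]
  have hr : J * finRotate n * J⁻¹ = (finRotate n)⁻¹ := by
    rw [mul_inv_eq_iff_eq_mul]
    ext1 x
    apply ph_inj n
    rw [Equiv.Perm.mul_apply, Equiv.Perm.mul_apply, hJ, ph_rot n hn, ph_rot_inv n hn, hJ]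
    ring
  obtain ⟨l, h1, h2, h3⟩ := hg
  refine ⟨l.map (MulAut.conj J), ?_, ?_, by simp [h3]⟩
  · intro x hx
    rw [List.mem_map] at hx
    obtain ⟨y, hy, rfl⟩ := hx
    have := h1 y hy
    simp only [gens, Set.mem_insert_iff, Set.mem_singleton_iff] at this ⊢
    rw [MulAut.conj_apply]
    rcases this with rfl | rfl | rfl
    · left; exact hd
    · right; right; exact hr
    · right; left
      have e : (J * finRotate n * J⁻¹)⁻¹ = finRotate n := by rw [hr, inv_inv]
      calc J * (finRotate n)⁻¹ * J⁻¹ = (J * finRotate n * J⁻¹)⁻¹ := by group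
        _ = finRotate n := e
  · rw [← map_list_prod, h2, MulAut.conj_apply]

/-- Reversal of the block of positions `0, …, k-1`. -/
def IsBlock (n k : ℕ) (g : Equiv.Perm (Fin n)) : Prop :=
  ∀ (x : Fin n) (z : ℤ), ph n x = z →
    ((0 ≤ z → z < k → ph n (g x) = k - 1 - ph n x) ∧ (k ≤ z → z < n → g x = x))

theorem sweep_zero (n : ℕ) (hn : 4 ≤ n) (k : ℕ) (x : Fin n) (hx : ph n x = 0) :
    ((delta n (two_le hn) * finRotate n) ^ k) x = x := by
  induction k with
  | zero => rfl
  | succ k ih =>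
    have h : (delta n (two_le hn) * finRotate n) x = x := by
      apply ph_inj n
      rw [Equiv.Perm.mul_apply, ph_delta n hn 1 _ (by rw [ph_rot n hn, hx]; simp)]
      have := one_ne n hn
      simp [Md, this, hx]
    rw [pow_succ, Equiv.Perm.mul_apply, h, ih]

theorem cast_ne (n : ℕ) (a b : ℤ) (h1 : a < b) (h2 : b < a + n) :
    (a : ZMod n) ≠ (b : ZMod n) := by
  intro h
  have h3 : ((b - a : ℤ) : ZMod n) = 0 := by push_cast; rw [h]; ring
  rw [ZMod.intCast_zmod_eq_zero_iff_dvd] at h3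
  have := Int.le_of_dvd (by omega) h3
  omega

theorem sweep_one (n : ℕ) (hn : 4 ≤ n) (k : ℕ) (hk : k + 2 ≤ n) (x : Fin n) (hx : ph n x = 1) :
    ph n (((delta n (two_le hn) * finRotate n) ^ k) x) = ((k + 1 : ℤ) : ZMod n) := by
  induction k with
  | zero => simpa using hx
  | succ k ih =>
    rw [pow_succ', Equiv.Perm.mul_apply, Equiv.Perm.mul_apply]
    rw [ph_delta n hn (k + 2 : ℤ) _ (by rw [ph_rot n hn, ih (by omega)]; push_cast; ring)]
    have h0 := cast_ne n 0 (k + 2) (by omega) (by omega)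
    have h1 := cast_ne n 1 (k + 2) (by omega) (by omega)
    rw [Md, if_neg (by simpa using h0.symm), if_neg (by simpa using h1.symm)]
    push_cast; ring

theorem swap_word (n : ℕ) (hn : 4 ≤ n) (k : ℕ) (hk : k + 2 ≤ n) (a b : Fin n)
    (ha : ph n a = 0) (hb : ph n b = ((k + 1 : ℤ) : ZMod n)) :
    HasWord n (two_le hn) (Equiv.swap a b) (4 * k + 1) := by
  have hn2 : 2 ≤ n := by omega
  have h0 : ph n ⟨0, by omega⟩ = 0 := by simp [ph]
  have h1 : ph n ⟨1, by omega⟩ = 1 := by simp [ph]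
  have w := ((hasWord_d n hn2).mul (hasWord_r n hn2)).pow k
  have w2 := (w.mul (hasWord_d n hn2)).mul w.inv
  have e : (delta n hn2 * finRotate n) ^ k * delta n hn2 * ((delta n hn2 * finRotate n) ^ k)⁻¹
      = Equiv.swap a b := by
    have := Equiv.swap_apply_apply ((delta n hn2 * finRotate n) ^ k) ⟨0, by omega⟩ ⟨1, by omega⟩
    change _ = _ * delta n hn2 * _ at this
    rw [← this, sweep_zero n hn k _ h0]
    congr 1
    · exact ph_inj n (by rw [h0, ha])
    · exact ph_inj n (by rw [sweep_one n hn k hk _ h1, hb])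
  rw [e] at w2
  convert w2 using 1
  ring

/-- The spiral. -/
theorem spiral (n : ℕ) (hn : 4 ≤ n) (k : ℕ) (hk2 : 2 ≤ k) (hk : k < n) :
    ∃ g, IsBlock n k g ∧
      HasWord n (two_le hn) (g * (finRotate n) ^ ((k / 2 : ℕ) - 1 : ℤ)) (k * (k - 1) - 1) := by
  induction k using Nat.strong_induction_on with
  | _ k ih =>
    -- endpoints of the block
    obtain ⟨a, ha⟩ := exists_ph n hn 0
    obtain ⟨b, hb⟩ := exists_ph n hn (k - 1)
    have hab : a ≠ b := by
      rintro rfl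
      exact cast_ne n 0 (k - 1) (by omega) (by omega) (ha.symm.trans hb)
    have hsw := swap_word n hn (k - 2) (by omega) a b (by simpa using ha)
      (by rw [hb]; congr 1; omega)
    have hax : ∀ (x : Fin n) (z : ℤ), ph n x = z → 0 < z → z < n → x ≠ a := by
      rintro x z hx h1 h2 rfl
      exact cast_ne n 0 z h1 (by omega) (ha.symm.trans hx)
    have hbx1 : ∀ (x : Fin n) (z : ℤ), ph n x = z → 0 ≤ z → z < k - 1 → x ≠ b := by
      rintro x z hx h1 h2 rfl
      exact cast_ne n z (k - 1) h2 (by omega) (hx.symm.trans hb)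
    have hbx2 : ∀ (x : Fin n) (z : ℤ), ph n x = z → k ≤ z → z < n → x ≠ b := by
      rintro x z hx h1 h2 rfl
      exact cast_ne n (k - 1) z (by omega) (by omega) (hb.symm.trans hx)
    rcases (show k = 2 ∨ k = 3 ∨ 4 ≤ k by omega) with h | h | h
    · -- size two
      refine ⟨Equiv.swap a b, ?_, ?_⟩
      · intro x z hx
        constructor
        · intro h1 h2
          rcases (show z = 0 ∨ z = 1 by omega) with rfl | rfl
          · have : x = a := ph_inj n (by rw [hx, ha])
            rw [this, Equiv.swap_apply_left, ha, hb]; push_cast; ring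
          · have : x = b := ph_inj n (by rw [hx, hb]; subst h; norm_num)
            rw [this, Equiv.swap_apply_right, ha, hb]; push_cast; ring
        · intro h1 h2
          exact Equiv.swap_apply_of_ne_of_ne (hax x z hx (by omega) h2) (hbx2 x z hx h1 h2)
      · subst h
        simpa using hsw
    · refine ⟨Equiv.swap a b, ?_, ?_⟩
      · intro x z hx
        constructor
        · intro h1 h2
          rcases (show z = 0 ∨ z = 1 ∨ z = 2 by omega) with rfl | rfl | rfl
          · have : x = a := ph_inj n (by rw [hx, ha])
            rw [this, Equiv.swap_apply_left, ha, hb]; push_cast; ring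
          · rw [Equiv.swap_apply_of_ne_of_ne (hax x 1 hx (by omega) (by omega))
              (hbx1 x 1 hx (by omega) (by omega)), hx, h]
            push_cast; ring
          · have : x = b := ph_inj n (by rw [hx, hb]; subst h; norm_num)
            rw [this, Equiv.swap_apply_right, ha, hb]; push_cast; ring
        · intro h1 h2
          exact Equiv.swap_apply_of_ne_of_ne (hax x z hx (by omega) h2) (hbx2 x z hx h1 h2)
      · subst h
        simpa using hsw
    · obtain ⟨g, hg, hw⟩ := ih (k - 2) (by omega) (by omega) (by omega)
      refine ⟨Equiv.swap a b * (finRotate n * g * (finRotate n)⁻¹), ?_, ?_⟩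
      · intro x z hx
        have hy : ph n ((finRotate n)⁻¹ x) = ((z - 1 : ℤ) : ZMod n) := by
          rw [ph_rot_inv n hn, hx]; push_cast; rfl
        have hgy := hg _ _ hy
        have hfix : g ((finRotate n)⁻¹ x) = (finRotate n)⁻¹ x →
            (finRotate n * g * (finRotate n)⁻¹) x = x := by
          intro h
          rw [Equiv.Perm.mul_apply, Equiv.Perm.mul_apply, h, perm_apply_inv]
        constructor
        · intro h1 h2
          rcases (show z = 0 ∨ z = k - 1 ∨ (1 ≤ z ∧ z ≤ k - 2) by omega) with rfl | rfl | ⟨h3, h4⟩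
          · have hxa : x = a := ph_inj n (by rw [hx, ha])
            have hy' : ph n ((finRotate n)⁻¹ x) = ((n - 1 : ℤ) : ZMod n) := by
              rw [hy]; push_cast; simp
            rw [Equiv.Perm.mul_apply, hfix ((hg _ _ hy').2 (by omega) (by omega)), hxa,
              Equiv.swap_apply_left, ha, hb]
            push_cast; ring
          · have hxb : x = b := ph_inj n (by rw [hx, hb])
            rw [Equiv.Perm.mul_apply, hfix (hgy.2 (by omega) (by omega)), hxb,
              Equiv.swap_apply_right, ha, hb]
            push_cast; ring
          · have hv : ph n ((finRotate n * g * (finRotate n)⁻¹) x) = ((k - 1 - z : ℤ) : ZMod n) := by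
              rw [Equiv.Perm.mul_apply, Equiv.Perm.mul_apply, ph_rot n hn,
                hgy.1 (by omega) (by omega), hy, Nat.cast_sub (by omega)]
              push_cast; ring
            rw [Equiv.Perm.mul_apply, Equiv.swap_apply_of_ne_of_ne
              (hax _ _ hv (by omega) (by omega)) (hbx1 _ _ hv (by omega) (by omega)), hv, hx]
            push_cast; ring
        · intro h1 h2
          rw [Equiv.Perm.mul_apply, hfix (hgy.2 (by omega) (by omega))]
          exact Equiv.swap_apply_of_ne_of_ne (hax x z hx (by omega) h2) (hbx2 x z hx h1 h2)
      · have w := (hsw.mul (hasWord_r n (two_le hn))).mul hw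
        convert w using 1
        · have e : (finRotate n) ^ ((k / 2 : ℕ) - 1 : ℤ)
              = finRotate n * (finRotate n) ^ (((k - 2) / 2 : ℕ) - 1 : ℤ) := by
            rw [← zpow_one_add]; congr 1; omega
          rw [e]; group
        · obtain ⟨j, rfl⟩ : ∃ j, k = j + 4 := ⟨k - 4, by omega⟩
          have e1 : j + 4 - 1 = j + 3 := by omega
          have e2 : j + 4 - 2 = j + 2 := by omega
          have e3 : j + 2 - 1 = j + 1 := by omega
          rw [e1, e2, e3]
          have : 1 ≤ (j + 2) * (j + 1) := Nat.mul_pos (by omega) (by omega)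
          have e4 : (j + 4) * (j + 3) = (j + 2) * (j + 1) + 4 * (j + 2) + 2 := by ring
          omega

theorem exists_refl (n : ℕ) (hn : 4 ≤ n) (c : ℤ) : ∃ J : Equiv.Perm (Fin n), IsRefl n c J := by
  refine ⟨(finRotate n) ^ (c + 1) * Fin.revPerm, fun x => ?_⟩
  rw [Equiv.Perm.mul_apply, ph_rot_zpow n hn, rev_refl]
  push_cast; ring

theorem two_spirals (n : ℕ) (hn : 4 ≤ n) (k l : ℕ) (hk : 2 ≤ k) (hl : 2 ≤ l) (hkl : k + l = n) :
    ∃ g, IsRefl n (k + 1 + (l / 2 : ℕ) - (k / 2 : ℕ)) g ∧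
      HasWord n (two_le hn) g (k * (k - 1) - 1 + 2 + (l * (l - 1) - 1)) := by
  obtain ⟨J, hJ⟩ := exists_refl n hn 1
  obtain ⟨g, hg, hgw⟩ := spiral n hn k hk (by omega)
  obtain ⟨h, hh, hhw⟩ := spiral n hn l hl (by omega)
  have w := (hgw.inv.mul ((hasWord_ri n (two_le hn)).pow 2)).mul (hhw.conj hn hJ)
  refine ⟨_, ?_, w⟩
  intro x
  rw [Equiv.Perm.mul_apply, Equiv.Perm.mul_apply, Equiv.Perm.mul_apply, Equiv.Perm.mul_apply,
    Equiv.Perm.mul_apply]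
  set el : ℤ := ((l / 2 : ℕ) - 1 : ℤ) with hel
  set ek : ℤ := ((k / 2 : ℕ) - 1 : ℤ) with hek
  have hJx : ph n (J⁻¹ x) = 1 - ph n x := by
    have := hJ (J⁻¹ x)
    rw [perm_apply_inv] at this
    rw [this]; push_cast; ring
  have hw := ph_rot_zpow n hn el (J⁻¹ x)
  set y := ((finRotate n) ^ el) (J⁻¹ x) with hy
  rw [hJx] at hw
  obtain ⟨z, hz1, hz2, hz⟩ : ∃ z : ℤ, 0 ≤ z ∧ z < n ∧ ph n y = z :=
    ⟨y.val, by omega, by have := y.2; omega, by unfold ph; push_cast; rfl⟩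
  obtain ⟨q, hq⟩ := exists_ph n hn (z - l)
  have hkl0 : (k : ZMod n) + l = 0 := by
    rw [← Nat.cast_add, hkl, ZMod.natCast_self]
  have hp : ph n (((finRotate n)⁻¹ ^ 2) (J (h y))) = 1 - ph n (h y) - 2 := by
    rw [pow_two, Equiv.Perm.mul_apply, ph_rot_inv n hn, ph_rot_inv n hn, hJ]
    push_cast; ring
  have hgq : ((finRotate n)⁻¹ ^ 2) (J (h y)) = g q := by
    apply ph_inj n
    rw [hp]
    rcases lt_or_ge z (l : ℤ) with hlt | hge
    · have hq' : ph n q = ((z + k : ℤ) : ZMod n) := by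
        rw [hq]; push_cast; linear_combination -hkl0
      rw [(hg q _ hq').2 (by omega) (by omega), (hh y z hz).1 hz1 hlt, hq, hz]
      push_cast; ring
    · rw [(hg q _ hq).1 (by omega) (by omega), (hh y z hz).2 hge hz2, hq, hz]
      push_cast; linear_combination -hkl0
  rw [hgq]
  have e : (g * (finRotate n) ^ ek)⁻¹ (g q) = ((finRotate n) ^ (-ek)) q := by
    rw [← Equiv.Perm.mul_apply]
    congr 1
    group
  rw [e, ph_rot_zpow n hn, hq]
  have hzz : (z : ZMod n) = 1 - ph n x + el := by rw [← hz, hw]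
  rw [hel] at hzz
  rw [hek]
  push_cast at hzz ⊢
  linear_combination hzz - hkl0

theorem upper_word (n : ℕ) (hn : 4 ≤ n) :
    ∃ g, IsRefl n ((n / 2 : ℕ) + 1) g ∧
      HasWord n (two_le hn) g
        ((n + 1) / 2 * ((n + 1) / 2 - 1) - 1 + 2 + (n / 2 * (n / 2 - 1) - 1)) := by
  obtain ⟨m, hm | hm⟩ := Nat.even_or_odd' n
  · have h1 : n / 2 = m := by omega
    have h2 : (n + 1) / 2 = m := by omega
    rw [h1, h2]
    obtain ⟨g, hg, hw⟩ := two_spirals n hn m m (by omega) (by omega) (by omega)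
    refine ⟨g, ?_, hw⟩
    convert hg using 1
    ring
  · have h1 : n / 2 = m := by omega
    have h2 : (n + 1) / 2 = m + 1 := by omega
    rw [h1, h2]
    rcases Nat.even_or_odd m with ⟨t, ht⟩ | ⟨t, ht⟩
    · obtain ⟨g, hg, hw⟩ := two_spirals n hn m (m + 1) (by omega) (by omega) (by omega)
      refine ⟨g, ?_, ?_⟩
      · convert hg using 1
        omega
      · convert hw using 1
        omega
    · obtain ⟨g, hg, hw⟩ := two_spirals n hn (m + 1) m (by omega) (by omega) (by omega)
      refine ⟨g, ?_, hw⟩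
      convert hg using 1
      omega

theorem refl_shift (n : ℕ) (hn : 4 ≤ n) (c : ℤ) (g : Equiv.Perm (Fin n)) (hg : IsRefl n c g)
    (k : ℕ) : IsRefl n (c - k) ((finRotate n)⁻¹ ^ k * g) := by
  intro x
  have e : (finRotate n)⁻¹ ^ k = (finRotate n) ^ (-(k : ℤ)) := by
    rw [zpow_neg, zpow_natCast, inv_pow]
  rw [Equiv.Perm.mul_apply, e, ph_rot_zpow n hn, hg]
  push_cast; ring

theorem choose_formula (n : ℕ) (hn : 4 ≤ n) (i : ℕ) (hi1 : 2 ≤ i) (hi2 : i ≤ n / 2 + 2) :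
    ((n + 1) / 2 * ((n + 1) / 2 - 1) - 1) + (n / 2 * (n / 2 - 1) - 1) + (n / 2 + 4 - i) + (i - 2)
      = n.choose 2 := by
  rw [Nat.choose_two_right]
  obtain ⟨m, hm | hm⟩ := Nat.even_or_odd' n
  · have h1 : n / 2 = m := by omega
    have h2 : (n + 1) / 2 = m := by omega
    rw [h1, h2]
    obtain ⟨t, rfl⟩ : ∃ t, m = t + 2 := ⟨m - 2, by omega⟩
    have e1 : t + 2 - 1 = t + 1 := by omega
    have e2 : n - 1 = 2 * t + 3 := by omega
    have e3 : n * (n - 1) = 2 * ((t + 2) * (2 * t + 3)) := by rw [e2, hm]; ring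
    rw [e1, e3, Nat.mul_div_cancel_left _ (by norm_num)]
    have : 1 ≤ (t + 2) * (t + 1) := Nat.mul_pos (by omega) (by omega)
    have e4 : (t + 2) * (2 * t + 3) = 2 * ((t + 2) * (t + 1)) + t + 2 := by ring
    omega
  · have h1 : n / 2 = m := by omega
    have h2 : (n + 1) / 2 = m + 1 := by omega
    rw [h1, h2]
    obtain ⟨t, rfl⟩ : ∃ t, m = t + 2 := ⟨m - 2, by omega⟩
    have e1 : t + 2 - 1 = t + 1 := by omega
    have e1' : t + 2 + 1 - 1 = t + 2 := by omega
    have e2 : n - 1 = 2 * (t + 2) := by omega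
    have e3 : n * (n - 1) = 2 * ((2 * t + 5) * (t + 2)) := by rw [e2, hm]; ring
    rw [e1, e1', e3, Nat.mul_div_cancel_left _ (by norm_num)]
    have : 1 ≤ (t + 2) * (t + 1) := Nat.mul_pos (by omega) (by omega)
    have e4 : (2 * t + 5) * (t + 2) = 2 * ((t + 2) * (t + 1)) + 3 * t + 6 := by ring
    have e5 : (t + 2 + 1) * (t + 2) = (t + 2) * (t + 1) + 2 * t + 4 := by ring
    omega

end LRX

/-- For `n ≥ 4` and `2 ≤ i ≤ ⌊n/2⌋ + 2`, with `s = [n n-1 … 1]` and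
`r = (1 2 … n)`, `dist(s r^(n-i), 1) = ⌈n/2⌉(⌈n/2⌉-1) - 1 + ⌊n/2⌋(⌊n/2⌋-1) - 1 +
⌊n/2⌋ - i + 4` in the word metric with respect to `{(1 2), r, r⁻¹}`. -/
theorem stmt12 (n : ℕ) (hn : 4 ≤ n) (i : ℕ) (hi1 : 2 ≤ i) (hi2 : i ≤ n / 2 + 2) :
    IsMinWordLen n (by omega)
      (((Fin.revPerm : Equiv.Perm (Fin n)) * (finRotate n) ^ (n - i))⁻¹)
      (((n + 1) / 2 * ((n + 1) / 2 - 1) - 1) + (n / 2 * (n / 2 - 1) - 1) + (n / 2 + 4 - i)) := by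
  have ht := LRX.target_refl n hn i hi2
  constructor
  · obtain ⟨g, hg, hw⟩ := LRX.upper_word n hn
    have hs := LRX.refl_shift n hn _ g hg (n / 2 + 2 - i)
    have hw2 := ((LRX.hasWord_ri n (LRX.two_le hn)).pow (n / 2 + 2 - i)).mul hw
    have hc : (((n / 2 : ℕ) : ℤ) + 1 - ((n / 2 + 2 - i : ℕ) : ℤ)) = i - 1 := by omega
    rw [hc] at hs
    rw [hs.unique ht] at hw2
    change LRX.HasWord n _ _ _
    convert hw2 using 1
    omega
  · intro l hl hp
    have hs := LRX.refl_shift n hn _ _ ht (i - 2)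
    have hc : ((i : ℤ) - 1 - ((i - 2 : ℕ) : ℤ)) = 1 := by omega
    rw [hc] at hs
    have key := LRX.lower n hn _ hs (List.replicate (i - 2) (finRotate n)⁻¹ ++ l) (by
      intro x hx
      rcases List.mem_append.mp hx with h | h
      · rw [List.eq_of_mem_replicate h]
        simp [gens]
      · exact hl x h) (by rw [List.prod_append, List.prod_replicate, hp])
    rw [List.length_append, List.length_replicate] at key
    have := LRX.choose_formula n hn i hi1 hi2
    omega
end
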